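/- arXiv:1312.0034 — 2 statements merged into one kernel-verified Lean document; each statement's English description precedes it below -/
import Mathlib

section
/- Suppose γ is a real number with 0 < γ < 1 which is NOT of the form |π|^{1/(q^s+q^{s+1})} for any integer s ≥ 0, and let u_1 ∈ ℂ_p with |u_1| = γ. Let n be the smallest nonnegative integer such that γ^{q^n} < |π|^{1/(q+1)}. Then the fiber S = {u ∈ ℂ_p : |u| = γ and φ_0(u_1)·φ_1(u) = φ_1(u_1)·φ_0(u)} has exactly q^n elements, and there is an enumeration S = {u_{(1)}, u_{(2)}, …, u_{(q^n)}} with u_{(1)} = u_1 such that for all integers i, j with 1 ≤ j ≤ n and q^{j-1} < i ≤ q^j one has |u_{(i)} − u_1| = (|π|·γ^{-2q^{j-1}})^{1/(q^j − q^{j-1})}. -/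
open Filter

/-- The coefficients `m_k(u)` of the quasi-logarithm of the Gross-Hopkins
universal deformation: `m_0 = 1`, `m_1(u) = u/π`, and
`m_k(u) = (u/π)·m_{k-1}(u^q) + (1/π)·m_{k-2}(u^{q²})`. -/
noncomputable def ghm {C : Type*} [Field C] (π : C) (q : ℕ) : ℕ → C → C
  | 0, _ => 1
  | 1, u => u / π
  | (k+2), u => (u / π) * ghm π q (k+1) (u ^ q) + (1 / π) * ghm π q k (u ^ (q^2))

/-- First coordinate of the Gross-Hopkins period map:
`φ₀(u) = lim_k π^k · m_{2k}(u)`. -/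
noncomputable def ghphi0 {C : Type*} [NormedField C] (π : C) (q : ℕ) (u : C) : C :=
  limUnder atTop (fun k => π ^ k * ghm π q (2*k) u)

/-- Second coordinate of the Gross-Hopkins period map:
`φ₁(u) = lim_{k≥1} π^k · m_{2k-1}(u)`. -/
noncomputable def ghphi1 {C : Type*} [NormedField C] (π : C) (q : ℕ) (u : C) : C :=
  limUnder atTop (fun k => π ^ (k+1) * ghm π q (2*k+1) u)

/-!
Write `D(x, y) = φ₁(x) φ₀(y) - φ₀(x) φ₁(y)`. The recursion for `m_k` gives the expansion
`D(x, y) = ∑ (-π)^k m_k(x) m_k(y) (x^{q^k} - y^{q^k})`. On the circle of radius `γ` the norm of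
`m_k` is constant, because `γ` avoids the exceptional radii, and `|x^{q^k} - y^{q^k}|` is
`|x - y|^{q^k}` up to the largest term. Hence, for `|x - y|` strictly between two consecutive
critical distances, one single term, say that of index `j`, dominates, so that `|D(x, y)|` is a
constant times `|x - y|^{q^j}`: by the factorization of polynomials, `D(x, ·)` has exactly `q^j`
zeros within the `j`-th critical distance of `x`, and none strictly between two consecutive
critical distances.

The factorization is available only for the truncations of `D(x, ·)`. They too are determinants, so
the truncations of `D(x, ·)` and `D(z, ·)` are proportional when that of `D(x, z)` vanishes. Their
zeros are therefore simple and uniformly separated, which makes them converge to the zeros of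
`D(x, ·)`.
-/

namespace GrossHopkins

open Topology Finset

/-! ### Ultrametric estimates -/

section Ultrametric

variable {E : Type*} [SeminormedAddCommGroup E] [IsUltrametricDist E]

lemma norm_sub_le_max (x y : E) : ‖x - y‖ ≤ max ‖x‖ ‖y‖ := by
  simpa [sub_eq_add_neg] using IsUltrametricDist.norm_add_le_max x (-y)

lemma norm_eq_of_norm_sub_lt {x y : E} (h : ‖y - x‖ < ‖x‖) : ‖y‖ = ‖x‖ := by
  refine (IsUltrametricDist.norm_eq_of_add_norm_lt_max (y := -x) ?_).trans (norm_neg x)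
  rw [← sub_eq_add_neg, norm_neg]
  exact h.trans_le (le_max_right _ _)

lemma norm_eq_of_mem_ball {x y : E} {r : ℝ} (hx : ‖x‖ = r) (hy : y ∈ Metric.ball x r) : ‖y‖ = r :=
  (norm_eq_of_norm_sub_lt ((mem_ball_iff_norm.1 hy).trans_eq hx.symm)).trans hx

lemma norm_sub_eq_of_lt {u a ρ : E} (h : ‖ρ - a‖ < ‖u - a‖) : ‖u - ρ‖ = ‖u - a‖ :=
  norm_eq_of_norm_sub_lt (by rwa [sub_sub_sub_cancel_left, norm_sub_rev])

end Ultrametric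

/-! ### The Frobenius power map -/

section Frobenius

variable {C : Type*} [NormedField C]

/-- `x ↦ x ^ q` commutes with subtraction up to an error of relative size `ϖ`, as it does when `q`
is a power of a prime of norm at most `ϖ`. -/
def FrobeniusBound (C : Type*) [NormedField C] (ϖ : ℝ) (q : ℕ) : Prop :=
  ∀ x y : C, ‖(x ^ q - y ^ q) - (x - y) ^ q‖ ≤ ϖ * max ‖x‖ ‖y‖ ^ (q - 1) * ‖x - y‖

variable [IsUltrametricDist C]

lemma frobeniusBound_prime_pow {p : ℕ} (hp : p.Prime) (r : ℕ) {ϖ : ℝ} (hpϖ : ‖(p : C)‖ ≤ ϖ) :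
    FrobeniusBound C ϖ (p ^ r) := by
  intro x y
  have hϖ : 0 ≤ ϖ := (norm_nonneg _).trans hpϖ
  set M := max ‖x‖ ‖y‖
  obtain ⟨q, hq⟩ : ∃ q, p ^ r = q + 1 := Nat.exists_eq_succ_of_ne_zero (pow_ne_zero r hp.ne_zero)
  have hbinom : (x ^ p ^ r - y ^ p ^ r) - (x - y) ^ p ^ r =
      ∑ i ∈ range q, y ^ (i + 1) * (x - y) ^ (q - i) * (p ^ r).choose (i + 1) := by
    have h := add_pow y (x - y) (p ^ r)
    rw [add_sub_cancel] at h
    rw [h, hq, sum_range_succ, sum_range_succ']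
    simp
  have hchoose : ∀ i < q, ‖((p ^ r).choose (i + 1) : C)‖ ≤ ϖ := fun i hi => by
    obtain ⟨m, hm⟩ := hp.dvd_choose_pow (n := r) i.succ_ne_zero (by omega)
    rw [hm, Nat.cast_mul, norm_mul]
    exact (mul_le_of_le_one_right (norm_nonneg _)
      (IsUltrametricDist.norm_natCast_le_one C m)).trans hpϖ
  have hterm : ∀ i < q, ‖y ^ (i + 1) * (x - y) ^ (q - i)‖ ≤ M ^ q * ‖x - y‖ := fun i hi => by
    obtain ⟨j, hj⟩ : ∃ j, q = i + 1 + j := ⟨q - (i + 1), by omega⟩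
    rw [norm_mul, norm_pow, norm_pow, show q - i = j + 1 by omega, pow_succ _ j, ← mul_assoc, hj,
      pow_add M]
    gcongr
    · exact le_max_right _ _
    · exact norm_sub_le_max x y
  rw [hbinom, hq, Nat.add_sub_cancel]
  refine IsUltrametricDist.norm_sum_le_of_forall_le_of_nonneg (by positivity) fun i hi => ?_
  rw [← hq, norm_mul, mul_comm, mul_assoc]
  exact mul_le_mul (hchoose i (mem_range.1 hi)) (hterm i (mem_range.1 hi)) (norm_nonneg _) hϖ

variable {ϖ : ℝ} {q : ℕ}

lemma FrobeniusBound.norm_pow_sub_pow_le (hF : FrobeniusBound C ϖ q) (x y : C) :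
    ‖x ^ q - y ^ q‖ ≤ max (‖x - y‖ ^ q) (ϖ * max ‖x‖ ‖y‖ ^ (q - 1) * ‖x - y‖) := by
  have h := IsUltrametricDist.norm_add_le_max ((x - y) ^ q) ((x ^ q - y ^ q) - (x - y) ^ q)
  rw [add_sub_cancel, norm_pow] at h
  exact h.trans (max_le_max le_rfl (hF x y))

lemma FrobeniusBound.norm_pow_sub_pow_eq (hF : FrobeniusBound C ϖ q) {x y : C}
    (h : ϖ * max ‖x‖ ‖y‖ ^ (q - 1) * ‖x - y‖ < ‖x - y‖ ^ q) : ‖x ^ q - y ^ q‖ = ‖x - y‖ ^ q := by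
  rw [norm_eq_of_norm_sub_lt ((hF x y).trans_lt (h.trans_eq (norm_pow _ _).symm)), norm_pow]

end Frobenius

/-! ### Counting zeros through norms -/

section Counting

lemma exists_norm_between {C : Type*} [NormedField C] [IsAlgClosed C] {π : C} (h0 : 0 < ‖π‖)
    (h1 : ‖π‖ < 1) {r s : ℝ} (hr : 0 ≤ r) (hrs : r < s) : ∃ z : C, r < ‖z‖ ∧ ‖z‖ < s := by
  obtain ⟨t, hrt, hts⟩ := exists_between hrs
  have ht : 0 < t := hr.trans_lt hrt
  obtain ⟨b, hb⟩ := pow_unbounded_of_one_lt ‖π‖⁻¹ ((one_lt_div ht).2 hts)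
  have hb0 : b ≠ 0 := by
    rintro rfl
    exact (((one_lt_inv₀ h0).2 h1).trans hb).ne' (pow_zero _)
  rw [div_pow, lt_div_iff₀ (pow_pos ht b)] at hb
  obtain ⟨k, hk1, hk2⟩ := exists_mem_Ico_zpow (pow_pos ht b) ((one_lt_inv₀ h0).2 h1)
  obtain ⟨z, hz⟩ := IsAlgClosed.exists_pow_nat_eq (π⁻¹ ^ (k + 1)) (Nat.pos_of_ne_zero hb0)
  have hzn : ‖z‖ ^ b = ‖π‖⁻¹ ^ (k + 1) := by rw [← norm_pow, hz, norm_zpow, norm_inv]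
  refine ⟨z, hrt.trans (lt_of_pow_lt_pow_left₀ b (norm_nonneg z) (hk2.trans_eq hzn.symm)),
    lt_of_pow_lt_pow_left₀ b (ht.trans hts).le ?_⟩
  rw [hzn, zpow_add_one₀ (by positivity), mul_comm]
  exact (mul_le_mul_of_nonneg_left hk1 (by positivity)).trans_lt hb

lemma norm_eval_eq_prod_roots {C : Type*} [NormedField C] [IsAlgClosed C] (P : Polynomial C)
    (u : C) : ‖P.eval u‖ = ‖P.leadingCoeff‖ * (P.roots.map fun ρ => ‖u - ρ‖).prod := by
  have h := map_multiset_prod (normHom : C →*₀ ℝ) (P.roots.map fun ρ => u - ρ)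
  rw [Multiset.map_map] at h
  rw [(IsAlgClosed.splits P).eval_eq_prod_roots, norm_mul]
  exact congrArg (‖P.leadingCoeff‖ * ·) h

lemma eq_and_eq_of_mul_pow_eq {A B x y : ℝ} {k m : ℕ} (hA : 0 < A) (hx : 0 < x) (hxy : x < y)
    (hBx : B * x ^ k = A * x ^ m) (hBy : B * y ^ k = A * y ^ m) : k = m ∧ B = A := by
  have hy : 0 < y := hx.trans hxy
  have hB : B ≠ 0 := by
    rintro rfl
    exact (mul_pos hA (pow_pos hx m)).ne (by rw [← hBx, zero_mul])
  have hratio : (y / x) ^ k = (y / x) ^ m := by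
    rw [div_pow, div_pow, div_eq_div_iff (by positivity) (by positivity)]
    refine mul_left_cancel₀ (mul_ne_zero hA.ne' hB) ?_
    linear_combination A * x ^ m * hBy - A * y ^ m * hBx
  obtain rfl := pow_right_injective₀ (div_pos hy hx) ((one_lt_div hx).2 hxy).ne' hratio
  exact ⟨rfl, mul_right_cancel₀ (by positivity) hBx⟩

variable {E : Type*} [SeminormedAddCommGroup E] [IsUltrametricDist E]

lemma prod_norm_sub_eq_pow_card {R : Multiset E} {a u : E} (h : ∀ ρ ∈ R, ‖ρ - a‖ < ‖u - a‖) :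
    (R.map fun ρ => ‖u - ρ‖).prod = ‖u - a‖ ^ R.card := by
  rw [Multiset.map_congr rfl fun ρ hρ => norm_sub_eq_of_lt (h ρ hρ), Multiset.map_const',
    Multiset.prod_replicate]

lemma prod_norm_sub_eq_mul_of_gap {R : Multiset E} {a : E} {r s : ℝ}
    (hgap : ∀ ρ ∈ R, ‖ρ - a‖ < s → ‖ρ - a‖ ≤ r) {u : E} (hu : ‖u - a‖ < s) :
    (R.map fun ρ => ‖u - ρ‖).prod = ((R.filter fun ρ => ‖ρ - a‖ ≤ r).map fun ρ => ‖u - ρ‖).prod *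
      ((R.filter fun ρ => ¬ ‖ρ - a‖ ≤ r).map fun ρ => ‖ρ - a‖).prod := by
  nth_rw 1 [← Multiset.filter_add_not (fun ρ => ‖ρ - a‖ ≤ r) R]
  rw [Multiset.map_add, Multiset.prod_add]
  congr 2
  refine Multiset.map_congr rfl fun ρ hρ => ?_
  obtain ⟨hρR, hρr⟩ := Multiset.mem_filter.1 hρ
  rw [norm_sub_rev, norm_sub_eq_of_lt (hu.trans_le (not_lt.1 (mt (hgap ρ hρR) hρr)))]

theorem card_filter_of_prod_norm_sub_eq_mul_pow
    (hdense : ∀ r s : ℝ, 0 ≤ r → r < s → ∃ z : E, r < ‖z‖ ∧ ‖z‖ < s) {R : Multiset E} {a : E}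
    {r s c A : ℝ} {m : ℕ} (hr : 0 ≤ r) (hrs : r < s) (hA : 0 < A)
    (h : ∀ u, r < ‖u - a‖ → ‖u - a‖ < s →
      c * (R.map fun ρ => ‖u - ρ‖).prod = A * ‖u - a‖ ^ m) :
    (R.filter fun ρ => ‖ρ - a‖ ≤ r).card = m ∧ ∀ u, ‖u - a‖ < s →
      c * (R.map fun ρ => ‖u - ρ‖).prod =
        A * ((R.filter fun ρ => ‖ρ - a‖ ≤ r).map fun ρ => ‖u - ρ‖).prod := by
  have hgap : ∀ ρ ∈ R, ‖ρ - a‖ < s → ‖ρ - a‖ ≤ r := by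
    intro ρ hρ hs
    by_contra! hlt
    refine (mul_pos hA (pow_pos (hr.trans_lt hlt) m)).ne ?_
    rw [← h ρ hlt hs, Multiset.prod_eq_zero (Multiset.mem_map.2 ⟨ρ, hρ, by simp⟩), mul_zero]
  set I := R.filter fun ρ => ‖ρ - a‖ ≤ r
  set B := ((R.filter fun ρ => ¬ ‖ρ - a‖ ≤ r).map fun ρ => ‖ρ - a‖).prod
  have hmonomial : ∀ z : E, r < ‖z‖ → ‖z‖ < s → c * B * ‖z‖ ^ I.card = A * ‖z‖ ^ m := by
    intro z hz hzs
    have hin : ∀ ρ ∈ I, ‖ρ - a‖ < ‖z + a - a‖ := fun ρ hρ => by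
      simpa only [add_sub_cancel_right] using (Multiset.mem_filter.1 hρ).2.trans_lt hz
    have := h (z + a) (by simpa only [add_sub_cancel_right]) (by simpa only [add_sub_cancel_right])
    rw [prod_norm_sub_eq_mul_of_gap hgap (by simpa only [add_sub_cancel_right]),
      prod_norm_sub_eq_pow_card hin, add_sub_cancel_right] at this
    rw [← this]
    ring
  obtain ⟨z, hz1, hz2⟩ := hdense r s hr hrs
  obtain ⟨w, hw1, hw2⟩ := hdense ‖z‖ s (norm_nonneg z) hz2
  obtain ⟨hcard, hcB⟩ := eq_and_eq_of_mul_pow_eq hA (hr.trans_lt hz1) hw1 (hmonomial z hz1 hz2)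
    (hmonomial w (hz1.trans hw1) hw2)
  refine ⟨hcard, fun u hu => ?_⟩
  rw [prod_norm_sub_eq_mul_of_gap hgap hu, ← hcB]
  ring

lemma count_eq_of_prod_norm_sub_eq_mul_pow {F : Type*} [NormedAddCommGroup F] [IsUltrametricDist F]
    [DecidableEq F] (hdense : ∀ r s : ℝ, 0 ≤ r → r < s → ∃ z : F, r < ‖z‖ ∧ ‖z‖ < s)
    {R : Multiset F} {a : F} {s c A : ℝ} {m : ℕ} (hs : 0 < s) (hA : 0 < A)
    (h : ∀ u, u ≠ a → ‖u - a‖ < s → c * (R.map fun ρ => ‖u - ρ‖).prod = A * ‖u - a‖ ^ m) :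
    R.count a = m := by
  rw [← (card_filter_of_prod_norm_sub_eq_mul_pow hdense le_rfl hs hA fun u hu hus =>
    h u (sub_ne_zero.1 (norm_pos_iff.1 hu)) hus).1, Multiset.count_eq_card_filter_eq]
  congr 1
  exact Multiset.filter_congr fun ρ _ => by rw [norm_le_zero_iff, sub_eq_zero, eq_comm]

end Counting

/-! ### Limits of functions with separated zeros -/

section Hurwitz

variable {X : Type*} [MetricSpace X] {S : ℕ → Finset X} {m : ℕ} {c η : ℝ}

lemma exists_tracking_of_separated (hη : 0 < η) (hcard : ∀ N, #(S N) = m)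
    (hsep : ∀ N, ∀ ρ ∈ S N, ∀ σ ∈ S N, dist ρ σ < η → ρ = σ)
    (hnear : ∀ r > 0, ∃ N₀, ∀ N ≥ N₀, ∀ M ≥ N, ∀ ρ ∈ S N, ∃ σ ∈ S M, dist ρ σ < r) :
    ∃ (N₁ : ℕ) (s : ℕ → X → X), (∀ k, Set.BijOn (s k) (S N₁) (S (N₁ + k))) ∧
      ∀ ρ ∈ S N₁, CauchySeq fun k => s k ρ := by
  obtain ⟨N₁, hN₁⟩ := hnear (η / 3) (by positivity)
  have htrack : ∀ k ρ, ∃ σ, ρ ∈ S N₁ → σ ∈ S (N₁ + k) ∧ dist ρ σ < η / 3 := fun k ρ => by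
    by_cases hρ : ρ ∈ S N₁
    · obtain ⟨σ, hσ⟩ := hN₁ N₁ le_rfl (N₁ + k) (N₁.le_add_right k) ρ hρ
      exact ⟨σ, fun _ => hσ⟩
    · exact ⟨ρ, fun h => absurd h hρ⟩
  choose s hs using htrack
  refine ⟨N₁, s, fun k => ?_, fun ρ hρ => Metric.cauchySeq_iff'.2 fun r hr => ?_⟩
  · have hmaps : Set.MapsTo (s k) (S N₁) (S (N₁ + k)) := fun ρ hρ => (hs k ρ hρ).1
    have hinj : Set.InjOn (s k) (S N₁) := fun ρ hρ σ hσ he => hsep N₁ ρ hρ σ hσ <| by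
      have h₁ := (hs k ρ hρ).2
      have h₂ := (hs k σ hσ).2
      rw [he] at h₁
      linarith [dist_triangle_right ρ σ (s k σ)]
    exact ⟨hmaps, hinj, surjOn_of_injOn_of_card_le (s k) hmaps hinj (by rw [hcard, hcard])⟩
  · obtain ⟨N₀, hN₀⟩ := hnear (min r (η / 3)) (by positivity)
    refine ⟨N₀, fun k hk => ?_⟩
    obtain ⟨σ, hσ, hdist⟩ := hN₀ (N₁ + N₀) (by omega) (N₁ + k) (by omega) _ (hs N₀ ρ hρ).1
    obtain ⟨hr, h₁⟩ := lt_min_iff.1 hdist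
    have hσk : s k ρ = σ := hsep _ _ (hs k ρ hρ).1 σ hσ <| by
      linarith [dist_triangle4 (s k ρ) ρ (s N₀ ρ) σ, dist_comm (s k ρ) ρ, (hs k ρ hρ).2,
        (hs N₀ ρ hρ).2]
    rwa [hσk, dist_comm]

variable {E : Type*} [SeminormedAddCommGroup E] {f : ℕ → X → E} {g : X → E} {U : Set X}

lemma exists_near_zero_of_tendstoUniformlyOn (hc : 0 < c) (hcard : ∀ N, #(S N) = m)
    (hSU : ∀ N, ∀ ρ ∈ S N, ρ ∈ U) (hfg : TendstoUniformlyOn f g atTop U)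
    (hf : ∀ N, ∀ u ∈ U, ‖f N u‖ = c * ∏ ρ ∈ S N, dist u ρ) {r : ℝ} (hr : 0 < r) :
    ∃ N₀, ∀ N ≥ N₀, ∀ M ≥ N, ∀ ρ ∈ S N, ∃ σ ∈ S M, dist ρ σ < r := by
  obtain ⟨N₀, hN₀⟩ := Metric.uniformCauchySeqOn_iff.1 hfg.uniformCauchySeqOn (c * r ^ m)
    (by positivity)
  refine ⟨N₀, fun N hN M hM ρ hρ => ?_⟩
  have hzero : ‖f N ρ‖ = 0 := by rw [hf N ρ (hSU N ρ hρ), prod_eq_zero hρ (dist_self ρ), mul_zero]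
  have hsmall : ‖f M ρ‖ < c * r ^ m := by
    have hdist := hN₀ N hN M (hN.trans hM) ρ (hSU N ρ hρ)
    rw [dist_eq_norm] at hdist
    linarith [norm_sub_norm_le (f M ρ) (f N ρ), norm_sub_rev (f M ρ) (f N ρ)]
  by_contra! hfar
  rw [hf M ρ (hSU N ρ hρ), ← hcard M, ← prod_const] at hsmall
  exact (mul_le_mul_of_nonneg_left (prod_le_prod (fun _ _ => hr.le) hfar) hc.le).not_gt hsmall

theorem exists_finset_norm_eq_of_tendstoUniformlyOn [CompleteSpace X] (hU : IsClosed U)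
    (hc : 0 < c) (hη : 0 < η) (hcard : ∀ N, #(S N) = m) (hSU : ∀ N, ∀ ρ ∈ S N, ρ ∈ U)
    (hsep : ∀ N, ∀ ρ ∈ S N, ∀ σ ∈ S N, dist ρ σ < η → ρ = σ)
    (hfg : TendstoUniformlyOn f g atTop U)
    (hf : ∀ N, ∀ u ∈ U, ‖f N u‖ = c * ∏ ρ ∈ S N, dist u ρ) :
    ∃ T : Finset X, #T = m ∧ (∀ ρ ∈ T, ρ ∈ U) ∧
      ∀ u ∈ U, ‖g u‖ = c * ∏ ρ ∈ T, dist u ρ := by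
  classical
  obtain ⟨N₁, s, hbij, hcauchy⟩ := exists_tracking_of_separated hη hcard hsep fun r hr =>
    exists_near_zero_of_tendstoUniformlyOn hc hcard hSU hfg hf hr
  have hlim : ∀ ρ, ∃ t, ρ ∈ S N₁ → Tendsto (fun k => s k ρ) atTop (𝓝 t) := fun ρ => by
    by_cases hρ : ρ ∈ S N₁
    · obtain ⟨t, ht⟩ := cauchySeq_tendsto_of_complete (hcauchy ρ hρ)
      exact ⟨t, fun _ => ht⟩
    · exact ⟨ρ, fun h => absurd h hρ⟩
  choose t ht using hlim
  have hinj : Set.InjOn t (S N₁) := fun ρ hρ σ hσ he => by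
    have hdist := (ht ρ hρ).dist (ht σ hσ)
    rw [he, dist_self] at hdist
    obtain ⟨k, hk⟩ := (hdist.eventually_lt_const hη).exists
    exact (hbij k).injOn hρ hσ
      (hsep _ _ ((hbij k).mapsTo hρ) _ ((hbij k).mapsTo hσ) hk)
  refine ⟨(S N₁).image t, by rw [card_image_of_injOn hinj, hcard], fun τ hτ => ?_,
    fun u hu => ?_⟩
  · obtain ⟨ρ, hρ, rfl⟩ := mem_image.1 hτ
    exact hU.mem_of_tendsto (ht ρ hρ) (.of_forall fun k => hSU _ _ ((hbij k).mapsTo hρ))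
  · have hg : Tendsto (fun k => ‖f (N₁ + k) u‖) atTop (𝓝 ‖g u‖) :=
      ((hfg.tendsto_at hu).comp (tendsto_add_atTop_nat N₁)).norm.congr fun k => by
        rw [Function.comp_apply, add_comm]
    have hprod : Tendsto (fun k => ‖f (N₁ + k) u‖) atTop (𝓝 (c * ∏ ρ ∈ S N₁, dist u (t ρ))) := by
      refine ((tendsto_finsetProd (S N₁) fun ρ hρ =>
        tendsto_const_nhds.dist (ht ρ hρ)).const_mul c).congr fun k => ?_
      rw [hf _ u hu, prod_nbij (s k) (hbij k).mapsTo (hbij k).injOn (hbij k).surjOn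
        fun _ _ => rfl]
    rw [prod_image hinj]
    exact tendsto_nhds_unique hg hprod

end Hurwitz

/-! ### Enumerating a finite set in increasing order -/

section Enumeration

variable {α β : Type*} [LinearOrder β]

lemma exists_bijOn_monotoneOn [Nonempty α] (f : α → β) (T : Finset α) :
    ∃ v : ℕ → α, Set.BijOn v (Set.Icc 1 #T) T ∧ MonotoneOn (f ∘ v) (Set.Icc 1 #T) := by
  classical
  induction T using Finset.induction_on_max_value f with
  | empty => exact ⟨fun _ => Classical.arbitrary α, by simp, fun _ hi => absurd hi (by simp)⟩
  | insert a s has hmax ih =>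
    obtain ⟨v, hv, hmono⟩ := ih
    set w := Function.update v (#s + 1) a
    have hw : Set.EqOn v w (Set.Icc 1 #s) := fun i hi =>
      (Function.update_of_ne (Nat.lt_succ_of_le hi.2).ne _ _).symm
    have hwa : w (#s + 1) = a := Function.update_self _ _ _
    rw [card_insert_of_notMem has, coe_insert, ← Set.insert_Icc_right_eq_Icc_add_one (by omega)]
    refine ⟨w, ?_, fun i hi k hk hik => ?_⟩
    · rw [← hwa]
      exact (hv.congr hw).insert (by rwa [hwa])
    · rcases hk with rfl | hk
      · rw [Function.comp_apply, Function.comp_apply, hwa]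
        rcases hi with rfl | hi
        · rw [hwa]
        · rw [← hw hi]
          exact hmax _ (hv.mapsTo hi)
      · have hi' : i ∈ Set.Icc 1 #s := ⟨by rcases hi with rfl | hi <;> grind, hik.trans hk.2⟩
        simpa only [Function.comp_apply, ← hw hi', ← hw hk] using hmono hi' hk hik

lemma le_iff_le_card_filter_of_monotoneOn {f : α → β} {T : Finset α} {v : ℕ → α}
    (hv : Set.BijOn v (Set.Icc 1 #T) T) (hmono : MonotoneOn (f ∘ v) (Set.Icc 1 #T)) {i : ℕ}
    (hi : i ∈ Set.Icc 1 #T) (c : β) : f (v i) ≤ c ↔ i ≤ #{t ∈ T | f t ≤ c} := by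
  classical
  constructor
  · intro hle
    have hsub : (Icc 1 i).image v ⊆ {t ∈ T | f t ≤ c} := image_subset_iff.2 fun k hk => by
      obtain ⟨hk1, hki⟩ := mem_Icc.1 hk
      have hkT : k ∈ Set.Icc 1 #T := ⟨hk1, hki.trans hi.2⟩
      exact mem_filter.2 ⟨hv.mapsTo hkT, (hmono hkT hi hki).trans hle⟩
    have hinj : Set.InjOn v (Icc 1 i : Finset ℕ) :=
      hv.injOn.mono (by rw [coe_Icc]; exact Set.Icc_subset_Icc_right hi.2)
    simpa [card_image_of_injOn hinj] using card_le_card hsub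
  · contrapose!
    intro hlt
    have hsub : {t ∈ T | f t ≤ c} ⊆ (Ico 1 i).image v := fun t ht => by
      obtain ⟨htT, htc⟩ := mem_filter.1 ht
      obtain ⟨k, hk, rfl⟩ := hv.surjOn htT
      exact mem_image_of_mem v (mem_Ico.2 ⟨hk.1, hmono.reflect_lt hk hi (htc.trans_lt hlt)⟩)
    have hcard := (card_le_card hsub).trans card_image_le
    rw [Nat.card_Ico] at hcard
    have := hi.1
    omega

end Enumeration

/-! ### The norms of the coefficients -/

section Weight

/-- The norm of `ghm π q k u` for `‖π‖ = ϖ` and `‖u‖ = γ`, unless the two summands of the recursion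
have equal norms; in that case it is an upper bound. -/
noncomputable def mu (ϖ γ : ℝ) (q : ℕ) : ℕ → ℝ
  | 0 => 1
  | 1 => γ / ϖ
  | (k + 2) => max (γ ^ q ^ (k + 1) * mu ϖ γ q (k + 1)) (mu ϖ γ q k) / ϖ

/-- The norm of the coefficient `(-π) ^ k * ghm π q k x * ghm π q k y` of `x ^ q ^ k - y ^ q ^ k` in
the expansion of the period determinant of two points `x` and `y` of norm `γ`. -/
noncomputable def weight (ϖ γ : ℝ) (q k : ℕ) : ℝ := ϖ ^ k * mu ϖ γ q k ^ 2

variable {ϖ γ : ℝ} {q : ℕ}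

lemma mu_pos (hϖ : 0 < ϖ) (hγ : 0 < γ) : ∀ k, 0 < mu ϖ γ q k
  | 0 => one_pos
  | 1 => div_pos hγ hϖ
  | (k + 2) => div_pos (lt_max_of_lt_right (mu_pos hϖ hγ k)) hϖ

lemma mu_nonneg (hϖ : 0 ≤ ϖ) (hγ : 0 ≤ γ) : ∀ k, 0 ≤ mu ϖ γ q k
  | 0 => zero_le_one
  | 1 => div_nonneg hγ hϖ
  | (k + 2) => div_nonneg (le_max_of_le_right (mu_nonneg hϖ hγ k)) hϖ

lemma weight_pos (hϖ : 0 < ϖ) (hγ : 0 < γ) (k : ℕ) : 0 < weight ϖ γ q k :=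
  mul_pos (pow_pos hϖ k) (pow_pos (mu_pos hϖ hγ k) 2)

lemma weight_zero : weight ϖ γ q 0 = 1 := by
  rw [weight, mu, pow_zero, one_pow, mul_one]

lemma mul_mu_one (hϖ : ϖ ≠ 0) : ϖ * mu ϖ γ q 1 = γ ^ q ^ 0 * mu ϖ γ q 0 := by
  rw [pow_zero, pow_one, mu, mul_one, mu, mul_div_cancel₀ γ hϖ]

lemma mul_mu_add_two (hϖ : ϖ ≠ 0) (k : ℕ) :
    ϖ * mu ϖ γ q (k + 2) = max (γ ^ q ^ (k + 1) * mu ϖ γ q (k + 1)) (mu ϖ γ q k) :=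
  mul_div_cancel₀ _ hϖ

lemma pow_mul_mu_le (hϖ : ϖ ≠ 0) (k : ℕ) : γ ^ q ^ k * mu ϖ γ q k ≤ ϖ * mu ϖ γ q (k + 1) := by
  cases k with
  | zero => exact (mul_mu_one hϖ).ge
  | succ k => exact (le_max_left _ _).trans_eq (mul_mu_add_two hϖ k).symm

lemma mu_sq_mul_le (hϖ : 0 < ϖ) (hγ0 : 0 < γ) (hγ1 : γ ≤ 1) (hq : 2 ≤ q) (k : ℕ) :
    mu ϖ γ q k ^ 2 * (γ ^ q ^ (k + 1)) ^ (q - 1) ≤ (ϖ * mu ϖ γ q (k + 1)) ^ 2 := by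
  have hexp : q ^ k * 2 ≤ q ^ (k + 1) * (q - 1) := by
    rw [pow_succ, mul_assoc]
    exact Nat.mul_le_mul_left _ (hq.trans (Nat.le_mul_of_pos_right q (by omega)))
  calc mu ϖ γ q k ^ 2 * (γ ^ q ^ (k + 1)) ^ (q - 1) ≤ mu ϖ γ q k ^ 2 * (γ ^ q ^ k) ^ 2 := by
        rw [← pow_mul, ← pow_mul]
        exact mul_le_mul_of_nonneg_left (pow_le_pow_of_le_one hγ0.le hγ1 hexp) (sq_nonneg _)
    _ = (γ ^ q ^ k * mu ϖ γ q k) ^ 2 := by ring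
    _ ≤ (ϖ * mu ϖ γ q (k + 1)) ^ 2 := by
        have := mu_pos (q := q) hϖ hγ0 k
        exact pow_le_pow_left₀ (by positivity) (pow_mul_mu_le hϖ.ne' k) 2

lemma mul_weight_succ (k : ℕ) :
    ϖ * weight ϖ γ q (k + 1) = ϖ ^ k * (ϖ * mu ϖ γ q (k + 1)) ^ 2 := by
  rw [weight]
  ring

lemma mul_weight_succ_mul_lt (hϖ0 : 0 < ϖ) (hϖ1 : ϖ < 1) (hγ0 : 0 < γ) (hγ1 : γ < 1) (hq : 2 ≤ q)
    (k : ℕ) : ϖ * weight ϖ γ q (k + 1) * (γ ^ q ^ k) ^ (q - 1) < weight ϖ γ q k := by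
  rw [mul_weight_succ, mul_assoc]
  refine mul_lt_mul_of_pos_left ?_ (pow_pos hϖ0 k)
  have hμ := mu_pos (q := q) hϖ0 hγ0 k
  have hlt : ∀ i : ℕ, i ≠ 0 → γ ^ i < 1 := fun i hi => pow_lt_one₀ hγ0.le hγ1 hi
  have hpow : (γ ^ q ^ k * mu ϖ γ q k) ^ 2 * (γ ^ q ^ k) ^ (q - 1) < mu ϖ γ q k ^ 2 := by
    rw [mul_pow, mul_right_comm, ← pow_add, ← pow_mul]
    exact mul_lt_of_lt_one_left (by positivity) (hlt _ (by positivity))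
  cases k with
  | zero => rwa [mul_mu_one hϖ0.ne']
  | succ k =>
    rw [mul_mu_add_two hϖ0.ne']
    rcases max_choice (γ ^ q ^ (k + 1) * mu ϖ γ q (k + 1)) (mu ϖ γ q k) with h | h <;> rw [h]
    · exact hpow
    · refine (mu_sq_mul_le hϖ0 hγ0 hγ1.le hq k).trans_lt ?_
      exact pow_lt_pow_left₀ (mul_lt_of_lt_one_left hμ hϖ1) (by positivity) two_ne_zero

lemma strictAnti_pow_mul_weight_mul_pow (hϖ0 : 0 < ϖ) (hϖ1 : ϖ < 1) (hγ0 : 0 < γ) (hγ1 : γ < 1)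
    (hq : 2 ≤ q) : StrictAnti fun k => ϖ ^ k * weight ϖ γ q k * γ ^ q ^ k := by
  refine strictAnti_nat_of_succ_lt fun k => ?_
  calc ϖ ^ (k + 1) * weight ϖ γ q (k + 1) * γ ^ q ^ (k + 1)
      = ϖ ^ k * (ϖ * weight ϖ γ q (k + 1) * (γ ^ q ^ k) ^ (q - 1)) * γ ^ q ^ k := by
        rw [pow_succ q, pow_mul, ← pow_sub_one_mul (by omega) (γ ^ q ^ k)]
        ring
    _ < ϖ ^ k * weight ϖ γ q k * γ ^ q ^ k := by
        gcongr
        exact mul_weight_succ_mul_lt hϖ0 hϖ1 hγ0 hγ1 hq k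

lemma tendsto_pow_pow_atTop_nhds_zero (hγ0 : 0 ≤ γ) (hγ1 : γ < 1) (hq : 1 < q) :
    Tendsto (fun k => γ ^ q ^ k) atTop (𝓝 0) :=
  (tendsto_pow_atTop_nhds_zero_of_lt_one hγ0 hγ1).comp (tendsto_pow_atTop_atTop_of_one_lt hq)

lemma bddAbove_range_of_eventually_le_max {β : Type*} [LinearOrder β] {b : ℕ → β}
    (h : ∀ᶠ k in atTop, b (k + 2) ≤ max (b (k + 1)) (b k)) : BddAbove (Set.range b) := by
  obtain ⟨N, hN⟩ := eventually_atTop.1 h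
  have : Nonempty β := ⟨b 0⟩
  obtain ⟨B, hB⟩ := ((range (N + 2)).image b).bddAbove
  refine ⟨B, Set.forall_mem_range.2 fun k => ?_⟩
  induction k using Nat.strong_induction_on with
  | _ k ih =>
    rcases lt_or_ge k (N + 2) with hk | hk
    · exact hB (mem_coe.2 (mem_image_of_mem b (mem_range.2 hk)))
    · obtain ⟨l, rfl⟩ := Nat.exists_eq_add_of_le' (show 2 ≤ k by omega)
      exact (hN l (by omega)).trans (max_le (ih _ (by omega)) (ih _ (by omega)))

lemma bddAbove_pow_mul_mu (hϖ0 : 0 < ϖ) (hϖ1 : ϖ ≤ 1) (hγ0 : 0 ≤ γ) (hγ1 : γ < 1) (hq : 1 < q) :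
    BddAbove (Set.range fun k => ϖ ^ (k / 2) * mu ϖ γ q k) := by
  refine bddAbove_range_of_eventually_le_max ?_
  filter_upwards [(tendsto_add_atTop_iff_nat 1).2 (tendsto_pow_pow_atTop_nhds_zero hγ0 hγ1 hq)
    |>.eventually_le_const hϖ0] with k hk
  rw [Nat.add_div_right k two_pos, pow_succ, mul_assoc, mul_mu_add_two hϖ0.ne',
    mul_max_of_nonneg _ _ (by positivity), ← mul_assoc]
  refine max_le_max (mul_le_mul_of_nonneg_right ?_ (mu_nonneg hϖ0.le hγ0 _)) le_rfl
  calc ϖ ^ (k / 2) * γ ^ q ^ (k + 1) ≤ ϖ ^ (k / 2) * ϖ := by gcongr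
    _ = ϖ ^ (k / 2 + 1) := (pow_succ ϖ _).symm
    _ ≤ ϖ ^ ((k + 1) / 2) := pow_le_pow_of_le_one hϖ0.le hϖ1 (by omega)

lemma tendsto_weight_mul_pow (hϖ0 : 0 < ϖ) (hϖ1 : ϖ ≤ 1) (hγ0 : 0 ≤ γ) (hγ1 : γ < 1) (hq : 1 < q) :
    Tendsto (fun k => weight ϖ γ q k * γ ^ q ^ k) atTop (𝓝 0) := by
  obtain ⟨B, hB⟩ := bddAbove_pow_mul_mu hϖ0 hϖ1 hγ0 hγ1 hq
  refine squeeze_zero (fun k => ?_) (fun k => mul_le_mul_of_nonneg_right ?_ (by positivity))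
    (by simpa using (tendsto_pow_pow_atTop_nhds_zero hγ0 hγ1 hq).const_mul (B ^ 2))
  · rw [weight]
    positivity
  · have hμ := mu_nonneg (q := q) hϖ0.le hγ0 k
    calc weight ϖ γ q k ≤ ϖ ^ (k / 2 * 2) * mu ϖ γ q k ^ 2 :=
          mul_le_mul_of_nonneg_right (pow_le_pow_of_le_one hϖ0.le hϖ1 (by omega)) (sq_nonneg _)
      _ = (ϖ ^ (k / 2) * mu ϖ γ q k) ^ 2 := by ring
      _ ≤ B ^ 2 := pow_le_pow_left₀ (by positivity) (hB (Set.mem_range_self k)) 2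

end Weight

/-! ### Regular radii -/

/-- The radius `γ` is not one of the critical values `ϖ ^ (1 / (q ^ s + q ^ (s + 1)))`, and it lies
between the ones of indices `n - 1` and `n`. -/
structure RegularRadius (ϖ γ : ℝ) (q n : ℕ) : Prop where
  pi_pos : 0 < ϖ
  pi_lt_one : ϖ < 1
  pos : 0 < γ
  lt_one : γ < 1
  two_le : 2 ≤ q
  lt_pow : ∀ k < n, ϖ < γ ^ (q ^ k + q ^ (k + 1))
  pow_lt : γ ^ (q ^ n + q ^ (n + 1)) < ϖ

namespace RegularRadius

variable {ϖ γ : ℝ} {q n : ℕ}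

lemma mul_mu_succ_of_le (h : RegularRadius ϖ γ q n) {k : ℕ} (hk : k ≤ n) :
    ϖ * mu ϖ γ q (k + 1) = γ ^ q ^ k * mu ϖ γ q k := by
  induction k with
  | zero => exact mul_mu_one h.pi_pos.ne'
  | succ k ih =>
    rw [mul_mu_add_two h.pi_pos.ne', max_eq_left]
    refine le_of_mul_le_mul_left ?_ h.pi_pos
    rw [mul_left_comm, ih (by omega), ← mul_assoc, ← pow_add, add_comm]
    exact mul_le_mul_of_nonneg_right (h.lt_pow k hk).le (mu_pos h.pi_pos h.pos k).le

lemma mu_lt_of_lt (h : RegularRadius ϖ γ q n) {k : ℕ} (hk : k < n) :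
    mu ϖ γ q k < γ ^ q ^ (k + 1) * mu ϖ γ q (k + 1) := by
  refine lt_of_mul_lt_mul_left ?_ h.pi_pos.le
  rw [mul_left_comm, h.mul_mu_succ_of_le hk.le, ← mul_assoc, ← pow_add, add_comm]
  exact mul_lt_mul_of_pos_right (h.lt_pow k hk) (mu_pos h.pi_pos h.pos k)

lemma pow_mul_mu_succ_lt_of_ge (h : RegularRadius ϖ γ q n) {k : ℕ} (hk : n ≤ k) :
    γ ^ q ^ (k + 1) * mu ϖ γ q (k + 1) < mu ϖ γ q k := by
  induction k, hk using Nat.le_induction with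
  | base =>
    refine lt_of_mul_lt_mul_left ?_ h.pi_pos.le
    rw [mul_left_comm, h.mul_mu_succ_of_le le_rfl, ← mul_assoc, ← pow_add, add_comm]
    exact mul_lt_mul_of_pos_right h.pow_lt (mu_pos h.pi_pos h.pos n)
  | succ k _ ih =>
    have hγ : γ ^ q ^ (k + 2) < γ ^ q ^ k :=
      pow_lt_pow_right_of_lt_one₀ h.pos h.lt_one (Nat.pow_lt_pow_right h.two_le (by omega))
    refine lt_of_mul_lt_mul_left ?_ h.pi_pos.le
    rw [mul_left_comm, mul_mu_add_two h.pi_pos.ne', max_eq_right ih.le]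
    exact (mul_lt_mul_of_pos_right hγ (mu_pos h.pi_pos h.pos k)).trans_le
      (pow_mul_mu_le h.pi_pos.ne' k)

lemma pow_mul_mu_succ_ne (h : RegularRadius ϖ γ q n) (k : ℕ) :
    γ ^ q ^ (k + 1) * mu ϖ γ q (k + 1) ≠ mu ϖ γ q k := by
  rcases lt_or_ge k n with hk | hk
  · exact (h.mu_lt_of_lt hk).ne'
  · exact (h.pow_mul_mu_succ_lt_of_ge hk).ne

lemma mul_weight_succ_of_le (h : RegularRadius ϖ γ q n) {k : ℕ} (hk : k ≤ n) :
    ϖ * weight ϖ γ q (k + 1) = weight ϖ γ q k * (γ ^ q ^ k) ^ 2 := by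
  rw [mul_weight_succ, h.mul_mu_succ_of_le hk, weight]
  ring

lemma weight_succ_mul_lt_of_ge (h : RegularRadius ϖ γ q n) {k : ℕ} (hk : n ≤ k) :
    weight ϖ γ q (k + 1) * (γ ^ q ^ k) ^ (q - 1) < weight ϖ γ q k := by
  refine lt_of_mul_lt_mul_left ?_ h.pi_pos.le
  rw [← mul_assoc]
  rcases hk.eq_or_lt with rfl | hk
  · have hexp : q ^ n * (2 + (q - 1)) = q ^ n + q ^ (n + 1) := by
      rw [show 2 + (q - 1) = 1 + q by have := h.two_le; omega]
      ring
    rw [h.mul_weight_succ_of_le le_rfl, mul_assoc, ← pow_add, ← pow_mul, hexp, mul_comm ϖ]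
    exact mul_lt_mul_of_pos_left h.pow_lt (weight_pos h.pi_pos h.pos n)
  · obtain ⟨k, rfl⟩ : ∃ l, k = l + 1 := ⟨k - 1, by omega⟩
    rw [mul_weight_succ, mul_mu_add_two h.pi_pos.ne',
      max_eq_right (h.pow_mul_mu_succ_lt_of_ge (by omega)).le, mul_assoc, weight, mul_left_comm ϖ]
    refine mul_lt_mul_of_pos_left ?_ (pow_pos h.pi_pos _)
    refine (mu_sq_mul_le h.pi_pos h.pos h.lt_one.le h.two_le k).trans_lt ?_
    rw [mul_pow]
    exact mul_lt_mul_of_pos_right (pow_lt_self_of_lt_one₀ h.pi_pos h.pi_lt_one one_lt_two)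
      (pow_pos (mu_pos h.pi_pos h.pos _) 2)

end RegularRadius

/-! ### Critical distances -/

section CritRadius

/-- The distances at which two consecutive terms of the period determinant of two points of norm `γ`
have equal norms, which are the possible distances in a fiber; they are indexed from `1`, and the
index `0` stands for equal points. -/
noncomputable def critRadius (ϖ γ : ℝ) (q : ℕ) : ℕ → ℝ
  | 0 => 0
  | (j + 1) => (ϖ * γ ^ (-(2 : ℝ) * (q : ℝ) ^ j)) ^ ((1 : ℝ) / ((q : ℝ) ^ (j + 1) - (q : ℝ) ^ j))

variable {ϖ γ : ℝ} {q : ℕ}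

lemma critRadius_succ_pos (hϖ : 0 < ϖ) (hγ : 0 < γ) (j : ℕ) : 0 < critRadius ϖ γ q (j + 1) := by
  rw [critRadius]
  positivity

lemma critRadius_nonneg (hϖ : 0 < ϖ) (hγ : 0 < γ) : ∀ j, 0 ≤ critRadius ϖ γ q j
  | 0 => le_rfl
  | (j + 1) => (critRadius_succ_pos hϖ hγ j).le

lemma critRadius_succ_pow (hϖ : 0 < ϖ) (hγ : 0 < γ) (hq : 2 ≤ q) (j : ℕ) :
    (critRadius ϖ γ q (j + 1) ^ (q - 1) * γ ^ 2) ^ q ^ j = ϖ := by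
  have hexp : (q : ℝ) ^ (j + 1) - (q : ℝ) ^ j = ((q - 1) * q ^ j : ℕ) := by
    push_cast [Nat.cast_sub (show 1 ≤ q by omega)]
    ring
  have hγpow : γ ^ (-(2 : ℝ) * (q : ℝ) ^ j) = (γ ^ (2 * q ^ j))⁻¹ := by
    rw [neg_mul, Real.rpow_neg hγ.le, ← Real.rpow_natCast γ (2 * q ^ j)]
    push_cast
    rfl
  have hne : (q - 1) * q ^ j ≠ 0 := mul_ne_zero (by omega) (by positivity)
  rw [mul_pow, ← pow_mul, ← pow_mul, critRadius, hexp, one_div,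
    Real.rpow_inv_natCast_pow (by positivity) hne, hγpow, inv_mul_cancel_right₀ (by positivity)]

lemma strictMonoOn_pow_mul_sq_pow (hγ : 0 < γ) (hq : 2 ≤ q) (j : ℕ) :
    StrictMonoOn (fun δ : ℝ => (δ ^ (q - 1) * γ ^ 2) ^ q ^ j) (Set.Ici 0) := by
  intro δ hδ δ' _ hlt
  have hδ : 0 ≤ δ := hδ
  exact pow_lt_pow_left₀ (mul_lt_mul_of_pos_right (pow_lt_pow_left₀ hlt hδ (by omega))
    (by positivity)) (by positivity) (by positivity)

lemma lt_critRadius_succ_iff (hϖ : 0 < ϖ) (hγ : 0 < γ) (hq : 2 ≤ q) {δ : ℝ} (hδ : 0 ≤ δ) (j : ℕ) :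
    δ < critRadius ϖ γ q (j + 1) ↔ (δ ^ (q - 1) * γ ^ 2) ^ q ^ j < ϖ := by
  conv_rhs => rw [← critRadius_succ_pow hϖ hγ hq j]
  exact ((strictMonoOn_pow_mul_sq_pow hγ hq j).lt_iff_lt hδ (critRadius_nonneg hϖ hγ _)).symm

lemma critRadius_succ_lt_iff (hϖ : 0 < ϖ) (hγ : 0 < γ) (hq : 2 ≤ q) {δ : ℝ} (hδ : 0 ≤ δ) (j : ℕ) :
    critRadius ϖ γ q (j + 1) < δ ↔ ϖ < (δ ^ (q - 1) * γ ^ 2) ^ q ^ j := by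
  conv_rhs => lhs; rw [← critRadius_succ_pow hϖ hγ hq j]
  exact ((strictMonoOn_pow_mul_sq_pow hγ hq j).lt_iff_lt (critRadius_nonneg hϖ hγ _) hδ).symm

lemma strictMono_critRadius (hϖ0 : 0 < ϖ) (hϖ1 : ϖ < 1) (hγ : 0 < γ) (hq : 2 ≤ q) :
    StrictMono (critRadius ϖ γ q) := by
  refine strictMono_nat_of_lt_succ fun j => ?_
  cases j with
  | zero => exact critRadius_succ_pos hϖ0 hγ 0
  | succ j =>
    rw [lt_critRadius_succ_iff hϖ0 hγ hq (critRadius_nonneg hϖ0 hγ _), pow_succ q j, pow_mul,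
      critRadius_succ_pow hϖ0 hγ hq]
    exact pow_lt_self_of_lt_one₀ hϖ0 hϖ1 hq

end CritRadius

/-- The outer radius of the annulus on which the term of index `j` of the period determinant
dominates; the inner one is `critRadius ϖ γ q j`. -/
noncomputable def outerRadius (ϖ γ : ℝ) (q n j : ℕ) : ℝ :=
  if j < n then critRadius ϖ γ q (j + 1) else γ

/-- The sequence `weight ϖ γ q k * δ ^ q ^ k`, consisting of the expected norms of the terms of the
period determinant of two points at distance `δ`, increases up to the index `j` and decreases
afterwards. -/
def Dominates (ϖ γ : ℝ) (q : ℕ) (δ : ℝ) (j : ℕ) : Prop :=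
  StrictMonoOn (fun k => weight ϖ γ q k * δ ^ q ^ k) (Set.Iic j) ∧
    StrictAntiOn (fun k => weight ϖ γ q k * δ ^ q ^ k) (Set.Ici j)

lemma Dominates.lt {ϖ γ δ : ℝ} {q j : ℕ} (hj : Dominates ϖ γ q δ j) {k : ℕ} (hk : k ≠ j) :
    weight ϖ γ q k * δ ^ q ^ k < weight ϖ γ q j * δ ^ q ^ j := by
  rcases lt_or_gt_of_ne hk with hk | hk
  · exact hj.1 (Set.mem_Iic.2 hk.le) Set.self_mem_Iic hk
  · exact hj.2 Set.self_mem_Ici (Set.mem_Ici.2 hk.le) hk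

lemma Dominates.le {ϖ γ δ : ℝ} {q j : ℕ} (hj : Dominates ϖ γ q δ j) (k : ℕ) :
    weight ϖ γ q k * δ ^ q ^ k ≤ weight ϖ γ q j * δ ^ q ^ j := by
  rcases eq_or_ne k j with rfl | hk
  · exact le_rfl
  · exact (hj.lt hk).le

namespace RegularRadius

variable {ϖ γ δ : ℝ} {q n j : ℕ}

lemma critRadius_lt (h : RegularRadius ϖ γ q n) (hj : j ≤ n) : critRadius ϖ γ q j < γ := by
  cases j with
  | zero => exact h.pos
  | succ j =>
    have hexp : (q - 1 + 2) * q ^ j = q ^ j + q ^ (j + 1) := by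
      rw [show q - 1 + 2 = 1 + q by have := h.two_le; omega]
      ring
    rw [critRadius_succ_lt_iff h.pi_pos h.pos h.two_le h.pos.le, ← pow_add, ← pow_mul, hexp]
    exact h.lt_pow j hj

lemma critRadius_lt_outerRadius (h : RegularRadius ϖ γ q n) (hj : j ≤ n) :
    critRadius ϖ γ q j < outerRadius ϖ γ q n j := by
  rw [outerRadius]
  split_ifs
  · exact strictMono_critRadius h.pi_pos h.pi_lt_one h.pos h.two_le j.lt_succ_self
  · exact h.critRadius_lt hj

lemma outerRadius_le (h : RegularRadius ϖ γ q n) (j : ℕ) : outerRadius ϖ γ q n j ≤ γ := by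
  rw [outerRadius]
  split_ifs with hj
  · exact (h.critRadius_lt hj).le
  · exact le_rfl

lemma mul_weight_succ_mul_pow (h : RegularRadius ϖ γ q n) {k : ℕ} (hk : k ≤ n) (δ : ℝ) :
    ϖ * (weight ϖ γ q (k + 1) * δ ^ q ^ (k + 1)) =
      weight ϖ γ q k * δ ^ q ^ k * (δ ^ (q - 1) * γ ^ 2) ^ q ^ k := by
  rw [← mul_assoc, h.mul_weight_succ_of_le hk, pow_succ q, pow_mul,
    ← pow_sub_one_mul (by have := h.two_le; omega) (δ ^ q ^ k)]
  ring

lemma weight_mul_pow_lt_succ (h : RegularRadius ϖ γ q n) {k : ℕ} (hk : k ≤ n) (hδ : 0 < δ)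
    (hlt : critRadius ϖ γ q (k + 1) < δ) :
    weight ϖ γ q k * δ ^ q ^ k < weight ϖ γ q (k + 1) * δ ^ q ^ (k + 1) := by
  refine lt_of_mul_lt_mul_left ?_ h.pi_pos.le
  rw [h.mul_weight_succ_mul_pow hk, mul_comm]
  exact mul_lt_mul_of_pos_left ((critRadius_succ_lt_iff h.pi_pos h.pos h.two_le hδ.le k).1 hlt)
    (mul_pos (weight_pos h.pi_pos h.pos k) (pow_pos hδ _))

lemma weight_succ_mul_pow_lt (h : RegularRadius ϖ γ q n) {k : ℕ} (hδ : 0 < δ) (hδγ : δ ≤ γ)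
    (hlt : k < n → δ < critRadius ϖ γ q (k + 1)) :
    weight ϖ γ q (k + 1) * δ ^ q ^ (k + 1) < weight ϖ γ q k * δ ^ q ^ k := by
  have hw := weight_pos (q := q) h.pi_pos h.pos
  rcases lt_or_ge k n with hk | hk
  · refine lt_of_mul_lt_mul_left ?_ h.pi_pos.le
    rw [h.mul_weight_succ_mul_pow hk.le, mul_comm ϖ]
    exact mul_lt_mul_of_pos_left
      ((lt_critRadius_succ_iff h.pi_pos h.pos h.two_le hδ.le k).1 (hlt hk))
      (mul_pos (hw k) (pow_pos hδ _))
  · rw [pow_succ q, pow_mul, ← pow_sub_one_mul (by have := h.two_le; omega) (δ ^ q ^ k),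
      ← mul_assoc]
    refine mul_lt_mul_of_pos_right (lt_of_le_of_lt ?_ (h.weight_succ_mul_lt_of_ge hk))
      (pow_pos hδ _)
    exact mul_le_mul_of_nonneg_left
      (pow_le_pow_left₀ (by positivity) (pow_le_pow_left₀ hδ.le hδγ _) _) (hw _).le

theorem dominates (h : RegularRadius ϖ γ q n) (hj : j ≤ n) (hcrit : critRadius ϖ γ q j < δ)
    (hδγ : δ ≤ γ) (hlt : j < n → δ < critRadius ϖ γ q (j + 1)) : Dominates ϖ γ q δ j := by
  have hmono := (strictMono_critRadius h.pi_pos h.pi_lt_one h.pos h.two_le).monotone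
  have hδ : 0 < δ := (critRadius_nonneg h.pi_pos h.pos j).trans_lt hcrit
  refine ⟨strictMonoOn_Iic_of_lt_succ fun k hk => ?_,
    strictAntiOn_of_add_one_lt Set.ordConnected_Ici fun k _ hk _ => ?_⟩
  · exact h.weight_mul_pow_lt_succ (by omega) hδ ((hmono hk).trans_lt hcrit)
  · exact h.weight_succ_mul_pow_lt hδ hδγ fun hkn =>
      (hlt (lt_of_le_of_lt hk hkn)).trans_le (hmono (Nat.succ_le_succ hk))

lemma dominates_of_lt_outerRadius (h : RegularRadius ϖ γ q n) (hj : j ≤ n)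
    (hcrit : critRadius ϖ γ q j < δ) (hlt : δ < outerRadius ϖ γ q n j) :
    Dominates ϖ γ q δ j :=
  h.dominates hj hcrit (hlt.le.trans (h.outerRadius_le j)) fun hjn => by
    rwa [outerRadius, if_pos hjn] at hlt

end RegularRadius

section Dominance

variable {C : Type*} [NormedField C] [IsUltrametricDist C] {ϖ γ : ℝ} {q : ℕ} {x y : C}

lemma FrobeniusBound.exists_pow_mul_norm_pow_sub_pow_le (hF : FrobeniusBound C ϖ q) (hϖ0 : 0 ≤ ϖ)
    (hϖ1 : ϖ ≤ 1) (hq : q ≠ 0) (hx : ‖x‖ = γ) (hy : ‖y‖ = γ) (k : ℕ) :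
    ∃ i l, i + l = k ∧
      γ ^ q ^ i * ‖x ^ q ^ k - y ^ q ^ k‖ ≤ ϖ ^ l * γ ^ q ^ k * ‖x - y‖ ^ q ^ i := by
  have hγ : 0 ≤ γ := hx ▸ norm_nonneg x
  induction k with
  | zero => exact ⟨0, 0, rfl, by simp⟩
  | succ k ih =>
    obtain ⟨i, l, rfl, hle⟩ := ih
    have hstep := hF.norm_pow_sub_pow_le (x ^ q ^ (i + l)) (y ^ q ^ (i + l))
    rw [← pow_mul, ← pow_mul, ← pow_succ, norm_pow, norm_pow, hx, hy, max_self] at hstep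
    rcases le_max_iff.1 hstep with h | h
    · refine ⟨i + 1, l, by omega, ?_⟩
      calc γ ^ q ^ (i + 1) * ‖x ^ q ^ (i + l + 1) - y ^ q ^ (i + l + 1)‖
          ≤ (γ ^ q ^ i * ‖x ^ q ^ (i + l) - y ^ q ^ (i + l)‖) ^ q := by
            rw [mul_pow, ← pow_mul, ← pow_succ]
            gcongr
        _ ≤ (ϖ ^ l * γ ^ q ^ (i + l) * ‖x - y‖ ^ q ^ i) ^ q := by gcongr
        _ = (ϖ ^ l) ^ q * γ ^ q ^ (i + l + 1) * ‖x - y‖ ^ q ^ (i + 1) := by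
            rw [mul_pow, mul_pow, ← pow_mul γ, ← pow_mul ‖x - y‖, ← pow_succ, ← pow_succ]
        _ ≤ ϖ ^ l * γ ^ q ^ (i + l + 1) * ‖x - y‖ ^ q ^ (i + 1) := by
            gcongr
            exact pow_le_of_le_one (by positivity) (pow_le_one₀ hϖ0 hϖ1) hq
    · refine ⟨i, l + 1, rfl, ?_⟩
      calc γ ^ q ^ i * ‖x ^ q ^ (i + l + 1) - y ^ q ^ (i + l + 1)‖
          ≤ ϖ * (γ ^ q ^ (i + l)) ^ (q - 1) *
              (γ ^ q ^ i * ‖x ^ q ^ (i + l) - y ^ q ^ (i + l)‖) := by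
            rw [mul_left_comm]
            gcongr
        _ ≤ ϖ * (γ ^ q ^ (i + l)) ^ (q - 1) * (ϖ ^ l * γ ^ q ^ (i + l) * ‖x - y‖ ^ q ^ i) := by
            gcongr
        _ = ϖ ^ (l + 1) * γ ^ q ^ (i + (l + 1)) * ‖x - y‖ ^ q ^ i := by
            rw [← add_assoc, pow_succ q (i + l), pow_mul γ,
              ← pow_sub_one_mul hq (γ ^ q ^ (i + l))]
            ring

lemma FrobeniusBound.weight_mul_norm_lt (hF : FrobeniusBound C ϖ q) (hϖ0 : 0 < ϖ) (hϖ1 : ϖ < 1)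
    (hγ0 : 0 < γ) (hγ1 : γ < 1) (hq : 2 ≤ q) (hx : ‖x‖ = γ) (hy : ‖y‖ = γ) (hxy : x ≠ y)
    {j : ℕ} (hj : Dominates ϖ γ q ‖x - y‖ j) {k : ℕ} (hk : k ≠ j) :
    weight ϖ γ q k * ‖x ^ q ^ k - y ^ q ^ k‖ < weight ϖ γ q j * ‖x - y‖ ^ q ^ j := by
  have hδ : 0 < ‖x - y‖ := norm_pos_iff.2 (sub_ne_zero.2 hxy)
  obtain ⟨i, l, rfl, hle⟩ :=
    hF.exists_pow_mul_norm_pow_sub_pow_le hϖ0.le hϖ1.le (by omega) hx hy k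
  have hw := (weight_pos (q := q) hϖ0 hγ0 (i + l)).le
  rcases eq_or_ne l 0 with rfl | hl
  · rw [pow_zero, one_mul] at hle
    exact (mul_le_mul_of_nonneg_left (le_of_mul_le_mul_left hle (by positivity)) hw).trans_lt
      (hj.lt hk)
  · refine lt_of_lt_of_le ?_ (hj.le i)
    have hanti : ϖ ^ (i + l) * weight ϖ γ q (i + l) * γ ^ q ^ (i + l) <
        ϖ ^ i * weight ϖ γ q i * γ ^ q ^ i :=
      strictAnti_pow_mul_weight_mul_pow hϖ0 hϖ1 hγ0 hγ1 hq (by omega)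
    refine lt_of_mul_lt_mul_left (a := ϖ ^ i * γ ^ q ^ i) ?_ (by positivity)
    calc ϖ ^ i * γ ^ q ^ i * (weight ϖ γ q (i + l) * ‖x ^ q ^ (i + l) - y ^ q ^ (i + l)‖)
        = ϖ ^ i * weight ϖ γ q (i + l) *
            (γ ^ q ^ i * ‖x ^ q ^ (i + l) - y ^ q ^ (i + l)‖) := by ring
      _ ≤ ϖ ^ i * weight ϖ γ q (i + l) * (ϖ ^ l * γ ^ q ^ (i + l) * ‖x - y‖ ^ q ^ i) := by
          gcongr
      _ = ϖ ^ (i + l) * weight ϖ γ q (i + l) * γ ^ q ^ (i + l) * ‖x - y‖ ^ q ^ i := by ring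
      _ < ϖ ^ i * weight ϖ γ q i * γ ^ q ^ i * ‖x - y‖ ^ q ^ i := by gcongr
      _ = ϖ ^ i * γ ^ q ^ i * (weight ϖ γ q i * ‖x - y‖ ^ q ^ i) := by ring

lemma FrobeniusBound.norm_pow_sub_pow_of_dominates (hF : FrobeniusBound C ϖ q) (hϖ0 : 0 < ϖ)
    (hϖ1 : ϖ < 1) (hγ0 : 0 < γ) (hγ1 : γ < 1) (hq : 2 ≤ q) (hx : ‖x‖ = γ) (hy : ‖y‖ = γ)
    (hxy : x ≠ y) {j : ℕ} (hj : Dominates ϖ γ q ‖x - y‖ j) {k : ℕ} (hk : k ≤ j) :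
    ‖x ^ q ^ k - y ^ q ^ k‖ = ‖x - y‖ ^ q ^ k := by
  have hδ : 0 < ‖x - y‖ := norm_pos_iff.2 (sub_ne_zero.2 hxy)
  induction k with
  | zero => rw [pow_zero, pow_one, pow_one, pow_one]
  | succ k ih =>
    have ek := ih (by omega)
    have hratio : ϖ * (γ ^ q ^ k) ^ (q - 1) < (‖x - y‖ ^ q ^ k) ^ (q - 1) := by
      refine lt_of_mul_lt_mul_left (a := weight ϖ γ q (k + 1)) ?_ (weight_pos hϖ0 hγ0 _).le
      have hlt : weight ϖ γ q k * ‖x - y‖ ^ q ^ k <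
          weight ϖ γ q (k + 1) * ‖x - y‖ ^ q ^ (k + 1) :=
        hj.1 (Set.mem_Iic.2 (by omega)) (Set.mem_Iic.2 hk) k.lt_succ_self
      rw [pow_succ q, pow_mul, ← pow_sub_one_mul (by omega) (‖x - y‖ ^ q ^ k), ← mul_assoc] at hlt
      calc weight ϖ γ q (k + 1) * (ϖ * (γ ^ q ^ k) ^ (q - 1))
          = ϖ * weight ϖ γ q (k + 1) * (γ ^ q ^ k) ^ (q - 1) := by ring
        _ < weight ϖ γ q k := mul_weight_succ_mul_lt hϖ0 hϖ1 hγ0 hγ1 hq k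
        _ < weight ϖ γ q (k + 1) * (‖x - y‖ ^ q ^ k) ^ (q - 1) :=
          lt_of_mul_lt_mul_right hlt (by positivity)
    rw [pow_succ q, pow_mul, pow_mul, pow_mul, ← ek]
    refine hF.norm_pow_sub_pow_eq ?_
    rw [norm_pow, norm_pow, hx, hy, max_self, ek, ← pow_sub_one_mul (by omega) (‖x - y‖ ^ q ^ k)]
    exact mul_lt_mul_of_pos_right hratio (by positivity)

end Dominance

/-! ### The period determinant -/

section Coefficients

variable {C : Type*}

lemma ghm_add_two [Field C] (π : C) (q k : ℕ) (u : C) :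
    ghm π q (k + 2) u = (u ^ q ^ (k + 1) * ghm π q (k + 1) u + ghm π q k u) / π := by
  induction k using Nat.strong_induction_on generalizing u with
  | _ k ih =>
    match k with
    | 0 => simp only [ghm]; ring
    | 1 => simp only [ghm]; ring
    | (k + 2) =>
      have h3 : ghm π q (k + 3) u =
        (u / π) * ghm π q (k + 2) (u ^ q) + (1 / π) * ghm π q (k + 1) (u ^ q ^ 2) := rfl
      have h2 : ghm π q (k + 2) u =
        (u / π) * ghm π q (k + 1) (u ^ q) + (1 / π) * ghm π q k (u ^ q ^ 2) := rfl
      rw [ghm, ih (k + 1) (by omega) (u ^ q), ih k (by omega) (u ^ q ^ 2), h3, h2]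
      ring

lemma exists_polynomial_eval_eq_ghm [Field C] (π : C) (q : ℕ) :
    ∀ k, ∃ P : Polynomial C, ∀ u, P.eval u = ghm π q k u
  | 0 => ⟨1, fun u => by rw [Polynomial.eval_one, ghm]⟩
  | 1 => ⟨Polynomial.C π⁻¹ * Polynomial.X, fun u => by
      rw [Polynomial.eval_C_mul, Polynomial.eval_X, ghm, div_eq_inv_mul]⟩
  | (k + 2) => by
    obtain ⟨P, hP⟩ := exists_polynomial_eval_eq_ghm π q (k + 1)
    obtain ⟨Q, hQ⟩ := exists_polynomial_eval_eq_ghm π q k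
    refine ⟨Polynomial.C π⁻¹ * (Polynomial.X ^ q ^ (k + 1) * P + Q), fun u => ?_⟩
    rw [Polynomial.eval_C_mul, Polynomial.eval_add, Polynomial.eval_mul, Polynomial.eval_pow,
      Polynomial.eval_X, hP, hQ, ghm_add_two, div_eq_inv_mul]

variable [NormedField C] [IsUltrametricDist C] {π : C} {q : ℕ}

lemma norm_ghm_le (π : C) (q : ℕ) (u : C) : ∀ k, ‖ghm π q k u‖ ≤ mu ‖π‖ ‖u‖ q k
  | 0 => by rw [ghm, mu, norm_one]
  | 1 => by rw [ghm, mu, norm_div]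
  | (k + 2) => by
    rw [ghm_add_two, norm_div, mu]
    refine div_le_div_of_nonneg_right ((IsUltrametricDist.norm_add_le_max _ _).trans
      (max_le_max ?_ (norm_ghm_le π q u k))) (norm_nonneg π)
    rw [norm_mul, norm_pow]
    exact mul_le_mul_of_nonneg_left (norm_ghm_le π q u (k + 1)) (by positivity)

lemma RegularRadius.norm_ghm {n : ℕ} {u : C} (h : RegularRadius ‖π‖ ‖u‖ q n) :
    ∀ k, ‖ghm π q k u‖ = mu ‖π‖ ‖u‖ q k
  | 0 => by rw [ghm, mu, norm_one]
  | 1 => by rw [ghm, mu, norm_div]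
  | (k + 2) => by
    have hnorm : ‖u ^ q ^ (k + 1) * ghm π q (k + 1) u‖ =
        ‖u‖ ^ q ^ (k + 1) * mu ‖π‖ ‖u‖ q (k + 1) := by
      rw [norm_mul, norm_pow, h.norm_ghm (k + 1)]
    have hne : ‖u ^ q ^ (k + 1) * ghm π q (k + 1) u‖ ≠ ‖ghm π q k u‖ := by
      rw [hnorm, h.norm_ghm k]
      exact h.pow_mul_mu_succ_ne k
    rw [ghm_add_two, norm_div, IsUltrametricDist.norm_add_eq_max_of_norm_ne_norm hne, hnorm,
      h.norm_ghm k, mu]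

lemma tendsto_pow_mul_ghm_sub (hπ0 : 0 < ‖π‖) (hπ1 : ‖π‖ ≤ 1) (hq : 1 < q) {u : C} (hu : ‖u‖ < 1) :
    Tendsto (fun k => π ^ ((k + 1) / 2 + 1) * ghm π q (k + 2) u - π ^ ((k + 1) / 2) * ghm π q k u)
      atTop (𝓝 0) := by
  obtain ⟨B, hB⟩ := bddAbove_pow_mul_mu hπ0 hπ1 (norm_nonneg u) hu hq
  have hlim := (tendsto_add_atTop_iff_nat 1).2
    (tendsto_pow_pow_atTop_nhds_zero (norm_nonneg u) hu hq)
  refine squeeze_zero_norm (fun k => ?_) (by simpa only [mul_zero] using hlim.const_mul B)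
  have hdiff : π ^ ((k + 1) / 2 + 1) * ghm π q (k + 2) u - π ^ ((k + 1) / 2) * ghm π q k u =
      π ^ ((k + 1) / 2) * ghm π q (k + 1) u * u ^ q ^ (k + 1) := by
    have := norm_pos_iff.1 hπ0
    rw [ghm_add_two]
    field_simp
    ring
  rw [hdiff, norm_mul, norm_mul, norm_pow, norm_pow]
  exact mul_le_mul_of_nonneg_right ((mul_le_mul_of_nonneg_left (norm_ghm_le π q u (k + 1))
    (by positivity)).trans (hB (Set.mem_range_self (k + 1)))) (by positivity)

lemma tendsto_ghphi0 [CompleteSpace C] (hπ0 : 0 < ‖π‖) (hπ1 : ‖π‖ ≤ 1) (hq : 1 < q) {u : C}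
    (hu : ‖u‖ < 1) : Tendsto (fun k => π ^ k * ghm π q (2 * k) u) atTop (𝓝 (ghphi0 π q u)) := by
  refine CauchySeq.tendsto_limUnder (NonarchimedeanAddGroup.cauchySeq_of_tendsto_sub_nhds_zero ?_)
  have hmono : StrictMono fun k => 2 * k := fun i k hik => by dsimp only; omega
  refine ((tendsto_pow_mul_ghm_sub hπ0 hπ1 hq hu).comp hmono.tendsto_atTop).congr fun k => ?_
  rw [Function.comp_apply, show (2 * k + 1) / 2 = k by omega, mul_add_one]

lemma tendsto_ghphi1 [CompleteSpace C] (hπ0 : 0 < ‖π‖) (hπ1 : ‖π‖ ≤ 1) (hq : 1 < q) {u : C}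
    (hu : ‖u‖ < 1) :
    Tendsto (fun k => π ^ (k + 1) * ghm π q (2 * k + 1) u) atTop (𝓝 (ghphi1 π q u)) := by
  refine CauchySeq.tendsto_limUnder (NonarchimedeanAddGroup.cauchySeq_of_tendsto_sub_nhds_zero ?_)
  have hmono : StrictMono fun k => 2 * k + 1 := fun i k hik => by dsimp only; omega
  refine ((tendsto_pow_mul_ghm_sub hπ0 hπ1 hq hu).comp hmono.tendsto_atTop).congr fun k => ?_
  rw [Function.comp_apply, show (2 * k + 1 + 1) / 2 = k + 1 by omega, mul_add_one, add_right_comm]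

end Coefficients

section Determinant

variable {C : Type*}

/-- The truncation of `periodDet π q x y` at level `N`: up to the factor `(-π) ^ N * π`, the
determinant of the truncations of the period map at `x` and `y`. -/
noncomputable def truncDet [Field C] (π : C) (q N : ℕ) (x y : C) : C :=
  (-π) ^ N * π * (ghm π q (N + 1) x * ghm π q N y - ghm π q N x * ghm π q (N + 1) y)

/-- The determinant whose vanishing expresses that `x` and `y` have the same image under the
period map. -/
noncomputable def periodDet [NormedField C] (π : C) (q : ℕ) (x y : C) : C :=
  ghphi1 π q x * ghphi0 π q y - ghphi0 π q x * ghphi1 π q y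

/-- The summand of index `k` in the expansion of the period determinant. -/
noncomputable def detTerm [Field C] (π : C) (q k : ℕ) (x y : C) : C :=
  (-π) ^ k * ghm π q k x * ghm π q k y * (x ^ q ^ k - y ^ q ^ k)

lemma truncDet_eq_sum [Field C] {π : C} (hπ : π ≠ 0) (q : ℕ) (x y : C) (N : ℕ) :
    truncDet π q N x y = ∑ k ∈ range (N + 1), detTerm π q k x y := by
  induction N with
  | zero =>
    rw [zero_add, sum_range_one, truncDet, detTerm]
    simp only [ghm, pow_zero, pow_one]
    field_simp
  | succ N ih =>
    rw [sum_range_succ, ← ih, truncDet, truncDet, detTerm, ghm_add_two, ghm_add_two]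
    field_simp
    ring

lemma exists_polynomial_eval_eq_truncDet [Field C] (π : C) (q N : ℕ) (x : C) :
    ∃ P : Polynomial C, ∀ y, P.eval y = truncDet π q N x y := by
  choose P hP using exists_polynomial_eval_eq_ghm π q
  refine ⟨Polynomial.C ((-π) ^ N * π) * (Polynomial.C (ghm π q (N + 1) x) * P N -
    Polynomial.C (ghm π q N x) * P (N + 1)), fun y => ?_⟩
  rw [Polynomial.eval_C_mul, Polynomial.eval_sub, Polynomial.eval_C_mul, Polynomial.eval_C_mul,
    hP, hP, truncDet]

lemma exists_norm_truncDet_eq_prod [NormedField C] [IsAlgClosed C] (π : C) (q N : ℕ) (x : C) :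
    ∃ (c : ℝ) (R : Multiset C), ∀ u,
      ‖truncDet π q N x u‖ = c * (R.map fun ρ => ‖u - ρ‖).prod := by
  obtain ⟨P, hP⟩ := exists_polynomial_eval_eq_truncDet π q N x
  exact ⟨_, P.roots, fun u => hP u ▸ norm_eval_eq_prod_roots P u⟩

lemma periodDet_eq_zero_iff [NormedField C] {π : C} {q : ℕ} {x y : C} :
    periodDet π q x y = 0 ↔ ghphi0 π q x * ghphi1 π q y = ghphi1 π q x * ghphi0 π q y := by
  rw [periodDet, sub_eq_zero, eq_comm]

variable [NormedField C] [IsUltrametricDist C] {π x y z : C} {γ : ℝ} {q n N : ℕ}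

lemma tendstoUniformlyOn_sum_range {α E : Type*} [SeminormedAddCommGroup E] [IsUltrametricDist E]
    {F : ℕ → α → E} {g : α → E} {U : Set α} {w : ℕ → ℝ} {φ : ℕ → ℕ} (hw : Tendsto w atTop (𝓝 0))
    (hF : ∀ k, ∀ u ∈ U, ‖F k u‖ ≤ w k) (hφ : Tendsto φ atTop atTop)
    (hlim : ∀ u ∈ U, Tendsto (fun k => ∑ i ∈ range (φ k), F i u) atTop (𝓝 (g u))) :
    TendstoUniformlyOn (fun N u => ∑ i ∈ range N, F i u) g atTop U := by
  refine Metric.tendstoUniformlyOn_iff.2 fun ε hε => ?_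
  obtain ⟨N₀, hN₀⟩ := eventually_atTop.1 (hw.eventually_le_const (half_pos hε))
  filter_upwards [eventually_ge_atTop N₀] with N hN u hu
  refine lt_of_le_of_lt ?_ (half_lt_self hε)
  refine le_of_tendsto ((hlim u hu).dist tendsto_const_nhds) ?_
  filter_upwards [hφ.eventually_ge_atTop N] with k hk
  rw [dist_eq_norm, ← sum_Ico_eq_sub _ hk]
  exact IsUltrametricDist.norm_sum_le_of_forall_le_of_nonneg (half_pos hε).le fun i hi =>
    (hF i u hu).trans (hN₀ i (hN.trans (mem_Ico.1 hi).1))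

lemma norm_detTerm_le (hx : ‖x‖ = γ) (hy : ‖y‖ = γ) (k : ℕ) :
    ‖detTerm π q k x y‖ ≤ weight ‖π‖ γ q k * γ ^ q ^ k := by
  have hpow : ‖x ^ q ^ k - y ^ q ^ k‖ ≤ γ ^ q ^ k := by
    simpa only [norm_pow, hx, hy, max_self] using norm_sub_le_max (x ^ q ^ k) (y ^ q ^ k)
  have hmx := norm_ghm_le π q x k
  have hmy := norm_ghm_le π q y k
  rw [hx] at hmx
  rw [hy] at hmy
  rw [detTerm, norm_mul, norm_mul, norm_mul, norm_pow, norm_neg, weight, sq, ← mul_assoc]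
  have hμ : 0 ≤ mu ‖π‖ γ q k := (norm_nonneg _).trans hmx
  gcongr

lemma RegularRadius.norm_detTerm (h : RegularRadius ‖π‖ γ q n) (hx : ‖x‖ = γ) (hy : ‖y‖ = γ)
    (k : ℕ) : ‖detTerm π q k x y‖ = weight ‖π‖ γ q k * ‖x ^ q ^ k - y ^ q ^ k‖ := by
  subst hx
  rw [detTerm, norm_mul, norm_mul, norm_mul, norm_pow, norm_neg, h.norm_ghm, ← hy,
    RegularRadius.norm_ghm (hy ▸ h), weight]
  ring

theorem RegularRadius.norm_truncDet (h : RegularRadius ‖π‖ γ q n) (hF : FrobeniusBound C ‖π‖ q)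
    (hx : ‖x‖ = γ) (hy : ‖y‖ = γ) (hxy : x ≠ y) {j : ℕ} (hj : Dominates ‖π‖ γ q ‖x - y‖ j)
    (hjN : j ≤ N) : ‖truncDet π q N x y‖ = weight ‖π‖ γ q j * ‖x - y‖ ^ q ^ j := by
  have hterm : ‖detTerm π q j x y‖ = weight ‖π‖ γ q j * ‖x - y‖ ^ q ^ j := by
    rw [h.norm_detTerm hx hy, hF.norm_pow_sub_pow_of_dominates h.pi_pos h.pi_lt_one h.pos h.lt_one
      h.two_le hx hy hxy hj le_rfl]
  rw [truncDet_eq_sum (norm_pos_iff.1 h.pi_pos), ← hterm]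
  refine IsUltrametricDist.isNonarchimedean_norm.apply_sum_eq_of_lt (fun a => (norm_neg a).symm)
    (mem_range.2 (by omega)) fun k _ hk => ?_
  rw [hterm, h.norm_detTerm hx hy]
  exact hF.weight_mul_norm_lt h.pi_pos h.pi_lt_one h.pos h.lt_one h.two_le hx hy hxy hj hk

lemma RegularRadius.norm_truncDet_eq_of_truncDet_eq_zero (h : RegularRadius ‖π‖ γ q n)
    (hx : ‖x‖ = γ) (hz : ‖z‖ = γ) (hxz : truncDet π q N x z = 0) (y : C) :
    ‖truncDet π q N x y‖ = ‖truncDet π q N z y‖ := by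
  have hπ : π ≠ 0 := norm_pos_iff.1 h.pi_pos
  have hdet : ghm π q (N + 1) x * ghm π q N z - ghm π q N x * ghm π q (N + 1) z = 0 :=
    (mul_eq_zero.1 hxz).resolve_left (mul_ne_zero (pow_ne_zero _ (neg_ne_zero.2 hπ)) hπ)
  have hprop : ghm π q N z * truncDet π q N x y = ghm π q N x * truncDet π q N z y := by
    rw [truncDet, truncDet]
    linear_combination (-π) ^ N * π * ghm π q N y * hdet
  have hnorm := congrArg norm hprop
  subst hx
  rw [norm_mul, norm_mul, h.norm_ghm, RegularRadius.norm_ghm (hz ▸ h), hz] at hnorm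
  exact mul_left_cancel₀ (mu_pos h.pi_pos h.pos N).ne' hnorm

variable [CompleteSpace C]

lemma tendsto_truncDet_two_mul (hπ0 : 0 < ‖π‖) (hπ1 : ‖π‖ ≤ 1) (hq : 1 < q) (hx : ‖x‖ < 1)
    (hy : ‖y‖ < 1) : Tendsto (fun k => truncDet π q (2 * k) x y) atTop (𝓝 (periodDet π q x y)) := by
  have h0 {u : C} (hu : ‖u‖ < 1) := tendsto_ghphi0 hπ0 hπ1 hq hu
  have h1 {u : C} (hu : ‖u‖ < 1) := tendsto_ghphi1 hπ0 hπ1 hq hu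
  refine (((h1 hx).mul (h0 hy)).sub ((h0 hx).mul (h1 hy))).congr fun k => ?_
  rw [truncDet, Even.neg_pow (even_two_mul k)]
  ring

lemma tendstoUniformlyOn_truncDet (hπ0 : 0 < ‖π‖) (hπ1 : ‖π‖ ≤ 1) (hq : 1 < q) (hx : ‖x‖ < 1) :
    TendstoUniformlyOn (fun N => truncDet π q N x) (periodDet π q x) atTop {y | ‖y‖ = ‖x‖} := by
  have hsum := truncDet_eq_sum (norm_pos_iff.1 hπ0) q x
  have hmono : StrictMono fun k => 2 * k + 1 := fun i k hik => by dsimp only; omega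
  have hunif := tendstoUniformlyOn_sum_range (g := periodDet π q x) (U := {y | ‖y‖ = ‖x‖})
    (tendsto_weight_mul_pow hπ0 hπ1 (norm_nonneg x) hx hq)
    (fun k y hy => norm_detTerm_le (y := y) rfl hy k) hmono.tendsto_atTop fun y hy => by
      simpa only [← hsum] using tendsto_truncDet_two_mul hπ0 hπ1 hq hx (Eq.trans_lt hy hx)
  intro v hv
  simpa only [← hsum] using (tendsto_add_atTop_nat 1).eventually (hunif v hv)

theorem RegularRadius.norm_periodDet (h : RegularRadius ‖π‖ γ q n) (hF : FrobeniusBound C ‖π‖ q)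
    (hx : ‖x‖ = γ) (hy : ‖y‖ = γ) (hxy : x ≠ y) {j : ℕ} (hj : Dominates ‖π‖ γ q ‖x - y‖ j) :
    ‖periodDet π q x y‖ = weight ‖π‖ γ q j * ‖x - y‖ ^ q ^ j := by
  have hlim := tendsto_truncDet_two_mul h.pi_pos h.pi_lt_one.le h.two_le (hx.trans_lt h.lt_one)
    (hy.trans_lt h.lt_one)
  refine tendsto_nhds_unique hlim.norm (tendsto_const_nhds.congr' ?_)
  filter_upwards [eventually_ge_atTop j] with k hk
  exact (h.norm_truncDet hF hx hy hxy hj (by omega)).symm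

end Determinant

/-! ### The fiber -/

section Fiber

variable {C : Type*} [NormedField C] [IsUltrametricDist C] {π x z u : C} {γ : ℝ} {q n N j : ℕ}

namespace RegularRadius

lemma norm_eq_and_ne_and_dominates_of_lt_outerRadius (h : RegularRadius ‖π‖ γ q n) (hz : ‖z‖ = γ)
    (hj : j ≤ n) (hcrit : critRadius ‖π‖ γ q j < ‖u - z‖)
    (hlt : ‖u - z‖ < outerRadius ‖π‖ γ q n j) :
    ‖u‖ = γ ∧ z ≠ u ∧ Dominates ‖π‖ γ q ‖z - u‖ j := by
  refine ⟨norm_eq_of_mem_ball hz (mem_ball_iff_norm.2 (hlt.trans_le (h.outerRadius_le j))), ?_,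
    norm_sub_rev u z ▸ h.dominates_of_lt_outerRadius hj hcrit hlt⟩
  rintro rfl
  rw [sub_self, norm_zero] at hcrit
  exact hcrit.not_ge (critRadius_nonneg h.pi_pos h.pos j)

lemma norm_truncDet_of_lt_outerRadius (h : RegularRadius ‖π‖ γ q n) (hF : FrobeniusBound C ‖π‖ q)
    (hz : ‖z‖ = γ) (hjn : j ≤ n) (hjN : j ≤ N) (hcrit : critRadius ‖π‖ γ q j < ‖u - z‖)
    (hlt : ‖u - z‖ < outerRadius ‖π‖ γ q n j) :
    ‖truncDet π q N z u‖ = weight ‖π‖ γ q j * ‖u - z‖ ^ q ^ j := by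
  obtain ⟨hu, hzu, hdom⟩ := h.norm_eq_and_ne_and_dominates_of_lt_outerRadius hz hjn hcrit hlt
  rw [h.norm_truncDet hF hz hu hzu hdom hjN, norm_sub_rev]

lemma norm_truncDet_eq_norm_sub (h : RegularRadius ‖π‖ γ q n) (hF : FrobeniusBound C ‖π‖ q)
    (hx : ‖x‖ = γ) (hz : ‖z‖ = γ) (hxz : truncDet π q N x z = 0) (hne : u ≠ z)
    (hlt : ‖u - z‖ < outerRadius ‖π‖ γ q n 0) : ‖truncDet π q N x u‖ = ‖u - z‖ := by
  rw [h.norm_truncDet_eq_of_truncDet_eq_zero hx hz hxz, h.norm_truncDet_of_lt_outerRadius hF hz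
    n.zero_le N.zero_le (norm_pos_iff.2 (sub_ne_zero.2 hne)) hlt, weight_zero, one_mul, pow_zero,
    pow_one]

lemma eq_of_truncDet_eq_zero (h : RegularRadius ‖π‖ γ q n) (hF : FrobeniusBound C ‖π‖ q)
    (hx : ‖x‖ = γ) (hz : ‖z‖ = γ) (hxz : truncDet π q N x z = 0) (hxu : truncDet π q N x u = 0)
    (hlt : ‖u - z‖ < outerRadius ‖π‖ γ q n 0) : u = z := by
  by_contra hne
  have hnorm := h.norm_truncDet_eq_norm_sub hF hx hz hxz hne hlt
  rw [hxu, norm_zero] at hnorm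
  exact hne (sub_eq_zero.1 (norm_eq_zero.1 hnorm.symm))

theorem exists_finset_norm_truncDet_eq_prod [IsAlgClosed C] (h : RegularRadius ‖π‖ γ q n)
    (hF : FrobeniusBound C ‖π‖ q) (hx : ‖x‖ = γ) (hN : n ≤ N) :
    ∃ S : Finset C, #S = q ^ n ∧ (∀ ρ ∈ S, ρ ∈ Metric.ball x γ) ∧
      (∀ ρ ∈ S, ∀ σ ∈ S, dist ρ σ < outerRadius ‖π‖ γ q n 0 → ρ = σ) ∧
      ∀ u ∈ Metric.ball x γ, ‖truncDet π q N x u‖ = weight ‖π‖ γ q n * ∏ ρ ∈ S, dist u ρ := by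
  classical
  have hdense := fun r s => exists_norm_between (C := C) (r := r) (s := s) h.pi_pos h.pi_lt_one
  obtain ⟨c, R, hR⟩ := exists_norm_truncDet_eq_prod π q N x
  obtain ⟨hcard, hdisk⟩ := card_filter_of_prod_norm_sub_eq_mul_pow hdense (c := c) (R := R) (a := x)
    (critRadius_nonneg h.pi_pos h.pos n) (h.critRadius_lt_outerRadius le_rfl)
    (weight_pos h.pi_pos h.pos n) fun u hcrit hlt => by
      rw [← hR, h.norm_truncDet_of_lt_outerRadius hF hx le_rfl hN hcrit hlt]
  rw [outerRadius, if_neg (lt_irrefl n)] at hdisk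
  set S := R.filter fun ρ => ‖ρ - x‖ ≤ critRadius ‖π‖ γ q n
  have hball : ∀ ρ ∈ S, ρ ∈ Metric.ball x γ := fun ρ hρ =>
    mem_ball_iff_norm.2 ((Multiset.mem_filter.1 hρ).2.trans_lt (h.critRadius_lt le_rfl))
  have hnorm : ∀ ρ ∈ S, ‖ρ‖ = γ := fun ρ hρ => norm_eq_of_mem_ball hx (hball ρ hρ)
  have hzero : ∀ ρ ∈ S, truncDet π q N x ρ = 0 := fun ρ hρ => by
    rw [← norm_eq_zero, hR, Multiset.prod_eq_zero (Multiset.mem_map.2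
      ⟨ρ, (Multiset.mem_filter.1 hρ).1, by rw [sub_self, norm_zero]⟩), mul_zero]
  have hsimple : ∀ ρ ∈ S, R.count ρ = 1 := fun ρ hρ =>
    count_eq_of_prod_norm_sub_eq_mul_pow hdense (c := c)
      (h.critRadius_lt_outerRadius n.zero_le) one_pos fun u hne hlt => by
        rw [← hR, h.norm_truncDet_eq_norm_sub hF hx (hnorm ρ hρ) (hzero ρ hρ) hne hlt, one_mul,
          pow_one]
  have hnodup : S.Nodup := Multiset.nodup_iff_count_eq_one.2 fun ρ hρ =>
    ((Multiset.count_le_of_le ρ (Multiset.filter_le _ R)).trans_eq (hsimple ρ hρ)).antisymm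
      (Multiset.one_le_count_iff_mem.2 hρ)
  refine ⟨⟨S, hnodup⟩, hcard, hball, fun ρ hρ σ hσ hlt => ?_, fun u hu => ?_⟩
  · rw [dist_eq_norm] at hlt
    exact h.eq_of_truncDet_eq_zero hF hx (hnorm σ hσ) (hzero σ hσ) (hzero ρ hρ) hlt
  · simp only [dist_eq_norm]
    rw [hR u, hdisk u (mem_ball_iff_norm.1 hu)]
    rfl

variable [CompleteSpace C]

lemma norm_periodDet_of_lt_outerRadius (h : RegularRadius ‖π‖ γ q n) (hF : FrobeniusBound C ‖π‖ q)
    (hx : ‖x‖ = γ) (hj : j ≤ n) (hcrit : critRadius ‖π‖ γ q j < ‖u - x‖)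
    (hlt : ‖u - x‖ < outerRadius ‖π‖ γ q n j) :
    ‖periodDet π q x u‖ = weight ‖π‖ γ q j * ‖u - x‖ ^ q ^ j := by
  obtain ⟨hu, hxu, hdom⟩ := h.norm_eq_and_ne_and_dominates_of_lt_outerRadius hx hj hcrit hlt
  rw [h.norm_periodDet hF hx hu hxu hdom, norm_sub_rev]

lemma norm_sub_le_critRadius_of_periodDet_eq_zero (h : RegularRadius ‖π‖ γ q n)
    (hF : FrobeniusBound C ‖π‖ q) (hx : ‖x‖ = γ) (hj : j ≤ n) (hdet : periodDet π q x u = 0)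
    (hlt : ‖u - x‖ < outerRadius ‖π‖ γ q n j) : ‖u - x‖ ≤ critRadius ‖π‖ γ q j := by
  by_contra! hcrit
  have hnorm := h.norm_periodDet_of_lt_outerRadius hF hx hj hcrit hlt
  rw [hdet, norm_zero] at hnorm
  exact hnorm.not_lt (mul_pos (weight_pos h.pi_pos h.pos j)
    (pow_pos ((critRadius_nonneg h.pi_pos h.pos j).trans_lt hcrit) _))

lemma norm_sub_lt_of_periodDet_eq_zero (h : RegularRadius ‖π‖ γ q n) (hF : FrobeniusBound C ‖π‖ q)
    (hx : ‖x‖ = γ) (hu : ‖u‖ = γ) (hdet : periodDet π q x u = 0) : ‖u - x‖ < γ := by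
  have hle : ‖u - x‖ ≤ γ := by simpa only [hu, hx, max_self] using norm_sub_le_max u x
  refine hle.lt_of_ne fun heq => ?_
  have hxu : x ≠ u := by
    rintro rfl
    rw [sub_self, norm_zero] at heq
    exact h.pos.ne heq
  rw [norm_sub_rev] at heq
  have hnorm := h.norm_periodDet hF hx hu hxu
    (h.dominates le_rfl (heq ▸ h.critRadius_lt le_rfl) heq.le fun hn => absurd hn (lt_irrefl n))
  rw [hdet, norm_zero, heq] at hnorm
  exact hnorm.not_lt (mul_pos (weight_pos h.pi_pos h.pos n) (pow_pos h.pos _))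

variable [IsAlgClosed C]

theorem exists_finset_norm_periodDet_eq_prod (h : RegularRadius ‖π‖ γ q n)
    (hF : FrobeniusBound C ‖π‖ q) (hx : ‖x‖ = γ) :
    ∃ T : Finset C, #T = q ^ n ∧ (∀ ρ ∈ T, ρ ∈ Metric.ball x γ) ∧
      ∀ u ∈ Metric.ball x γ, ‖periodDet π q x u‖ = weight ‖π‖ γ q n * ∏ ρ ∈ T, dist u ρ := by
  choose S hcard hball hsep hprod using fun N =>
    h.exists_finset_norm_truncDet_eq_prod (N := N + n) hF hx (n.le_add_left N)
  have hunif := (tendstoUniformlyOn_truncDet h.pi_pos h.pi_lt_one.le h.two_le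
    (hx.trans_lt h.lt_one)).mono fun u hu => (norm_eq_of_mem_ball hx hu).trans hx.symm
  refine exists_finset_norm_eq_of_tendstoUniformlyOn (IsUltrametricDist.isClosed_ball x γ)
    (weight_pos h.pi_pos h.pos n) (h.critRadius_lt_outerRadius n.zero_le) hcard hball hsep ?_ hprod
  exact fun v hv => (tendsto_add_atTop_nat n).eventually (hunif v hv)

theorem exists_finset_eq_fiber (h : RegularRadius ‖π‖ γ q n) (hF : FrobeniusBound C ‖π‖ q)
    (hx : ‖x‖ = γ) :
    ∃ T : Finset C, {u | ‖u‖ = γ ∧ periodDet π q x u = 0} = T ∧ #T = q ^ n ∧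
      ∀ j ≤ n, #{ρ ∈ T | ‖ρ - x‖ ≤ critRadius ‖π‖ γ q j} = q ^ j := by
  obtain ⟨T, hcard, hball, hprod⟩ := h.exists_finset_norm_periodDet_eq_prod hF hx
  have hmem : ∀ u ∈ Metric.ball x γ, periodDet π q x u = 0 ↔ u ∈ T := fun u hu => by
    rw [← norm_eq_zero, hprod u hu, mul_eq_zero, or_iff_right (weight_pos h.pi_pos h.pos n).ne',
      prod_eq_zero_iff]
    simp only [dist_eq_zero, exists_eq_right']
  refine ⟨T, Set.ext fun u => ⟨fun ⟨hu, hdet⟩ => ?_, fun hu => ⟨?_, ?_⟩⟩, hcard, fun j hj => ?_⟩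
  · exact (hmem u (mem_ball_iff_norm.2 (h.norm_sub_lt_of_periodDet_eq_zero hF hx hu hdet))).1 hdet
  · exact norm_eq_of_mem_ball hx (hball u hu)
  · exact (hmem u (hball u hu)).2 hu
  · refine (card_filter_of_prod_norm_sub_eq_mul_pow (c := weight ‖π‖ γ q n) (R := T.val) (a := x)
      (fun r s => exists_norm_between h.pi_pos h.pi_lt_one) (critRadius_nonneg h.pi_pos h.pos j)
      (h.critRadius_lt_outerRadius hj) (weight_pos (q := q) h.pi_pos h.pos j)
      fun u hcrit hlt => ?_).1
    rw [← h.norm_periodDet_of_lt_outerRadius hF hx hj hcrit hlt,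
      hprod u (mem_ball_iff_norm.2 (hlt.trans_le (h.outerRadius_le j)))]
    simp only [dist_eq_norm]
    rfl

theorem exists_enumeration_fiber (h : RegularRadius ‖π‖ γ q n) (hF : FrobeniusBound C ‖π‖ q)
    (hx : ‖x‖ = γ) :
    ∃ v : ℕ → C, v 1 = x ∧
      Set.BijOn v (Set.Icc 1 (q ^ n)) {u | ‖u‖ = γ ∧ periodDet π q x u = 0} ∧
      ∀ i, ∀ j < n, q ^ j < i → i ≤ q ^ (j + 1) → ‖v i - x‖ = critRadius ‖π‖ γ q (j + 1) := by
  obtain ⟨T, hT, hcard, hfilter⟩ := h.exists_finset_eq_fiber hF hx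
  obtain ⟨v, hv, hmono⟩ := exists_bijOn_monotoneOn (fun u => ‖u - x‖) T
  have hle : ∀ i ∈ Set.Icc 1 (q ^ n), ∀ j ≤ n, ‖v i - x‖ ≤ critRadius ‖π‖ γ q j ↔ i ≤ q ^ j :=
    fun i hi j hj => by
      rw [le_iff_le_card_filter_of_monotoneOn (f := fun u => ‖u - x‖) hv hmono (hcard ▸ hi),
        hfilter j hj]
  have hq : 0 < q := two_pos.trans_le h.two_le
  rw [hcard, ← hT] at hv
  refine ⟨v, ?_, hv, fun i j hj hji hij => ?_⟩
  · have h1 := (hle 1 ⟨le_rfl, Nat.one_le_pow _ _ hq⟩ 0 n.zero_le).2 (pow_zero q).ge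
    exact sub_eq_zero.1 (norm_le_zero_iff.1 h1)
  · have hi : i ∈ Set.Icc 1 (q ^ n) := ⟨by omega, hij.trans (Nat.pow_le_pow_right hq hj)⟩
    refine ((hle i hi (j + 1) hj).2 hij).antisymm (not_lt.1 fun hlt => hji.not_ge ?_)
    refine (hle i hi j hj.le).1
      (h.norm_sub_le_critRadius_of_periodDet_eq_zero hF hx hj.le (hv.mapsTo hi).2 ?_)
    rwa [outerRadius, if_pos hj]

end RegularRadius

end Fiber

lemma pow_lt_rpow_one_div_iff {ϖ γ : ℝ} (hϖ : 0 ≤ ϖ) (hγ : 0 ≤ γ) (q k : ℕ) :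
    γ ^ q ^ k < ϖ ^ ((1 : ℝ) / (q + 1)) ↔ γ ^ (q ^ k + q ^ (k + 1)) < ϖ := by
  have hexp : q ^ k + q ^ (k + 1) = q ^ k * (q + 1) := by ring
  have hroot : (ϖ ^ ((1 : ℝ) / (q + 1))) ^ (q + 1) = ϖ := by
    rw [one_div]
    exact_mod_cast Real.rpow_inv_natCast_pow hϖ q.succ_ne_zero
  rw [← pow_lt_pow_iff_left₀ (by positivity) (by positivity) q.succ_ne_zero, hroot, ← pow_mul, hexp]

lemma RegularRadius.of_rpow {ϖ γ : ℝ} {q n : ℕ} (hϖ0 : 0 < ϖ) (hϖ1 : ϖ < 1) (hγ0 : 0 < γ)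
    (hγ1 : γ < 1) (hq : 2 ≤ q)
    (hγ : ∀ s : ℕ, γ ≠ ϖ ^ ((1 : ℝ) / ((q : ℝ) ^ s + (q : ℝ) ^ (s + 1))))
    (hn : γ ^ q ^ n < ϖ ^ ((1 : ℝ) / (q + 1)))
    (hmin : ∀ m < n, ¬ γ ^ q ^ m < ϖ ^ ((1 : ℝ) / (q + 1))) : RegularRadius ϖ γ q n where
  pi_pos := hϖ0
  pi_lt_one := hϖ1
  pos := hγ0
  lt_one := hγ1
  two_le := hq
  pow_lt := (pow_lt_rpow_one_div_iff hϖ0.le hγ0.le q n).1 hn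
  lt_pow k hk := by
    have hle := not_lt.1 ((pow_lt_rpow_one_div_iff hϖ0.le hγ0.le q k).not.1 (hmin k hk))
    refine hle.lt_of_ne fun heq => hγ k ?_
    rw [heq, one_div]
    exact_mod_cast (Real.pow_rpow_inv_natCast hγ0.le (by positivity)).symm

end GrossHopkins

open GrossHopkins in
theorem gross_hopkins_fiber_nongeneric_general {p : ℕ} (hp : p.Prime) {C : Type*} [NormedField C]
    [IsUltrametricDist C] [CompleteSpace C] [IsAlgClosed C] (q : ℕ)
    (hq : ∃ r : ℕ, 0 < r ∧ q = p ^ r) (π : C) (hπ0 : 0 < ‖π‖) (hπ1 : ‖π‖ < 1)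
    (hpπ : ‖(p : C)‖ ≤ ‖π‖) (γ : ℝ) (hγ0 : 0 < γ) (hγ1 : γ < 1)
    (hγform : ∀ s : ℕ, γ ≠ ‖π‖ ^ ((1 : ℝ) / ((q : ℝ) ^ s + (q : ℝ) ^ (s + 1))))
    (u1 : C) (hu1 : ‖u1‖ = γ) (n : ℕ) (hn : γ ^ q ^ n < ‖π‖ ^ ((1 : ℝ) / (q + 1)))
    (hnmin : ∀ m : ℕ, m < n → ¬ γ ^ q ^ m < ‖π‖ ^ ((1 : ℝ) / (q + 1))) :
    ∃ v : ℕ → C, v 1 = u1 ∧ Set.InjOn v (Set.Icc 1 (q ^ n)) ∧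
      {u : C | ‖u‖ = γ ∧ ghphi0 π q u1 * ghphi1 π q u = ghphi1 π q u1 * ghphi0 π q u}
        = v '' Set.Icc 1 (q ^ n) ∧
      ∀ i j : ℕ, 1 ≤ j → j ≤ n → q ^ (j - 1) < i → i ≤ q ^ j →
        ‖v i - u1‖ = (‖π‖ * γ ^ (-(2 : ℝ) * (q : ℝ) ^ (j - 1))) ^
          ((1 : ℝ) / ((q : ℝ) ^ j - (q : ℝ) ^ (j - 1))) := by
  obtain ⟨r, hr, rfl⟩ := hq
  have hF := frobeniusBound_prime_pow hp r hpπ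
  have h := RegularRadius.of_rpow hπ0 hπ1 hγ0 hγ1 (hp.two_le.trans (Nat.le_self_pow hr.ne' p))
    hγform hn hnmin
  obtain ⟨v, hv1, hv, hdist⟩ := h.exists_enumeration_fiber hF hu1
  simp only [periodDet_eq_zero_iff] at hv
  refine ⟨v, hv1, hv.injOn, hv.image_eq.symm, fun i j hj1 hjn hji hij => ?_⟩
  obtain ⟨j, rfl⟩ := Nat.exists_eq_add_of_le' hj1
  exact hdist i j hjn hji hij

theorem gross_hopkins_fiber_nongeneric {p : ℕ} [Fact p.Prime] {C : Type*} [NormedField C] [IsUltrametricDist C]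
    [CompleteSpace C] [IsAlgClosed C] [Algebra ℚ_[p] C]
    (hiso : ∀ x : ℚ_[p], ‖algebraMap ℚ_[p] C x‖ = ‖x‖)
    (K : IntermediateField ℚ_[p] C) (hKfin : FiniteDimensional ℚ_[p] K)
    (q : ℕ) (hq : ∃ r : ℕ, 0 < r ∧ q = p ^ r)
    (π : C) (hπK : π ∈ K) (hπ0 : 0 < ‖π‖) (hπ1 : ‖π‖ < 1)
    (hπunif : ∀ x ∈ K, ‖x‖ < 1 → ‖x‖ ≤ ‖π‖)
    (hres : ∃ S : Finset C, S.card = q ∧ (∀ s ∈ S, s ∈ K ∧ ‖s‖ ≤ 1) ∧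
      (∀ x ∈ K, ‖x‖ ≤ 1 → ∃ s ∈ S, ‖x - s‖ < 1) ∧
      (∀ s ∈ S, ∀ t ∈ S, s ≠ t → ‖s - t‖ = 1))
    (γ : ℝ) (hγ0 : 0 < γ) (hγ1 : γ < 1)
    (hγform : ∀ s : ℕ, γ ≠ ‖π‖ ^ ((1:ℝ)/((q:ℝ)^s + (q:ℝ)^(s+1))))
    (u1 : C) (hu1 : ‖u1‖ = γ)
    (n : ℕ) (hn : γ ^ (q^n) < ‖π‖ ^ ((1:ℝ)/(q+1)))
    (hnmin : ∀ m : ℕ, m < n → ¬ (γ ^ (q^m) < ‖π‖ ^ ((1:ℝ)/(q+1)))) :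
    ∃ v : ℕ → C, v 1 = u1 ∧ Set.InjOn v (Set.Icc 1 (q^n)) ∧
      {u : C | ‖u‖ = γ ∧ ghphi0 π q u1 * ghphi1 π q u = ghphi1 π q u1 * ghphi0 π q u}
        = v '' (Set.Icc 1 (q^n)) ∧
      ∀ i j : ℕ, 1 ≤ j → j ≤ n → q^(j-1) < i → i ≤ q^j →
        ‖v i - u1‖ = (‖π‖ * γ ^ (-(2:ℝ) * (q:ℝ)^(j-1))) ^
          ((1:ℝ)/((q:ℝ)^j - (q:ℝ)^(j-1))) := by
  have hpπ : ‖(p : C)‖ ≤ ‖π‖ := hπunif _ (natCast_mem K p) <| by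
    rw [← map_natCast (algebraMap ℚ_[p] C) p, hiso]
    exact Padic.norm_p_lt_one
  exact gross_hopkins_fiber_nongeneric_general Fact.out q hq π hπ0 hπ1 hpπ γ hγ0 hγ1 hγform u1 hu1
    n hn hnmin
end

section
/- Suppose γ = |π|^{1/(q^s+q^{s+1})} for some integer s ≥ 0, and let u_1 ∈ ℂ_p with |u_1| = γ. Then the fiber S = {u ∈ ℂ_p : |u| = γ and φ_0(u_1)·φ_1(u) = φ_1(u_1)·φ_0(u)} has exactly q^s + q^{s+1} elements, and there is an enumeration S = {u_{(1)}, u_{(2)}, …, u_{(q^s+q^{s+1})}} with u_{(1)} = u_1 such that for all integers i, j with 1 ≤ j ≤ s and q^{j-1} < i ≤ q^j one has |u_{(i)} − u_1| = (|π|·γ^{-2q^{j-1}})^{1/(q^j − q^{j-1})}, and for all i with q^s < i ≤ q^s + q^{s+1} one has |u_{(i)} − u_1| = γ. -/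
open Filter


/-!
Let `W` be the Wronskian of consecutive coefficients,
`(-π)ⁿ·π·(mₙ(w)·mₙ₊₁(u) - mₙ₊₁(w)·mₙ(u)) = Σ_{i ≤ n} (-π)ⁱ·(u^{qⁱ} - w^{qⁱ})·mᵢ(u)·mᵢ(w)`,
a polynomial in `u` which for even `n → ∞` tends to `φ₀(w)·φ₁(u) - φ₁(w)·φ₀(u)`. On suitable open
annuli, both around `0` and around `w`, a single term of the sum dominates, so `‖W(u)‖` is a
constant times a power of the radius, and the exponent counts the zeros inside. This gives the
number of zeros on the sphere `‖u‖ = γ` and their distances to `w`. Wronskians based at two points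
with the same ratio `mₙ₊₁/mₙ` are proportional, so the same count applies around every zero: the
zeros are simple and separated by a distance independent of `n`. Hence they correspond
isometrically to the zeros of the limit.
-/

section Ultrametric

variable {𝕜 : Type*} [NormedField 𝕜]

theorem exists_norm_mem_Ioo [IsAlgClosed 𝕜] {π : 𝕜} (h₀ : 0 < ‖π‖) (h₁ : ‖π‖ < 1) {a b : ℝ}
    (ha : 0 ≤ a) (hab : a < b) : ∃ x : 𝕜, a < ‖x‖ ∧ ‖x‖ < b := by
  obtain ⟨c, hac, hcb⟩ := exists_between hab
  have hc : 0 < c := ha.trans_lt hac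
  have hlog : Real.log ‖π‖ < 0 := Real.log_neg h₀ h₁
  obtain ⟨y, hy₁, hy₂⟩ := exists_rat_btwn
    (div_lt_div_of_neg_of_lt hlog (Real.log_lt_log hc hcb))
  obtain ⟨x, hx⟩ := IsAlgClosed.exists_pow_nat_eq (π ^ y.num) y.pos
  have hx₀ : 0 < ‖x‖ := by
    refine norm_pos_iff.2 fun h => ?_
    rw [h, zero_pow y.pos.ne'] at hx
    exact zpow_ne_zero _ (norm_pos_iff.1 h₀) hx.symm
  have hlogx : Real.log ‖x‖ = y * Real.log ‖π‖ := by
    have hnorm := congrArg (fun z => Real.log ‖z‖) hx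
    simp only [norm_pow, norm_zpow, Real.log_pow, Real.log_zpow] at hnorm
    have hden : (y.den : ℝ) ≠ 0 := by exact_mod_cast y.pos.ne'
    rw [Rat.cast_def, div_mul_eq_mul_div, eq_div_iff hden, mul_comm, hnorm]
  refine ⟨x, hac.trans ?_, ?_⟩
  · rw [← Real.log_lt_log_iff hc hx₀, hlogx]
    exact (lt_div_iff_of_neg hlog).1 hy₂
  · rw [← Real.log_lt_log_iff hx₀ (ha.trans_lt hab), hlogx]
    exact (div_lt_iff_of_neg hlog).1 hy₁

variable [IsUltrametricDist 𝕜]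

theorem norm_sub_le_max_norm (x y : 𝕜) : ‖x - y‖ ≤ max ‖x‖ ‖y‖ := by
  rw [sub_eq_add_neg, ← norm_neg y]
  exact IsUltrametricDist.norm_add_le_max x (-y)

theorem norm_sub_eq_max_of_norm_ne_norm {x y : 𝕜} (h : ‖x‖ ≠ ‖y‖) :
    ‖x - y‖ = max ‖x‖ ‖y‖ := by
  rw [sub_eq_add_neg, ← norm_neg y]
  exact IsUltrametricDist.norm_add_eq_max_of_norm_ne_norm (by rwa [norm_neg])

theorem norm_eq_of_norm_sub_lt {x y : 𝕜} (h : ‖x - y‖ < ‖y‖) : ‖x‖ = ‖y‖ := by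
  by_contra hne
  exact h.not_ge (norm_sub_eq_max_of_norm_ne_norm hne ▸ le_max_right ‖x‖ ‖y‖)

theorem norm_pow_succ_sub_pow_succ_le {x y : 𝕜} {r : ℝ} (hx : ‖x‖ ≤ r) (hy : ‖y‖ ≤ r) (n : ℕ) :
    ‖x ^ (n + 1) - y ^ (n + 1)‖ ≤ r ^ n * ‖x - y‖ := by
  have hr : 0 ≤ r := (norm_nonneg x).trans hx
  rw [← geom_sum₂_mul, norm_mul]
  gcongr
  refine IsUltrametricDist.norm_sum_le_of_forall_le_of_nonneg (by positivity) fun i hi => ?_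
  have hi : i ≤ n := Nat.lt_succ_iff.1 (Finset.mem_range.1 hi)
  calc ‖x ^ i * y ^ (n + 1 - 1 - i)‖ ≤ r ^ i * r ^ (n - i) := by
        rw [norm_mul, norm_pow, norm_pow, Nat.add_sub_cancel]
        gcongr
    _ = r ^ n := by rw [← pow_add, Nat.add_sub_cancel' hi]

theorem norm_add_pow_prime_pow_sub_le {p : ℕ} [Fact p.Prime] (r : ℕ) {x y : 𝕜} {M : ℝ}
    (hx : ‖x‖ ≤ M) (hy : ‖y‖ ≤ M) :
    ‖(x + y) ^ p ^ r - x ^ p ^ r - y ^ p ^ r‖ ≤ ‖(p : 𝕜)‖ * (‖y‖ * M ^ (p ^ r - 1)) := by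
  have hM : 0 ≤ M := (norm_nonneg x).trans hx
  rw [add_pow_prime_pow_eq' Fact.out x y r, sub_sub, add_sub_cancel_left, norm_mul]
  gcongr
  refine IsUltrametricDist.norm_sum_le_of_forall_le_of_nonneg (by positivity) fun k hk => ?_
  obtain ⟨hk₀, hk₁⟩ := Finset.mem_Ioo.1 hk
  obtain ⟨d, hd⟩ : ∃ d, p ^ r - k = d + 1 := ⟨p ^ r - k - 1, by omega⟩
  rw [norm_mul, norm_mul, norm_pow, norm_pow, hd]
  calc ‖x‖ ^ k * ‖y‖ ^ (d + 1) * ‖(((p ^ r).choose k / p : ℕ) : 𝕜)‖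
      ≤ M ^ k * (M ^ d * ‖y‖) * 1 := by
        rw [pow_succ]
        gcongr
        exact IsUltrametricDist.norm_natCast_le_one 𝕜 _
    _ = ‖y‖ * M ^ (p ^ r - 1) := by
        rw [show p ^ r - 1 = k + d by omega, pow_add]; ring

end Ultrametric

section Roots

open Polynomial

variable {𝕜 : Type*} [NormedField 𝕜]

theorem norm_eval_eq_prod_roots [IsAlgClosed 𝕜] (P : 𝕜[X]) (x : 𝕜) :
    ‖P.eval x‖ = ‖P.leadingCoeff‖ * (P.roots.map fun a => ‖x - a‖).prod := by
  rw [(IsAlgClosed.splits P).eval_eq_prod_roots, norm_mul]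
  congr 1
  exact (Multiset.prod_hom' P.roots (normHom : 𝕜 →*₀ ℝ) fun a => x - a).symm

theorem eq_of_mul_pow_eq_mul_pow {a b x y : ℝ} {m n : ℕ} (ha : a ≠ 0) (hx : 0 < x) (hxy : x < y)
    (hax : a * x ^ m = b * x ^ n) (hay : a * y ^ m = b * y ^ n) : m = n := by
  have hy : 0 < y := hx.trans hxy
  have hb : b ≠ 0 := fun hb => mul_ne_zero ha (pow_ne_zero m hx.ne') (by rw [hax, hb, zero_mul])
  have hcross : (a * b) * (y ^ m * x ^ n) = (a * b) * (y ^ n * x ^ m) := by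
    linear_combination (b * x ^ n) * hay - (b * y ^ n) * hax
  have hratio : (y / x) ^ m = (y / x) ^ n := by
    rw [div_pow, div_pow, div_eq_div_iff (by positivity) (by positivity)]
    exact mul_left_cancel₀ (mul_ne_zero ha hb) hcross
  exact pow_right_injective₀ (div_pos hy hx) ((one_lt_div hx).2 hxy).ne' hratio

theorem le_norm_sub_of_growth {P : 𝕜[X]} {c : 𝕜} {t₁ t₂ B : ℝ} {N : ℕ} (ht₁ : 0 ≤ t₁)
    (hB : 0 < B) (h : ∀ x, t₁ < ‖x - c‖ → ‖x - c‖ < t₂ → ‖P.eval x‖ = B * ‖x - c‖ ^ N)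
    {a : 𝕜} (ha : P.eval a = 0) (hta : t₁ < ‖a - c‖) : t₂ ≤ ‖a - c‖ := by
  by_contra! hat
  have hpos : 0 < ‖P.eval a‖ := by
    rw [h a hta hat]
    exact mul_pos hB (pow_pos (ht₁.trans_lt hta) N)
  rw [ha, norm_zero] at hpos
  exact hpos.false

theorem prod_map_eq_filter_mul_filter_not {α : Type*} (m : Multiset α) (p : α → Prop)
    [DecidablePred p] (f : α → ℝ) : (m.map f).prod =
      ((m.filter p).map f).prod * ((m.filter fun a => ¬ p a).map f).prod := by
  rw [← Multiset.prod_add, ← Multiset.map_add, Multiset.filter_add_not]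

variable [IsUltrametricDist 𝕜]

theorem prod_norm_sub_eq_pow_mul (m : Multiset 𝕜) (c x : 𝕜) {t : ℝ} (htx : t < ‖x - c‖)
    (h : ∀ a ∈ m, t < ‖a - c‖ → ‖x - c‖ < ‖a - c‖) :
    (m.map fun a => ‖x - a‖).prod =
      ‖x - c‖ ^ (m.filter fun a => ‖a - c‖ ≤ t).card *
        ((m.filter fun a => ¬ ‖a - c‖ ≤ t).map fun a => ‖a - c‖).prod := by
  have hsplit : ∀ a, ‖x - c‖ ≠ ‖a - c‖ → ‖x - a‖ = max ‖x - c‖ ‖a - c‖ := fun a ha => by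
    rw [← norm_sub_eq_max_of_norm_ne_norm ha, sub_sub_sub_cancel_right]
  rw [prod_map_eq_filter_mul_filter_not m fun a => ‖a - c‖ ≤ t]
  congr 1
  · rw [← Multiset.prod_replicate, ← Multiset.map_const']
    refine congrArg _ (Multiset.map_congr rfl fun a ha => ?_)
    have hlt := (Multiset.mem_filter.1 ha).2.trans_lt htx
    rw [hsplit a hlt.ne', max_eq_left hlt.le]
  · refine congrArg _ (Multiset.map_congr rfl fun a ha => ?_)
    have hlt := h a (Multiset.mem_filter.1 ha).1 (not_le.1 (Multiset.mem_filter.1 ha).2)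
    rw [hsplit a hlt.ne, max_eq_right hlt.le]

theorem card_roots_filter_of_growth [IsAlgClosed 𝕜] {π : 𝕜} (h₀ : 0 < ‖π‖) (h₁ : ‖π‖ < 1)
    {P : 𝕜[X]} {c : 𝕜} {t₁ t₂ B : ℝ} {N : ℕ} (ht₁ : 0 ≤ t₁) (ht : t₁ < t₂)
    (hB : 0 < B) (h : ∀ x, t₁ < ‖x - c‖ → ‖x - c‖ < t₂ → ‖P.eval x‖ = B * ‖x - c‖ ^ N) :
    (P.roots.filter fun a => ‖a - c‖ ≤ t₁).card = N := by
  have hgrowth : ∀ x : 𝕜, t₁ < ‖x‖ → ‖x‖ < t₂ → B * ‖x‖ ^ N =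
      ‖P.leadingCoeff‖ * ((P.roots.filter fun a => ¬ ‖a - c‖ ≤ t₁).map fun a => ‖a - c‖).prod *
        ‖x‖ ^ (P.roots.filter fun a => ‖a - c‖ ≤ t₁).card := by
    intro x hx₁ hx₂
    rw [← add_sub_cancel_right x c] at hx₁ hx₂ ⊢
    have hgap : ∀ a ∈ P.roots, t₁ < ‖a - c‖ → ‖x + c - c‖ < ‖a - c‖ := fun a ha hta =>
      hx₂.trans_le (le_norm_sub_of_growth ht₁ hB h (isRoot_of_mem_roots ha) hta)
    rw [← h _ hx₁ hx₂, norm_eval_eq_prod_roots, prod_norm_sub_eq_pow_mul P.roots c _ hx₁ hgap]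
    ring
  obtain ⟨x, hx₁, hx₂⟩ := exists_norm_mem_Ioo h₀ h₁ ht₁ ht
  obtain ⟨y, hxy, hy₂⟩ := exists_norm_mem_Ioo h₀ h₁ (norm_nonneg x) hx₂
  exact (eq_of_mul_pow_eq_mul_pow hB.ne' (ht₁.trans_lt hx₁) hxy (hgrowth x hx₁ hx₂)
    (hgrowth y (hx₁.trans hxy) hy₂)).symm

theorem norm_eval_mul_pow_le [IsAlgClosed 𝕜] (P : 𝕜[X]) {γ η : ℝ} (hη : 0 ≤ η) {x y : 𝕜}
    (hx : ‖x‖ = γ) (hy : ‖y‖ = γ) (h : ∀ a ∈ P.roots, ‖a‖ = γ → η ≤ ‖x - a‖) :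
    ‖P.eval y‖ * η ^ (P.roots.filter fun a => ‖a‖ = γ).card ≤
      ‖P.eval x‖ * γ ^ (P.roots.filter fun a => ‖a‖ = γ).card := by
  set s := P.roots.filter fun a => ‖a‖ = γ
  set t := P.roots.filter fun a => ¬ ‖a‖ = γ
  have hs : ∀ a ∈ s, a ∈ P.roots ∧ ‖a‖ = γ := fun a ha => Multiset.mem_filter.1 ha
  have hupper : (s.map fun a => ‖y - a‖).prod ≤ γ ^ s.card := by
    rw [← Multiset.prod_replicate, ← Multiset.map_const']
    refine Multiset.prod_map_le_prod_map₀ _ _ (fun _ _ => norm_nonneg _) fun a ha => ?_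
    simpa [hy, (hs a ha).2] using norm_sub_le_max_norm y a
  have hlower : η ^ s.card ≤ (s.map fun a => ‖x - a‖).prod := by
    rw [← Multiset.prod_replicate, ← Multiset.map_const']
    exact Multiset.prod_map_le_prod_map₀ _ _ (fun _ _ => hη)
      fun a ha => h a (hs a ha).1 (hs a ha).2
  have hoff : (t.map fun a => ‖y - a‖) = t.map fun a => ‖x - a‖ := by
    refine Multiset.map_congr rfl fun a ha => ?_
    have hne : γ ≠ ‖a‖ := Ne.symm (Multiset.mem_filter.1 ha).2
    rw [norm_sub_eq_max_of_norm_ne_norm (hy ▸ hne), norm_sub_eq_max_of_norm_ne_norm (hx ▸ hne),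
      hx, hy]
  have hnonneg : ∀ (z : 𝕜) (m : Multiset 𝕜), 0 ≤ (m.map fun a => ‖z - a‖).prod := fun z m =>
    Multiset.prod_map_nonneg fun _ _ => norm_nonneg _
  rw [norm_eval_eq_prod_roots P x, norm_eval_eq_prod_roots P y,
    prod_map_eq_filter_mul_filter_not P.roots fun a => ‖a‖ = γ,
    prod_map_eq_filter_mul_filter_not P.roots fun a => ‖a‖ = γ, hoff]
  have hmain := mul_le_mul hupper hlower (pow_nonneg hη _) (pow_nonneg (hx ▸ norm_nonneg x) _)
  calc _ = ‖P.leadingCoeff‖ * (t.map fun a => ‖x - a‖).prod *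
        ((s.map fun a => ‖y - a‖).prod * η ^ s.card) := by ring
    _ ≤ ‖P.leadingCoeff‖ * (t.map fun a => ‖x - a‖).prod *
        (γ ^ s.card * (s.map fun a => ‖x - a‖).prod) := by
      gcongr
      exact mul_nonneg (norm_nonneg _) (hnonneg x t)
    _ = _ := by ring

end Roots

theorem exists_bijOn_image_val {α : Type*} {p : α → Prop} {A B : Set (Subtype p)}
    {g : Subtype p → Subtype p} (hg : Set.BijOn g A B) :
    ∃ G : α → α, (∀ x : Subtype p, G x = g x) ∧
      Set.BijOn G (Subtype.val '' A) (Subtype.val '' B) := by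
  obtain ⟨G, hG⟩ : ∃ G : α → α, ∀ x : Subtype p, G x = g x :=
    ⟨Function.extend Subtype.val (fun x => g x) id, Subtype.val_injective.extend_apply _ _⟩
  refine ⟨G, hG, ?_, ?_, ?_⟩
  · rintro _ ⟨x, hx, rfl⟩
    exact hG x ▸ Set.mem_image_of_mem _ (hg.mapsTo hx)
  · rintro _ ⟨x, hx, rfl⟩ _ ⟨y, hy, rfl⟩ hxy
    rw [hG, hG] at hxy
    rw [hg.injOn hx hy (Subtype.val_injective hxy)]
  · rintro _ ⟨y, hy, rfl⟩
    obtain ⟨x, hx, rfl⟩ := hg.surjOn hy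
    exact ⟨x, Set.mem_image_of_mem _ hx, hG x⟩

section UltrametricBijections

variable {X : Type*} [PseudoMetricSpace X] [IsUltrametricDist X]

theorem dist_eq_of_dist_lt {x y z : X} (h : dist x y < dist y z) : dist x z = dist y z := by
  rw [IsUltrametricDist.dist_eq_max_of_dist_ne_dist x y z h.ne, max_eq_right h.le]

theorem exists_bijOn_dist_eq_of_separated {A B : Set X} {δ : ℝ}
    (hA : A.Pairwise fun a b => δ ≤ dist a b) (hB : B.Pairwise fun a b => δ ≤ dist a b)
    (hAB : ∀ a ∈ A, ∃ b ∈ B, dist a b < δ) (hBA : ∀ b ∈ B, ∃ a ∈ A, dist b a < δ) :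
    ∃ g : X → X, Set.BijOn g A B ∧ (∀ a ∈ A, ∀ b ∈ A, dist (g a) (g b) = dist a b) ∧
      ∀ a ∈ A, a ∈ B → g a = a := by
  choose! g hgB hg using hAB
  have hg' : ∀ a ∈ A, dist (g a) a < δ := fun a ha => dist_comm a (g a) ▸ hg a ha
  refine ⟨g, ⟨hgB, fun a ha b hb hab => ?_, fun b hb => ?_⟩, fun a ha b hb => ?_,
    fun a ha haB => (hB.eq haB (hgB a ha) (not_le.2 (hg a ha))).symm⟩
  · exact hA.eq ha hb (not_le.2 <|
      (dist_triangle_max a (g a) b).trans_lt (max_lt (hg a ha) (hab ▸ hg' b hb)))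
  · obtain ⟨a, ha, hba⟩ := hBA b hb
    exact ⟨a, ha, hB.eq (hgB a ha) hb (not_le.2 <|
      (dist_triangle_max (g a) a b).trans_lt (max_lt (hg' a ha) (dist_comm b a ▸ hba)))⟩
  · rcases eq_or_ne a b with rfl | hne
    · rw [dist_self, dist_self]
    · have hab : δ ≤ dist a b := hA ha hb hne
      have hgab : dist (g a) b = dist a b := dist_eq_of_dist_lt ((hg' a ha).trans_le hab)
      rw [dist_comm (g a), ← hgab, dist_comm (g a) b]
      exact dist_eq_of_dist_lt <| (hg' b hb).trans_le (by rwa [dist_comm b, hgab])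

end UltrametricBijections

section UniformLimits

variable {X E : Type*} [MetricSpace X] [NormedAddCommGroup E] {f : ℕ → X → E} {F : X → E} {δ η : ℝ}

/-- The functions `f k` are small only near their zeros, uniformly in `k`: the hypothesis of
Hurwitz's theorem in the form needed here for zero sets of uniform limits. -/
def SmallOnlyNearZeros (f : ℕ → X → E) : Prop :=
  ∀ η > 0, ∃ c > 0, ∀ k x, ‖f k x‖ < c → ∃ a, f k a = 0 ∧ dist x a < η

theorem SmallOnlyNearZeros.eventually_exists_zero_near (hnear : SmallOnlyNearZeros f)
    (hF : TendstoUniformly f F atTop) (hη : 0 < η) :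
    ∀ᶠ k in atTop, ∀ x, F x = 0 → ∃ a, f k a = 0 ∧ dist x a < η := by
  obtain ⟨c, hc, hsmall⟩ := hnear η hη
  filter_upwards [Metric.tendstoUniformly_iff.1 hF c hc] with k hk x hx
  exact hsmall k x (by simpa [hx] using hk x)

theorem SmallOnlyNearZeros.exists_zero_near_zero (hnear : SmallOnlyNearZeros f)
    (hF : TendstoUniformly f F atTop) (hη : 0 < η) :
    ∃ K, ∀ k ≥ K, ∀ l ≥ K, ∀ a, f k a = 0 → ∃ b, f l b = 0 ∧ dist a b < η := by
  obtain ⟨c, hc, hsmall⟩ := hnear η hη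
  obtain ⟨K, hK⟩ := Metric.uniformCauchySeqOn_iff.1
    (tendstoUniformlyOn_univ.2 hF).uniformCauchySeqOn c hc
  exact ⟨K, fun k hk l hl a ha =>
    hsmall l a (by simpa [ha] using hK k hk l hl a (Set.mem_univ a))⟩

variable [IsUltrametricDist X]

theorem SmallOnlyNearZeros.pairwise_le_dist_zeros_limit (hnear : SmallOnlyNearZeros f)
    (hF : TendstoUniformly f F atTop)
    (hsep : ∀ k, {x | f k x = 0}.Pairwise fun a b => δ ≤ dist a b) :
    {x | F x = 0}.Pairwise fun a b => δ ≤ dist a b := by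
  intro x hx y hy hxy
  by_contra! hlt
  obtain ⟨k, hk⟩ := (hnear.eventually_exists_zero_near hF (dist_pos.2 hxy)).exists
  obtain ⟨a, ha, hxa⟩ := hk x hx
  obtain ⟨b, hb, hyb⟩ := hk y hy
  rw [dist_comm] at hxa
  have hay : dist a y ≤ dist x y := (dist_triangle_max a x y).trans (max_le hxa.le le_rfl)
  have hab : dist a b < δ :=
    (dist_triangle_max a y b).trans_lt (max_lt (hay.trans_lt hlt) (hyb.trans hlt))
  rw [(hsep k).eq ha hb (not_le.2 hab)] at hxa
  exact absurd (dist_triangle_max x b y) (not_le.2 <|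
    max_lt (dist_comm b x ▸ hxa) (dist_comm y b ▸ hyb))

theorem SmallOnlyNearZeros.eventually_exists_zero_limit_near [CompleteSpace X]
    (hnear : SmallOnlyNearZeros f) (hF : TendstoUniformly f F atTop) (hf : ∀ k, Continuous (f k))
    (hsep : ∀ k, {x | f k x = 0}.Pairwise fun a b => δ ≤ dist a b) (hδ : 0 < δ) :
    ∀ᶠ k in atTop, ∀ a, f k a = 0 → ∃ x, F x = 0 ∧ dist a x < δ := by
  obtain ⟨K, hK⟩ := hnear.exists_zero_near_zero hF hδ
  refine eventually_atTop.2 ⟨K, fun k hk a ha => ?_⟩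
  have : Nonempty X := ⟨a⟩
  choose! b hb hab using fun l hl => hK k hk l hl a ha
  have hcauchy : CauchySeq b := by
    refine Metric.cauchySeq_iff'.2 fun η hη => ?_
    obtain ⟨L, hL⟩ := hnear.exists_zero_near_zero hF (lt_min hη hδ)
    refine ⟨max K L, fun l hl => ?_⟩
    have hl : K ≤ l ∧ L ≤ l := max_le_iff.1 hl
    obtain ⟨b', hb', hlt⟩ := hL l hl.2 (max K L) (le_max_right K L) (b l) (hb l hl.1)
    have hnear' : dist b' (b (max K L)) < δ := by
      refine (dist_triangle_max b' (b l) _).trans_lt (max_lt ?_ ?_)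
      · exact dist_comm (b l) b' ▸ hlt.trans_le (min_le_right η δ)
      · exact (dist_triangle_max (b l) a _).trans_lt
          (max_lt (dist_comm a (b l) ▸ hab l hl.1) (hab _ (le_max_left K L)))
    rw [← (hsep _).eq hb' (hb _ (le_max_left K L)) (not_le.2 hnear')]
    exact hlt.trans_le (min_le_left η δ)
  obtain ⟨x, hx⟩ := cauchySeq_tendsto_of_complete hcauchy
  refine ⟨x, ?_, ?_⟩
  · have hFb := hF.tendsto_comp (hF.continuous (Frequently.of_forall hf)).continuousAt hx
    refine tendsto_nhds_unique hFb (tendsto_const_nhds.congr' ?_)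
    filter_upwards [eventually_ge_atTop K] with l hl using (hb l hl).symm
  · rw [dist_comm]
    refine (IsUltrametricDist.isClosed_ball a δ).mem_of_tendsto hx ?_
    filter_upwards [eventually_ge_atTop K] with l hl
    exact Metric.mem_ball'.2 (hab l hl)

theorem SmallOnlyNearZeros.exists_bijOn_zeros [CompleteSpace X]
    (hnear : SmallOnlyNearZeros f) (hF : TendstoUniformly f F atTop) (hf : ∀ k, Continuous (f k))
    (hsep : ∀ k, {x | f k x = 0}.Pairwise fun a b => δ ≤ dist a b) (hδ : 0 < δ) :
    ∃ k, ∃ g : X → X, Set.BijOn g {x | f k x = 0} {x | F x = 0} ∧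
      (∀ a, f k a = 0 → ∀ b, f k b = 0 → dist (g a) (g b) = dist a b) ∧
      ∀ a, f k a = 0 → F a = 0 → g a = a := by
  obtain ⟨k, hto, hfrom⟩ := ((hnear.eventually_exists_zero_limit_near hF hf hsep hδ).and
    (hnear.eventually_exists_zero_near hF hδ)).exists
  exact ⟨k, exists_bijOn_dist_eq_of_separated (hsep k)
    (hnear.pairwise_le_dist_zeros_limit hF hsep) hto hfrom⟩

end UniformLimits

section Order

theorem lt_of_unimodal {α : Type*} [Preorder α] {f : ℕ → α} {k : ℕ}
    (hinc : ∀ i < k, f i < f (i + 1)) (hk : f (k + 1) < f k) (hdec : ∀ i ≥ k, f (i + 1) ≤ f i)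
    {i : ℕ} (hi : i ≠ k) : f i < f k := by
  rcases hi.lt_or_gt with hlt | hgt
  · exact strictMonoOn_Iic_of_lt_succ (by simpa using hinc) (Set.mem_Iic.2 hlt.le)
      Set.self_mem_Iic hlt
  · exact (antitoneOn_nat_Ici_of_succ_le hdec (Set.mem_Ici.2 k.le_succ) (Set.mem_Ici.2 hgt.le)
      (Nat.succ_le_of_lt hgt)).trans_lt hk

variable {α β : Type*} [LinearOrder β] {S : Set α}

theorem exists_equivFin_le_iff (hS : S.Finite) (d : α → β) :
    ∃ w : Fin S.ncard ≃ S, ∀ a i, d (w i) ≤ a ↔ i < {x ∈ S | d x ≤ a}.ncard := by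
  classical
  have := hS.to_subtype
  let e : Fin S.ncard ≃ S := (Finite.equivFinOfCardEq rfl).symm
  let w : Fin S.ncard ≃ S := (Tuple.sort fun i => d (e i)).trans e
  have hmono : Monotone fun i => d (w i) := Tuple.monotone_sort fun i => d (e i)
  refine ⟨w, fun a i => ?_⟩
  have hcount : {x ∈ S | d x ≤ a}.ncard = Finset.card {i | d (w i) ≤ a} := by
    rw [← Set.ncard_coe_finset, ← Set.ncard_image_of_injective _
      (Subtype.val_injective.comp w.injective)]
    congr 1
    ext x
    constructor
    · rintro ⟨hxS, hx⟩
      exact ⟨w.symm ⟨x, hxS⟩, by simpa using hx, by simp⟩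
    · rintro ⟨i, hi, rfl⟩
      exact ⟨(w i).2, by simpa using hi⟩
  rw [hcount, Tuple.lt_card_le_iff_apply_le_of_monotone hmono]

theorem exists_enumeration_of_gaps [Nonempty α] (hS : S.Finite) (d : α → β) :
    ∃ v : ℕ → α, Set.BijOn v (Set.Icc 1 S.ncard) S ∧
      ∀ a b, (∀ x ∈ S, a < d x → b ≤ d x) → ∀ i, {x ∈ S | d x ≤ a}.ncard < i →
        i ≤ {x ∈ S | d x ≤ b}.ncard → d (v i) = b := by
  obtain ⟨w, hw⟩ := exists_equivFin_le_iff hS d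
  let v : ℕ → α := fun i =>
    if h : i - 1 < S.ncard then w ⟨i - 1, h⟩ else Classical.arbitrary α
  have hv : ∀ i : Fin S.ncard, v (i + 1) = w i := fun i => dif_pos i.2
  have hsucc : ∀ i ∈ Set.Icc 1 S.ncard, ∃ j : Fin S.ncard, i = j + 1 := fun i hi =>
    ⟨⟨i - 1, Nat.sub_one_lt_of_le hi.1 hi.2⟩, (Nat.sub_add_cancel hi.1).symm⟩
  refine ⟨v, ⟨fun i hi => ?_, fun i hi j hj hij => ?_, fun x hx => ?_⟩,
    fun a b hgap i hai hib => ?_⟩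
  · obtain ⟨i, rfl⟩ := hsucc i hi
    exact hv i ▸ (w i).2
  · obtain ⟨i, rfl⟩ := hsucc i hi
    obtain ⟨j, rfl⟩ := hsucc j hj
    rw [hv, hv, Subtype.coe_inj, w.apply_eq_iff_eq] at hij
    rw [hij]
  · exact ⟨w.symm ⟨x, hx⟩ + 1, ⟨Nat.succ_pos _, (w.symm ⟨x, hx⟩).2⟩,
      by rw [hv, w.apply_symm_apply]⟩
  · have hiS : i ≤ S.ncard := hib.trans (Set.ncard_le_ncard (Set.sep_subset S _) hS)
    obtain ⟨i, rfl⟩ := hsucc i ⟨Nat.one_le_of_lt hai, hiS⟩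
    rw [hv]
    refine le_antisymm ((hw b i).2 hib) (hgap _ (w i).2 (lt_of_not_ge fun hle => ?_))
    exact absurd ((hw a i).1 hle) (Nat.lt_succ_iff.1 hai).not_gt

end Order

section Wronskian

open Polynomial

/-- The exponent `1 + q + ⋯ + q ^ (k - 1)` of the leading monomial of `m_k`. -/
def ghExp (q k : ℕ) : ℕ := ∑ i ∈ Finset.range k, q ^ i

theorem ghExp_zero (q : ℕ) : ghExp q 0 = 0 := rfl

theorem ghExp_succ (q k : ℕ) : ghExp q (k + 1) = ghExp q k + q ^ k := Finset.sum_range_succ _ _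

variable {𝕜 : Type*} [Field 𝕜]

theorem ghm_add_two (π : 𝕜) (q k : ℕ) (u : 𝕜) :
    ghm π q (k + 2) u = u ^ q ^ (k + 1) / π * ghm π q (k + 1) u + 1 / π * ghm π q k u := by
  induction k using Nat.twoStepInduction generalizing u with
  | zero =>
    simp only [ghm, zero_add, pow_one, mul_one]
    ring
  | one =>
    simp only [ghm]
    ring
  | more k ih₁ ih₂ =>
    have hdef : ∀ j, ghm π q (j + 2) u =
      u / π * ghm π q (j + 1) (u ^ q) + 1 / π * ghm π q j (u ^ q ^ 2) := fun _ => rfl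
    rw [hdef (k + 2), ih₂ (u ^ q), ih₁ (u ^ q ^ 2), hdef (k + 1), hdef k]
    ring

/-- The coefficient `m_k` of the quasi-logarithm as a polynomial; the recursion is that of
`ghm_add_two`. -/
noncomputable def ghmPoly (π : 𝕜) (q : ℕ) : ℕ → 𝕜[X]
  | 0 => 1
  | 1 => C (1 / π) * X
  | k + 2 => C (1 / π) * X ^ q ^ (k + 1) * ghmPoly π q (k + 1) + C (1 / π) * ghmPoly π q k

theorem eval_ghmPoly (π : 𝕜) (q k : ℕ) (u : 𝕜) : (ghmPoly π q k).eval u = ghm π q k u := by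
  induction k using Nat.twoStepInduction with
  | zero => simp [ghmPoly, ghm]
  | one =>
    simp only [ghmPoly, ghm, eval_mul, eval_C, eval_X]
    ring
  | more k ih₁ ih₂ =>
    rw [ghm_add_two, ghmPoly]
    simp only [eval_add, eval_mul, eval_C, eval_pow, eval_X, ih₁, ih₂]
    ring

/-- The normalized Wronskian of `m_n` and `m_{n+1}`, as a polynomial in its second variable. For
even `n` it converges to `φ₀(w) φ₁(X) - φ₁(w) φ₀(X)`. -/
noncomputable def ghWronskian (π : 𝕜) (q n : ℕ) (w : 𝕜) : 𝕜[X] :=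
  C ((-π) ^ n * π) * (C (ghm π q n w) * ghmPoly π q (n + 1) - C (ghm π q (n + 1) w) * ghmPoly π q n)

/-- The terms of the expansion `eval_ghWronskian_eq_sum` of the normalized Wronskian. -/
noncomputable def ghTerm (π : 𝕜) (q : ℕ) (w u : 𝕜) (i : ℕ) : 𝕜 :=
  (-π) ^ i * (u ^ q ^ i - w ^ q ^ i) * ghm π q i u * ghm π q i w

theorem eval_ghWronskian (π : 𝕜) (q n : ℕ) (w u : 𝕜) :
    (ghWronskian π q n w).eval u = (-π) ^ n * π *
      (ghm π q n w * ghm π q (n + 1) u - ghm π q (n + 1) w * ghm π q n u) := by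
  simp only [ghWronskian, eval_mul, eval_sub, eval_C, eval_ghmPoly]

theorem eval_ghWronskian_self (π : 𝕜) (q n : ℕ) (w : 𝕜) : (ghWronskian π q n w).eval w = 0 := by
  rw [eval_ghWronskian, mul_comm (ghm π q n w), sub_self, mul_zero]

theorem eval_ghWronskian_eq_sum {π : 𝕜} (hπ : π ≠ 0) (q n : ℕ) (w u : 𝕜) :
    (ghWronskian π q n w).eval u = ∑ i ∈ Finset.range (n + 1), ghTerm π q w u i := by
  induction n with
  | zero =>
    rw [eval_ghWronskian, Finset.sum_range_one]
    simp only [ghTerm, ghm]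
    field_simp
    ring
  | succ n ih =>
    rw [Finset.sum_range_succ, ← ih, eval_ghWronskian, eval_ghWronskian, ghTerm,
      ghm_add_two π q n u, ghm_add_two π q n w]
    field_simp
    ring

theorem exists_ghWronskian_eq_C_mul {π : 𝕜} {q n : ℕ} {w a : 𝕜} (hπ : π ≠ 0)
    (ha : ghWronskian π q n a ≠ 0) (hroot : (ghWronskian π q n w).eval a = 0) :
    ∃ c, ghWronskian π q n w = C c * ghWronskian π q n a := by
  have hprop : ghm π q n w * ghm π q (n + 1) a = ghm π q (n + 1) w * ghm π q n a := by
    rw [eval_ghWronskian, mul_eq_zero, sub_eq_zero] at hroot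
    exact hroot.resolve_left (mul_ne_zero (pow_ne_zero _ (neg_ne_zero.2 hπ)) hπ)
  obtain ⟨c, h₁, h₂⟩ : ∃ c, ghm π q n w = c * ghm π q n a ∧
      ghm π q (n + 1) w = c * ghm π q (n + 1) a := by
    by_cases h : ghm π q n a = 0
    · have h' : ghm π q (n + 1) a ≠ 0 := fun h' => ha (by simp [ghWronskian, h, h'])
      refine ⟨ghm π q (n + 1) w / ghm π q (n + 1) a, ?_, by field_simp⟩
      field_simp
      exact hprop
    · refine ⟨ghm π q n w / ghm π q n a, by field_simp, ?_⟩
      field_simp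
      exact hprop.symm
  refine ⟨c, ?_⟩
  simp only [ghWronskian, h₁, h₂, C_mul]
  ring

end Wronskian

section PowDist

variable {𝕜 : Type*} [NormedField 𝕜] {q : ℕ} {w u : 𝕜} {r : ℝ}

/-- The distance between the `q ^ i`-th powers of two points. -/
def powDist (q : ℕ) (w u : 𝕜) (i : ℕ) : ℝ := ‖u ^ q ^ i - w ^ q ^ i‖

theorem powDist_nonneg (q : ℕ) (w u : 𝕜) (i : ℕ) : 0 ≤ powDist q w u i := norm_nonneg _

theorem powDist_zero (q : ℕ) (w u : 𝕜) : powDist q w u 0 = ‖u - w‖ := by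
  rw [powDist, pow_zero, pow_one, pow_one]

variable [IsUltrametricDist 𝕜]

theorem powDist_eq_max_pow (hq : q ≠ 0) (h : ‖u‖ ≠ ‖w‖) (i : ℕ) :
    powDist q w u i = max ‖u‖ ‖w‖ ^ q ^ i := by
  have hqi : q ^ i ≠ 0 := pow_ne_zero i hq
  rw [powDist, norm_sub_eq_max_of_norm_ne_norm, norm_pow, norm_pow]
  · exact ((pow_left_strictMonoOn₀ hqi).monotoneOn.map_max (norm_nonneg u) (norm_nonneg w)).symm
  · rwa [norm_pow, norm_pow, Ne, pow_left_inj₀ (norm_nonneg u) (norm_nonneg w) hqi]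

theorem powDist_succ_le (hq : 2 ≤ q) (hu : ‖u‖ ≤ r) (hw : ‖w‖ ≤ r) (hr : r ≤ 1) (i : ℕ) :
    powDist q w u (i + 1) ≤ r * powDist q w u i := by
  have hr₀ : 0 ≤ r := (norm_nonneg u).trans hu
  have hpow : ∀ x : 𝕜, ‖x‖ ≤ r → ‖x ^ q ^ i‖ ≤ r := fun x hx => by
    rw [norm_pow]
    exact (pow_le_of_le_one (norm_nonneg x) (hx.trans hr) (by positivity)).trans hx
  obtain ⟨n, rfl⟩ := Nat.exists_eq_add_of_le' hq
  calc powDist (n + 2) w u (i + 1)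
      = ‖(u ^ (n + 2) ^ i) ^ (n + 1 + 1) - (w ^ (n + 2) ^ i) ^ (n + 1 + 1)‖ := by
        rw [powDist, pow_succ (n + 2), pow_mul, pow_mul]
    _ ≤ r ^ (n + 1) * powDist (n + 2) w u i :=
        norm_pow_succ_sub_pow_succ_le (hpow u hu) (hpow w hw) _
    _ ≤ r * powDist (n + 2) w u i := by
        gcongr
        · exact powDist_nonneg _ _ _ _
        · exact pow_le_of_le_one hr₀ hr n.succ_ne_zero

theorem powDist_add_le (hq : 2 ≤ q) (hu : ‖u‖ ≤ r) (hw : ‖w‖ ≤ r) (hr : r ≤ 1) (i k : ℕ) :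
    powDist q w u (i + k) ≤ r ^ k * powDist q w u i := by
  induction k with
  | zero => simp
  | succ k ih =>
    have hr₀ : 0 ≤ r := (norm_nonneg u).trans hu
    calc powDist q w u (i + k + 1) ≤ r * powDist q w u (i + k) := powDist_succ_le hq hu hw hr _
      _ ≤ r * (r ^ k * powDist q w u i) := by gcongr
      _ = r ^ (k + 1) * powDist q w u i := by ring

end PowDist

section Levels

/-- `t` lies in the closed annulus between the critical radii of indices `s - 1` and `s`, where the
critical radius of index `i` is `ϖ ^ (1 / (q ^ i + q ^ (i + 1)))` and `ϖ` stands for `‖π‖` (for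
`s = 0` there is no lower bound). On this annulus the leading monomial of `m_k` dominates for
`k ≤ s`. -/
structure IsGHLevel (ϖ : ℝ) (q s : ℕ) (t : ℝ) : Prop where
  two_le : 2 ≤ q
  pos : 0 < t
  lt_one : t < 1
  le_pow : ∀ i < s, ϖ ≤ t ^ (q ^ i + q ^ (i + 1))
  pow_le : t ^ (q ^ s + q ^ (s + 1)) ≤ ϖ

variable {𝕜 : Type*} [NormedField 𝕜] {π u w : 𝕜} {q s : ℕ}

theorem ghm_add_two_mul_pow (hπ : π ≠ 0) (q k : ℕ) (u : 𝕜) :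
    ghm π q (k + 2) u * π ^ (k + 2) =
      u ^ q ^ (k + 1) * (ghm π q (k + 1) u * π ^ (k + 1)) + π * (ghm π q k u * π ^ k) := by
  rw [ghm_add_two]
  field_simp
  ring

variable [IsUltrametricDist 𝕜]

theorem norm_ghm_add_two_mul_pow_le (hπ : 0 < ‖π‖) (q k : ℕ) (u : 𝕜) :
    ‖ghm π q (k + 2) u * π ^ (k + 2)‖ ≤
      max (‖u‖ ^ q ^ (k + 1) * ‖ghm π q (k + 1) u * π ^ (k + 1)‖)
        (‖π‖ * ‖ghm π q k u * π ^ k‖) := by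
  rw [ghm_add_two_mul_pow (norm_pos_iff.1 hπ), ← norm_pow, ← norm_mul, ← norm_mul π]
  exact IsUltrametricDist.norm_add_le_max _ _

namespace IsGHLevel

theorem pos_left {ϖ t : ℝ} (h : IsGHLevel ϖ q s t) : 0 < ϖ :=
  (pow_pos h.pos _).trans_le h.pow_le

theorem lt_pow {ϖ t : ℝ} {i : ℕ} (h : IsGHLevel ϖ q s t) (hi : i + 1 < s) :
    ϖ < t ^ (q ^ i + q ^ (i + 1)) := by
  refine (h.le_pow _ hi).trans_lt (pow_lt_pow_right_of_lt_one₀ h.pos h.lt_one ?_)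
  have hlt : ∀ k, q ^ k < q ^ (k + 1) := fun k => Nat.pow_lt_pow_right h.two_le k.lt_succ_self
  exact Nat.add_lt_add (hlt i) (hlt (i + 1))

theorem norm_ghm_mul_pow_eq (h : IsGHLevel ‖π‖ q s ‖u‖) {k : ℕ} (hk : k ≤ s) :
    ‖ghm π q k u * π ^ k‖ = ‖u‖ ^ ghExp q k := by
  have hπ := norm_pos_iff.1 h.pos_left
  induction k using Nat.twoStepInduction with
  | zero => simp [ghm, ghExp_zero]
  | one => simp [ghm, ghExp_succ, ghExp_zero, hπ]
  | more k ih₁ ih₂ =>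
    have hlead : ‖u ^ q ^ (k + 1) * (ghm π q (k + 1) u * π ^ (k + 1))‖ = ‖u‖ ^ ghExp q (k + 2) := by
      rw [norm_mul, ih₂ (by omega), norm_pow, ghExp_succ q (k + 1),
        pow_add _ (ghExp q (k + 1)), mul_comm]
    have hlt : ‖π * (ghm π q k u * π ^ k)‖ < ‖u‖ ^ ghExp q (k + 2) := by
      have := pow_pos h.pos (ghExp q k)
      calc ‖π * (ghm π q k u * π ^ k)‖ = ‖π‖ * ‖u‖ ^ ghExp q k := by rw [norm_mul, ih₁ (by omega)]
        _ < ‖u‖ ^ (q ^ k + q ^ (k + 1)) * ‖u‖ ^ ghExp q k := by gcongr; exact h.lt_pow (by omega)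
        _ = ‖u‖ ^ ghExp q (k + 2) := by rw [ghExp_succ, ghExp_succ]; ring
    rw [ghm_add_two_mul_pow hπ, IsUltrametricDist.norm_add_eq_max_of_norm_ne_norm
      (by rw [hlead]; exact hlt.ne'), hlead, max_eq_left hlt.le]

theorem norm_ghm_mul_pow_succ_le (h : IsGHLevel ‖π‖ q s ‖u‖) :
    ‖ghm π q (s + 1) u * π ^ (s + 1)‖ ≤ ‖u‖ ^ ghExp q (s + 1) := by
  cases s with
  | zero => simp [ghm, ghExp_succ, ghExp_zero, norm_pos_iff.1 h.pos_left]
  | succ k =>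
    refine (norm_ghm_add_two_mul_pow_le h.pos_left q k u).trans (max_le ?_ ?_)
    · rw [h.norm_ghm_mul_pow_eq le_rfl, ghExp_succ q (k + 1), pow_add _ (ghExp q (k + 1)),
        mul_comm]
    · calc ‖π‖ * ‖ghm π q k u * π ^ k‖ ≤ ‖u‖ ^ (q ^ k + q ^ (k + 1)) * ‖u‖ ^ ghExp q k := by
            rw [h.norm_ghm_mul_pow_eq k.le_succ]
            gcongr
            exact h.le_pow k k.lt_succ_self
        _ = ‖u‖ ^ ghExp q (k + 2) := by rw [ghExp_succ, ghExp_succ]; ring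

theorem norm_ghm_mul_pow_add_le (h : IsGHLevel ‖π‖ q s ‖u‖) (l : ℕ) :
    ‖ghm π q (s + 2 * l) u * π ^ (s + 2 * l)‖ ≤ ‖π‖ ^ l * ‖u‖ ^ ghExp q s ∧
      ‖ghm π q (s + 2 * l + 1) u * π ^ (s + 2 * l + 1)‖ ≤ ‖π‖ ^ l * ‖u‖ ^ ghExp q (s + 1) := by
  induction l with
  | zero =>
    simp only [mul_zero, add_zero, pow_zero, one_mul]
    exact ⟨(h.norm_ghm_mul_pow_eq le_rfl).le, h.norm_ghm_mul_pow_succ_le⟩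
  | succ l ih =>
    have hpow : ∀ {i j : ℕ}, i ≤ j → q ^ i ≤ q ^ j :=
      Nat.pow_le_pow_right (by have := h.two_le; omega)
    have heven : ‖ghm π q (s + 2 * l + 2) u * π ^ (s + 2 * l + 2)‖ ≤
        ‖π‖ ^ (l + 1) * ‖u‖ ^ ghExp q s := by
      refine (norm_ghm_add_two_mul_pow_le h.pos_left q _ u).trans (max_le ?_ ?_)
      · calc ‖u‖ ^ q ^ (s + 2 * l + 1) * ‖ghm π q (s + 2 * l + 1) u * π ^ (s + 2 * l + 1)‖
            ≤ ‖u‖ ^ q ^ (s + 2 * l + 1) * (‖π‖ ^ l * ‖u‖ ^ ghExp q (s + 1)) := by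
              gcongr; exact ih.2
          _ = ‖u‖ ^ (q ^ s + q ^ (s + 2 * l + 1)) * (‖π‖ ^ l * ‖u‖ ^ ghExp q s) := by
              rw [ghExp_succ]; ring
          _ ≤ ‖π‖ * (‖π‖ ^ l * ‖u‖ ^ ghExp q s) := by
              gcongr
              refine (pow_le_pow_of_le_one h.pos.le h.lt_one.le ?_).trans h.pow_le
              gcongr 1
              exact hpow (by omega)
          _ = _ := by ring
      · exact (mul_le_mul_of_nonneg_left ih.1 (norm_nonneg π)).trans_eq (by ring)
    refine ⟨heven, (norm_ghm_add_two_mul_pow_le h.pos_left q _ u).trans (max_le ?_ ?_)⟩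
    · calc ‖u‖ ^ q ^ (s + 2 * l + 2) * ‖ghm π q (s + 2 * l + 2) u * π ^ (s + 2 * l + 2)‖
          ≤ ‖u‖ ^ q ^ (s + 2 * l + 2) * (‖π‖ ^ (l + 1) * ‖u‖ ^ ghExp q s) := by gcongr
        _ ≤ ‖u‖ ^ q ^ s * (‖π‖ ^ (l + 1) * ‖u‖ ^ ghExp q s) := by
            gcongr ?_ * _
            exact pow_le_pow_of_le_one h.pos.le h.lt_one.le (hpow (by omega))
        _ = _ := by rw [ghExp_succ]; ring
    · exact (mul_le_mul_of_nonneg_left ih.2 (norm_nonneg π)).trans_eq (by ring)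

theorem norm_ghm_mul_pow_le_one (h : IsGHLevel ‖π‖ q s ‖u‖) (hπ : ‖π‖ ≤ 1) {i m : ℕ}
    (him : i + s ≤ 2 * m) : ‖ghm π q i u * π ^ m‖ ≤ 1 := by
  have hu : ∀ n, ‖u‖ ^ n ≤ 1 := fun n => pow_le_one₀ h.pos.le h.lt_one.le
  have hcancel : ∀ {k l : ℕ}, ‖ghm π q k u * π ^ (k - l + l)‖ ≤ ‖π‖ ^ l → k - l ≤ m →
      ‖ghm π q k u * π ^ m‖ ≤ 1 := fun {k l} hle hm => by
    have hl := pow_pos h.pos_left l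
    rw [pow_add, ← mul_assoc, norm_mul, norm_pow π l] at hle
    refine le_trans ?_ ((mul_le_iff_le_one_left hl).1 hle)
    rw [norm_mul, norm_mul, norm_pow, norm_pow]
    gcongr ?_ * ?_
    exact pow_le_pow_of_le_one (norm_nonneg π) hπ hm
  rcases le_or_gt i s with hi | hi
  · refine hcancel (l := 0) ?_ (by omega)
    simpa using (h.norm_ghm_mul_pow_eq hi).trans_le (hu _)
  · obtain ⟨l, rfl | rfl⟩ : ∃ l, i = s + 2 * l ∨ i = s + 2 * l + 1 := ⟨(i - s) / 2, by omega⟩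
    · refine hcancel (l := l) ?_ (by omega)
      rw [Nat.sub_add_cancel (by omega)]
      exact (h.norm_ghm_mul_pow_add_le l).1.trans
        (mul_le_of_le_one_right (by positivity) (hu _))
    · refine hcancel (l := l) ?_ (by omega)
      rw [Nat.sub_add_cancel (by omega)]
      exact (h.norm_ghm_mul_pow_add_le l).2.trans
        (mul_le_of_le_one_right (by positivity) (hu _))

theorem norm_ghTerm_mul_pow_le (hu : IsGHLevel ‖π‖ q s ‖u‖) (hw : IsGHLevel ‖π‖ q s ‖w‖)
    (hπ : ‖π‖ ≤ 1) (i : ℕ) : ‖ghTerm π q w u i‖ * ‖π‖ ^ (s + 1) ≤ powDist q w u i := by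
  obtain ⟨m, hm₁, hm₂⟩ : ∃ m, i + s ≤ 2 * m ∧ 2 * m ≤ i + (s + 1) := ⟨(i + s + 1) / 2, by omega⟩
  have hbound : ‖ghm π q i u * π ^ m‖ * ‖ghm π q i w * π ^ m‖ ≤ 1 :=
    mul_le_one₀ (hu.norm_ghm_mul_pow_le_one hπ hm₁) (norm_nonneg _)
      (hw.norm_ghm_mul_pow_le_one hπ hm₁)
  calc ‖ghTerm π q w u i‖ * ‖π‖ ^ (s + 1)
      = powDist q w u i * (‖ghm π q i u‖ * ‖ghm π q i w‖ * ‖π‖ ^ (i + (s + 1))) := by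
        simp only [ghTerm, powDist, norm_mul, norm_pow, norm_neg]; ring
    _ ≤ powDist q w u i * (‖ghm π q i u‖ * ‖ghm π q i w‖ * ‖π‖ ^ (2 * m)) := by
        have := powDist_nonneg q w u i
        gcongr _ * (_ * ?_)
        exact pow_le_pow_of_le_one (norm_nonneg π) hπ hm₂
    _ = powDist q w u i * (‖ghm π q i u * π ^ m‖ * ‖ghm π q i w * π ^ m‖) := by
        simp only [norm_mul, norm_pow]; ring
    _ ≤ powDist q w u i := mul_le_of_le_one_right (powDist_nonneg q w u i) hbound

end IsGHLevel

end Levels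

section Dominance

variable {𝕜 : Type*} [NormedField 𝕜] {π u w : 𝕜} {q s : ℕ}

/-- The norm of the `i`-th term of the normalized Wronskian when the leading monomials of `m_i(u)`
and `m_i(w)` dominate. -/
noncomputable def ghTermBound (π : 𝕜) (q : ℕ) (w u : 𝕜) (i : ℕ) : ℝ :=
  (‖u‖ * ‖w‖) ^ ghExp q i * powDist q w u i / ‖π‖ ^ i

theorem norm_ghTerm (hπ : π ≠ 0) (q : ℕ) (w u : 𝕜) (i : ℕ) :
    ‖ghTerm π q w u i‖ =
      ‖ghm π q i u * π ^ i‖ * ‖ghm π q i w * π ^ i‖ * powDist q w u i / ‖π‖ ^ i := by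
  have := norm_pos_iff.2 hπ
  simp only [ghTerm, powDist, norm_mul, norm_pow, norm_neg]
  field_simp

theorem exists_ghTermBound_eq_mul (hπ : π ≠ 0) (hu : u ≠ 0) (hw : w ≠ 0) (q i : ℕ) :
    ∃ c > 0, ghTermBound π q w u i = c * (‖π‖ * powDist q w u i) ∧
      ghTermBound π q w u (i + 1) = c * ((‖u‖ * ‖w‖) ^ q ^ i * powDist q w u (i + 1)) := by
  have := norm_pos_iff.2 hπ
  have := norm_pos_iff.2 hu
  have := norm_pos_iff.2 hw
  refine ⟨(‖u‖ * ‖w‖) ^ ghExp q i / ‖π‖ ^ (i + 1), by positivity, ?_, ?_⟩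
  · rw [ghTermBound]
    field_simp
    ring
  · rw [ghTermBound, ghExp_succ, pow_add]
    ring

theorem ghTermBound_lt_of_unimodal (hπ : π ≠ 0) (hu : u ≠ 0) (hw : w ≠ 0) {j : ℕ}
    (hinc : ∀ i < j, ‖π‖ * powDist q w u i < (‖u‖ * ‖w‖) ^ q ^ i * powDist q w u (i + 1))
    (hj : (‖u‖ * ‖w‖) ^ q ^ j * powDist q w u (j + 1) < ‖π‖ * powDist q w u j)
    (hdec : ∀ i ≥ j, (‖u‖ * ‖w‖) ^ q ^ i * powDist q w u (i + 1) ≤ ‖π‖ * powDist q w u i)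
    {i : ℕ} (hi : i ≠ j) : ghTermBound π q w u i < ghTermBound π q w u j := by
  refine lt_of_unimodal (fun k hk => ?_) ?_ (fun k hk => ?_) hi
  · obtain ⟨c, hc, h₁, h₂⟩ := exists_ghTermBound_eq_mul hπ hu hw q k
    rw [h₁, h₂]
    exact mul_lt_mul_of_pos_left (hinc k hk) hc
  · obtain ⟨c, hc, h₁, h₂⟩ := exists_ghTermBound_eq_mul hπ hu hw q j
    rw [h₁, h₂]
    exact mul_lt_mul_of_pos_left hj hc
  · obtain ⟨c, hc, h₁, h₂⟩ := exists_ghTermBound_eq_mul hπ hu hw q k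
    rw [h₁, h₂]
    exact mul_le_mul_of_nonneg_left (hdec k hk) hc.le

variable [IsUltrametricDist 𝕜]

theorem norm_ghTerm_le_of_norm_ghm_le (hπ : 0 < ‖π‖) (hq : 2 ≤ q) (hu₁ : ‖u‖ ≤ 1) (hw₁ : ‖w‖ ≤ 1)
    {i l : ℕ}
    (hu : ‖ghm π q (i + 2 * l) u * π ^ (i + 2 * l)‖ ≤ ‖π‖ ^ l * ‖u‖ ^ ghExp q i)
    (hw : ‖ghm π q (i + 2 * l) w * π ^ (i + 2 * l)‖ ≤ ‖π‖ ^ l * ‖w‖ ^ ghExp q i) :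
    ‖ghTerm π q w u (i + 2 * l)‖ ≤ max ‖u‖ ‖w‖ ^ (2 * l) * ghTermBound π q w u i := by
  have hdist := powDist_add_le hq (le_max_left ‖u‖ ‖w‖) (le_max_right ‖u‖ ‖w‖)
    (max_le hu₁ hw₁) i (2 * l)
  have := powDist_nonneg q w u (i + 2 * l)
  calc ‖ghTerm π q w u (i + 2 * l)‖
      ≤ ‖π‖ ^ l * ‖u‖ ^ ghExp q i * (‖π‖ ^ l * ‖w‖ ^ ghExp q i) *
          (max ‖u‖ ‖w‖ ^ (2 * l) * powDist q w u i) / ‖π‖ ^ (i + 2 * l) := by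
        rw [norm_ghTerm (norm_pos_iff.1 hπ)]
        gcongr
    _ = max ‖u‖ ‖w‖ ^ (2 * l) * ghTermBound π q w u i := by
        rw [ghTermBound, mul_pow]
        field_simp
        ring

namespace IsGHLevel

theorem norm_ghTerm_eq (hu : IsGHLevel ‖π‖ q s ‖u‖) (hw : IsGHLevel ‖π‖ q s ‖w‖) {i : ℕ}
    (hi : i ≤ s) : ‖ghTerm π q w u i‖ = ghTermBound π q w u i := by
  rw [norm_ghTerm (norm_pos_iff.1 hu.pos_left), hu.norm_ghm_mul_pow_eq hi,
    hw.norm_ghm_mul_pow_eq hi, ← mul_pow, ghTermBound]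

theorem norm_ghTerm_lt_of_dominant (hu : IsGHLevel ‖π‖ q s ‖u‖) (hw : IsGHLevel ‖π‖ q s ‖w‖)
    {i j : ℕ} (hj : j ≤ s) (hdom : ∀ i ≠ j, ghTermBound π q w u i < ghTermBound π q w u j)
    (hij : i ≠ j) : ‖ghTerm π q w u i‖ < ghTermBound π q w u j := by
  have hle : ∀ k, ghTermBound π q w u k ≤ ghTermBound π q w u j := fun k =>
    (eq_or_ne k j).elim (fun h => h ▸ le_rfl) fun h => (hdom k h).le
  have hpos : 0 < ghTermBound π q w u j := by
    refine lt_of_le_of_lt ?_ (hdom (j + 1) j.succ_ne_self)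
    have := powDist_nonneg q w u (j + 1)
    rw [ghTermBound]
    positivity
  have hmax : max ‖u‖ ‖w‖ < 1 := max_lt hu.lt_one hw.lt_one
  have hpow : ∀ l ≠ 0, max ‖u‖ ‖w‖ ^ (2 * l) < 1 := fun l hl =>
    pow_lt_one₀ (by positivity) hmax (by omega)
  rcases le_or_gt i s with hi | hi
  · exact (hu.norm_ghTerm_eq hw hi).trans_lt (hdom i hij)
  obtain ⟨l, rfl | rfl⟩ : ∃ l, i = s + 2 * l ∨ i = s + 1 + 2 * l := ⟨(i - s) / 2, by omega⟩
  · refine (norm_ghTerm_le_of_norm_ghm_le hu.pos_left hu.two_le hu.lt_one.le hw.lt_one.le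
      (hu.norm_ghm_mul_pow_add_le l).1 (hw.norm_ghm_mul_pow_add_le l).1).trans_lt ?_
    calc _ ≤ max ‖u‖ ‖w‖ ^ (2 * l) * ghTermBound π q w u j := by gcongr; exact hle s
      _ < _ := mul_lt_of_lt_one_left hpos (hpow l (by omega))
  · refine (norm_ghTerm_le_of_norm_ghm_le hu.pos_left hu.two_le hu.lt_one.le hw.lt_one.le
      ?_ ?_).trans_lt (?_ : max ‖u‖ ‖w‖ ^ (2 * l) * ghTermBound π q w u (s + 1) < _)
    · rw [add_right_comm]; exact (hu.norm_ghm_mul_pow_add_le l).2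
    · rw [add_right_comm]; exact (hw.norm_ghm_mul_pow_add_le l).2
    · exact (mul_le_mul_of_nonneg_right (pow_le_one₀ (by positivity) hmax.le) (by
        have := powDist_nonneg q w u (s + 1); rw [ghTermBound]; positivity)).trans_lt
          ((one_mul _).trans_lt (hdom (s + 1) (by omega)))

theorem norm_eval_ghWronskian (hu : IsGHLevel ‖π‖ q s ‖u‖) (hw : IsGHLevel ‖π‖ q s ‖w‖) {j n : ℕ}
    (hjs : j ≤ s) (hjn : j ≤ n)
    (hinc : ∀ i < j, ‖π‖ * powDist q w u i < (‖u‖ * ‖w‖) ^ q ^ i * powDist q w u (i + 1))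
    (hj : (‖u‖ * ‖w‖) ^ q ^ j * powDist q w u (j + 1) < ‖π‖ * powDist q w u j)
    (hdec : ∀ i ≥ j, (‖u‖ * ‖w‖) ^ q ^ i * powDist q w u (i + 1) ≤ ‖π‖ * powDist q w u i) :
    ‖(ghWronskian π q n w).eval u‖ = ghTermBound π q w u j := by
  have hπ := norm_pos_iff.1 hu.pos_left
  have hdom : ∀ i ≠ j, ghTermBound π q w u i < ghTermBound π q w u j := fun i =>
    ghTermBound_lt_of_unimodal hπ (norm_pos_iff.1 hu.pos) (norm_pos_iff.1 hw.pos) hinc hj hdec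
  rw [eval_ghWronskian_eq_sum hπ, ← hu.norm_ghTerm_eq hw hjs]
  refine IsUltrametricDist.isNonarchimedean_norm.apply_sum_eq_of_lt (fun _ => (norm_neg _).symm)
    (Finset.mem_range.2 (Nat.lt_succ_of_le hjn)) fun i _ hij => ?_
  rw [hu.norm_ghTerm_eq hw hjs]
  exact hu.norm_ghTerm_lt_of_dominant hw hjs hdom hij

theorem pow_lt_mul_pow {ϖ a b : ℝ} (ha : IsGHLevel ϖ q s a) (hab : a < b) {i : ℕ} (hi : i < s) :
    ϖ < a ^ q ^ i * b ^ q ^ (i + 1) := by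
  have := ha.pos
  refine (ha.le_pow i hi).trans_lt ?_
  rw [pow_add]
  gcongr
  exact pow_ne_zero _ (by have := ha.two_le; omega)

theorem mul_pow_lt {ϖ a b : ℝ} (ha : 0 < a) (hb : IsGHLevel ϖ q s b) (hab : a < b) {i : ℕ}
    (hi : s ≤ i) : a ^ q ^ i * b ^ q ^ (i + 1) < ϖ := by
  have hq := hb.two_le
  have := hb.pos
  calc a ^ q ^ i * b ^ q ^ (i + 1) < b ^ q ^ i * b ^ q ^ (i + 1) := by
        gcongr
    _ = b ^ (q ^ i + q ^ (i + 1)) := (pow_add _ _ _).symm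
    _ ≤ b ^ (q ^ s + q ^ (s + 1)) := by
        refine pow_le_pow_of_le_one hb.pos.le hb.lt_one.le (Nat.add_le_add ?_ ?_) <;>
        exact Nat.pow_le_pow_right (by omega) (by omega)
    _ ≤ ϖ := hb.pow_le

theorem norm_eval_ghWronskian_of_norm_ne_norm (hu : IsGHLevel ‖π‖ q s ‖u‖)
    (hw : IsGHLevel ‖π‖ q s ‖w‖) (h : ‖u‖ ≠ ‖w‖) {n : ℕ} (hn : s ≤ n) :
    ‖(ghWronskian π q n w).eval u‖ =
      (‖u‖ * ‖w‖) ^ ghExp q s * max ‖u‖ ‖w‖ ^ q ^ s / ‖π‖ ^ s := by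
  set a := min ‖u‖ ‖w‖
  set b := max ‖u‖ ‖w‖
  have hab : a < b := min_lt_max.2 h
  have hprod : ‖u‖ * ‖w‖ = a * b := (min_mul_max _ _).symm
  have ha : IsGHLevel ‖π‖ q s a := min_rec' _ hu hw
  have hb : IsGHLevel ‖π‖ q s b := max_rec' _ hu hw
  have hdist : ∀ i, powDist q w u i = b ^ q ^ i :=
    powDist_eq_max_pow (by have := hu.two_le; omega) h
  have hpow : ∀ i, (a * b) ^ q ^ i * b ^ q ^ (i + 1) = a ^ q ^ i * b ^ q ^ (i + 1) * b ^ q ^ i :=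
    fun i => by rw [mul_pow]; ring
  have hbpos : ∀ i, 0 < b ^ q ^ i := fun i => pow_pos hb.pos _
  rw [hu.norm_eval_ghWronskian hw le_rfl hn, ghTermBound, hdist]
  all_goals simp only [hdist, hprod, hpow]
  · exact fun i hi => mul_lt_mul_of_pos_right (ha.pow_lt_mul_pow hab hi) (hbpos i)
  · exact mul_lt_mul_of_pos_right (hb.mul_pow_lt ha.pos hab le_rfl) (hbpos s)
  · exact fun i hi => mul_le_mul_of_nonneg_right (hb.mul_pow_lt ha.pos hab hi).le (hbpos i).le

end IsGHLevel

end Dominance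

section FiberRadius

/-- The distances from a point of the fibre to the others: `0`, then the radii
`(ϖ γ ^ (-2 q ^ j)) ^ (1 / (q ^ (j + 1) - q ^ j))`, where `ϖ` stands for `‖π‖`. -/
noncomputable def fiberRadius (ϖ : ℝ) (q : ℕ) (γ : ℝ) : ℕ → ℝ
  | 0 => 0
  | j + 1 => (ϖ * γ ^ (-(2 : ℝ) * (q : ℝ) ^ j)) ^ ((1 : ℝ) / ((q : ℝ) ^ (j + 1) - (q : ℝ) ^ j))

variable {ϖ γ d : ℝ} {q : ℕ}

theorem fiberRadius_nonneg (hϖ : 0 ≤ ϖ) (hγ : 0 ≤ γ) (j : ℕ) : 0 ≤ fiberRadius ϖ q γ j := by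
  cases j with
  | zero => exact le_rfl
  | succ j => exact Real.rpow_nonneg (mul_nonneg hϖ (Real.rpow_nonneg hγ _)) _

theorem fiberRadius_succ_pow (hϖ : 0 ≤ ϖ) (hγ : 0 < γ) (hq : 2 ≤ q) (j : ℕ) :
    (γ * γ) ^ q ^ j * fiberRadius ϖ q γ (j + 1) ^ (q ^ (j + 1) - q ^ j) = ϖ := by
  have hlt : q ^ j < q ^ (j + 1) := Nat.pow_lt_pow_right hq j.lt_succ_self
  have hexp : (q : ℝ) ^ (j + 1) - (q : ℝ) ^ j = (q ^ (j + 1) - q ^ j : ℕ) := by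
    push_cast [Nat.cast_sub hlt.le]; ring
  rw [fiberRadius, hexp, one_div, Real.rpow_inv_natCast_pow (by positivity) (by omega),
    neg_mul, Real.rpow_neg hγ.le, show (2 : ℝ) * (q : ℝ) ^ j = (2 * q ^ j : ℕ) by push_cast; rfl,
    Real.rpow_natCast, ← pow_two, ← pow_mul]
  field_simp

theorem mul_pow_lt_iff_lt_fiberRadius (hϖ : 0 ≤ ϖ) (hγ : 0 < γ) (hq : 2 ≤ q) (hd : 0 < d) (j : ℕ) :
    (γ * γ) ^ q ^ j * d ^ q ^ (j + 1) < ϖ * d ^ q ^ j ↔ d < fiberRadius ϖ q γ (j + 1) := by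
  have hlt : q ^ j < q ^ (j + 1) := Nat.pow_lt_pow_right hq j.lt_succ_self
  conv_lhs =>
    rw [← Nat.sub_add_cancel hlt.le, pow_add, ← mul_assoc, ← fiberRadius_succ_pow hϖ hγ hq j]
  rw [mul_lt_mul_iff_left₀ (by positivity), mul_lt_mul_iff_right₀ (by positivity),
    pow_lt_pow_iff_left₀ hd.le (fiberRadius_nonneg hϖ hγ.le _) (by omega)]

theorem lt_mul_pow_iff_fiberRadius_lt (hϖ : 0 ≤ ϖ) (hγ : 0 < γ) (hq : 2 ≤ q) (hd : 0 < d) (j : ℕ) :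
    ϖ * d ^ q ^ j < (γ * γ) ^ q ^ j * d ^ q ^ (j + 1) ↔ fiberRadius ϖ q γ (j + 1) < d := by
  have hlt : q ^ j < q ^ (j + 1) := Nat.pow_lt_pow_right hq j.lt_succ_self
  conv_lhs =>
    rw [← Nat.sub_add_cancel hlt.le, pow_add, ← mul_assoc, ← fiberRadius_succ_pow hϖ hγ hq j]
  rw [mul_lt_mul_iff_left₀ (by positivity), mul_lt_mul_iff_right₀ (by positivity),
    pow_lt_pow_iff_left₀ (fiberRadius_nonneg hϖ hγ.le _) hd.le (by omega)]

theorem fiberRadius_succ_pos (hϖ : 0 < ϖ) (hγ : 0 < γ) (q j : ℕ) :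
    0 < fiberRadius ϖ q γ (j + 1) :=
  Real.rpow_pos_of_pos (mul_pos hϖ (Real.rpow_pos_of_pos hγ _)) _

theorem fiberRadius_strictMono (hϖ : 0 < ϖ) (hϖ₁ : ϖ < 1) (hγ : 0 < γ) (hq : 2 ≤ q) :
    StrictMono (fiberRadius ϖ q γ) := by
  refine strictMono_nat_of_lt_succ fun j => ?_
  cases j with
  | zero => exact fiberRadius_succ_pos hϖ hγ q 0
  | succ j =>
    set ρ := fiberRadius ϖ q γ (j + 1)
    have hρ : 0 < ρ := fiberRadius_succ_pos hϖ hγ q j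
    have hle : (γ * γ) ^ q ^ j * ρ ^ q ^ (j + 1) ≤ ϖ * ρ ^ q ^ j :=
      not_lt.1 ((lt_mul_pow_iff_fiberRadius_lt hϖ.le hγ hq hρ j).not.2 (lt_irrefl ρ))
    refine (mul_pow_lt_iff_lt_fiberRadius hϖ.le hγ hq hρ (j + 1)).1 ?_
    calc (γ * γ) ^ q ^ (j + 1) * ρ ^ q ^ (j + 1 + 1)
        = ((γ * γ) ^ q ^ j * ρ ^ q ^ (j + 1)) ^ q := by
          rw [mul_pow (_ ^ _), ← pow_mul, ← pow_mul, ← pow_succ, ← pow_succ]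
      _ ≤ (ϖ * ρ ^ q ^ j) ^ q := by gcongr
      _ = ϖ ^ q * ρ ^ q ^ (j + 1) := by rw [mul_pow, ← pow_mul, ← pow_succ]
      _ < ϖ * ρ ^ q ^ (j + 1) := by
          gcongr
          exact pow_lt_self_of_lt_one₀ hϖ hϖ₁ hq

end FiberRadius

section CriticalRadius

variable {𝕜 : Type*} [NormedField 𝕜] {π : 𝕜} {q s : ℕ} {γ t : ℝ}

/-- `γ` is the critical radius `‖π‖ ^ (1 / (q ^ s + q ^ (s + 1)))`, and `x ↦ x ^ q` is additive
modulo `π` on the unit ball. -/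
structure IsGHCritical (π : 𝕜) (q s : ℕ) (γ : ℝ) : Prop where
  two_le : 2 ≤ q
  pos : 0 < γ
  lt_one : γ < 1
  norm_eq : ‖π‖ = γ ^ (q ^ s + q ^ (s + 1))
  norm_add_pow_sub_le : ∀ x y : 𝕜, ‖x‖ ≤ 1 → ‖y‖ ≤ 1 →
    ‖(x + y) ^ q - x ^ q - y ^ q‖ ≤ ‖π‖ * ‖y‖

namespace IsGHCritical

theorem norm_pos (h : IsGHCritical π q s γ) : 0 < ‖π‖ := h.norm_eq ▸ pow_pos h.pos _

theorem norm_lt_one (h : IsGHCritical π q s γ) : ‖π‖ < 1 := by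
  have := h.two_le
  exact h.norm_eq ▸ pow_lt_one₀ h.pos.le h.lt_one (by positivity)

theorem norm_le_pow (h : IsGHCritical π q s γ) {i : ℕ} (hi : i ≤ s) :
    ‖π‖ ≤ γ ^ (q ^ i + q ^ (i + 1)) := by
  have hq : 0 < q := by have := h.two_le; omega
  rw [h.norm_eq]
  exact pow_le_pow_of_le_one h.pos.le h.lt_one.le (Nat.add_le_add
    (Nat.pow_le_pow_right hq hi) (Nat.pow_le_pow_right hq (Nat.succ_le_succ hi)))

theorem isGHLevel (h : IsGHCritical π q s γ) (h₁ : γ ^ q ≤ t) (h₂ : t ≤ γ) :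
    IsGHLevel ‖π‖ q s t where
  two_le := h.two_le
  pos := (pow_pos h.pos q).trans_le h₁
  lt_one := h₂.trans_lt h.lt_one
  le_pow i hi := by
    calc ‖π‖ ≤ γ ^ (q ^ (i + 1) + q ^ (i + 1 + 1)) := h.norm_le_pow hi
      _ = (γ ^ q) ^ (q ^ i + q ^ (i + 1)) := by rw [← pow_mul]; ring
      _ ≤ t ^ (q ^ i + q ^ (i + 1)) := by have := h.pos; gcongr
  pow_le := by
    rw [h.norm_eq]
    exact pow_le_pow_left₀ ((pow_pos h.pos q).trans_le h₁).le h₂ _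

theorem isGHLevel_succ (h : IsGHCritical π q s γ) (h₁ : γ ≤ t) (h₂ : t ^ q ≤ γ) :
    IsGHLevel ‖π‖ q (s + 1) t where
  two_le := h.two_le
  pos := h.pos.trans_le h₁
  lt_one := by
    by_contra! ht
    exact (h₂.trans_lt h.lt_one).not_ge (one_le_pow₀ ht)
  le_pow i hi := (h.norm_le_pow (Nat.lt_succ_iff.1 hi)).trans (pow_le_pow_left₀ h.pos.le h₁ _)
  pow_le := by
    rw [h.norm_eq, show q ^ (s + 1) + q ^ (s + 1 + 1) = q * (q ^ s + q ^ (s + 1)) by ring, pow_mul]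
    have := h.pos.trans_le h₁
    gcongr

theorem pow_le_self (h : IsGHCritical π q s γ) : γ ^ q ≤ γ :=
  (pow_lt_self_of_lt_one₀ h.pos h.lt_one h.two_le).le

theorem fiberRadius_succ_eq (h : IsGHCritical π q s γ) : fiberRadius ‖π‖ q γ (s + 1) = γ := by
  have heq : (γ * γ) ^ q ^ s * γ ^ q ^ (s + 1) = ‖π‖ * γ ^ q ^ s := by
    rw [h.norm_eq, pow_add, mul_pow]; ring
  refine le_antisymm ?_ ?_
  · exact not_lt.1
      ((mul_pow_lt_iff_lt_fiberRadius h.norm_pos.le h.pos h.two_le h.pos s).not.1 heq.not_lt)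
  · exact not_lt.1
      ((lt_mul_pow_iff_fiberRadius_lt h.norm_pos.le h.pos h.two_le h.pos s).not.1 heq.not_gt)

theorem strictMono_fiberRadius (h : IsGHCritical π q s γ) : StrictMono (fiberRadius ‖π‖ q γ) :=
  fiberRadius_strictMono h.norm_pos h.norm_lt_one h.pos h.two_le

theorem fiberRadius_le (h : IsGHCritical π q s γ) {j : ℕ} (hj : j ≤ s + 1) :
    fiberRadius ‖π‖ q γ j ≤ γ :=
  (h.strictMono_fiberRadius.monotone hj).trans_eq h.fiberRadius_succ_eq

end IsGHCritical

end CriticalRadius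

section NearGrowth

namespace IsGHCritical

variable {𝕜 : Type*} [NormedField 𝕜] [IsUltrametricDist 𝕜] {π w u : 𝕜} {q s : ℕ} {γ : ℝ}

theorem norm_pow_sub_pow_sub_sub_pow_le (h : IsGHCritical π q s γ) (hu : ‖u‖ ≤ 1) (hw : ‖w‖ ≤ 1)
    (i : ℕ) : ‖u ^ q ^ (i + 1) - w ^ q ^ (i + 1) - (u ^ q ^ i - w ^ q ^ i) ^ q‖ ≤
      ‖π‖ * powDist q w u i := by
  have hpow : ∀ x : 𝕜, ‖x‖ ≤ 1 → ‖x ^ q ^ i‖ ≤ 1 := fun x hx => by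
    rw [norm_pow]
    exact pow_le_one₀ (norm_nonneg x) hx
  have hsub : ‖u ^ q ^ i - w ^ q ^ i‖ ≤ 1 :=
    (norm_sub_le_max_norm _ _).trans (max_le (hpow u hu) (hpow w hw))
  have hfrob := h.norm_add_pow_sub_le _ _ (hpow w hw) hsub
  rwa [add_sub_cancel, ← pow_mul, ← pow_mul, ← pow_succ] at hfrob

theorem powDist_succ_le_max (h : IsGHCritical π q s γ) (hu : ‖u‖ ≤ 1) (hw : ‖w‖ ≤ 1) (i : ℕ) :
    powDist q w u (i + 1) ≤ max (powDist q w u i ^ q) (‖π‖ * powDist q w u i) := by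
  have hfrob := h.norm_pow_sub_pow_sub_sub_pow_le hu hw i
  rw [powDist, ← add_sub_cancel ((u ^ q ^ i - w ^ q ^ i) ^ q) (u ^ q ^ (i + 1) - w ^ q ^ (i + 1))]
  refine (IsUltrametricDist.norm_add_le_max _ _).trans (max_le_max ?_ hfrob)
  rw [norm_pow, powDist]

theorem powDist_succ_eq (h : IsGHCritical π q s γ) (hu : ‖u‖ ≤ 1) (hw : ‖w‖ ≤ 1) {i : ℕ}
    (hlt : ‖π‖ * powDist q w u i < powDist q w u i ^ q) :
    powDist q w u (i + 1) = powDist q w u i ^ q := by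
  have hfrob := (h.norm_pow_sub_pow_sub_sub_pow_le hu hw i).trans_lt hlt
  rw [powDist, powDist, ← norm_pow]
  rw [powDist, ← norm_pow] at hfrob
  exact norm_eq_of_norm_sub_lt hfrob

theorem powDist_eq_pow (h : IsGHCritical π q s γ) (hu : ‖u‖ ≤ 1) (hw : ‖w‖ ≤ 1) {i : ℕ}
    (hlt : ∀ k < i, ‖π‖ * ‖u - w‖ ^ q ^ k < ‖u - w‖ ^ q ^ (k + 1)) :
    powDist q w u i = ‖u - w‖ ^ q ^ i := by
  induction i with
  | zero => rw [powDist_zero, pow_zero, pow_one]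
  | succ i ih =>
    have hi := ih fun k hk => hlt k (hk.trans i.lt_succ_self)
    have hpow : powDist q w u i ^ q = ‖u - w‖ ^ q ^ (i + 1) := by rw [hi, ← pow_mul, ← pow_succ]
    rw [h.powDist_succ_eq hu hw (by rw [hpow, hi]; exact hlt i i.lt_succ_self), hpow]

theorem mul_powDist_succ_le (h : IsGHCritical π q s γ) (hu : ‖u‖ ≤ 1) (hw : ‖w‖ ≤ 1) {c : ℝ}
    {i : ℕ} (hc₀ : 0 ≤ c) (hc₁ : c ≤ 1) (hc : c * powDist q w u i ^ (q - 1) ≤ ‖π‖) :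
    c * powDist q w u (i + 1) ≤ ‖π‖ * powDist q w u i := by
  have hd := powDist_nonneg q w u i
  refine (mul_le_mul_of_nonneg_left (h.powDist_succ_le_max hu hw i) hc₀).trans ?_
  rw [mul_max_of_nonneg _ _ hc₀]
  refine max_le ?_ (mul_le_of_le_one_left (by positivity) hc₁)
  rw [← pow_sub_one_mul (by have := h.two_le; omega), ← mul_assoc]
  exact mul_le_mul_of_nonneg_right hc hd

theorem mul_pow_powDist_le (h : IsGHCritical π q s γ) (hu : ‖u‖ ≤ 1) (hw : ‖w‖ ≤ 1) {i j : ℕ}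
    (hij : j ≤ i) : (γ * γ) ^ q ^ i * powDist q w u i ^ (q - 1) ≤
      (γ * γ) ^ q ^ j * powDist q w u j ^ (q - 1) := by
  obtain ⟨k, rfl⟩ := Nat.exists_eq_add_of_le hij
  have hdist := powDist_add_le h.two_le hu hw le_rfl j k
  rw [one_pow, one_mul] at hdist
  have := powDist_nonneg q w u (j + k)
  have := h.pos
  refine mul_le_mul (pow_le_pow_of_le_one (by positivity)
    (mul_le_one₀ h.lt_one.le h.pos.le h.lt_one.le) ?_) (by gcongr) (by positivity) (by positivity)
  exact Nat.pow_le_pow_right (by have := h.two_le; omega) hij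

theorem mul_powDist_succ_le_of_le_fiberRadius (h : IsGHCritical π q s γ) (hu : ‖u‖ ≤ 1)
    (hw : ‖w‖ ≤ 1) {i j : ℕ} (hij : j ≤ i) (hj : powDist q w u j = ‖u - w‖ ^ q ^ j)
    (hd : 0 < ‖u - w‖) (hle : ‖u - w‖ ≤ fiberRadius ‖π‖ q γ (j + 1)) :
    (γ * γ) ^ q ^ i * powDist q w u (i + 1) ≤ ‖π‖ * powDist q w u i := by
  have hγ₀ : 0 ≤ γ * γ := (mul_pos h.pos h.pos).le
  refine h.mul_powDist_succ_le hu hw (pow_nonneg hγ₀ _)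
    (pow_le_one₀ hγ₀ (mul_le_one₀ h.lt_one.le h.pos.le h.lt_one.le))
    ((h.mul_pow_powDist_le hu hw hij).trans ?_)
  refine le_of_mul_le_mul_right ?_ (pow_pos hd (q ^ j))
  rw [hj, mul_assoc, ← hj, pow_sub_one_mul (by have := h.two_le; omega), hj, ← pow_mul, ← pow_succ]
  exact not_lt.1 <|
    (lt_mul_pow_iff_fiberRadius_lt h.norm_pos.le h.pos h.two_le hd j).not.2 hle.not_gt

theorem mul_powDist_succ_lt_of_lt_fiberRadius (h : IsGHCritical π q s γ) (hu : ‖u‖ ≤ 1)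
    (hw : ‖w‖ ≤ 1) {j : ℕ} (hj : powDist q w u j = ‖u - w‖ ^ q ^ j) (hd : 0 < ‖u - w‖)
    (hlt : ‖u - w‖ < fiberRadius ‖π‖ q γ (j + 1)) :
    (γ * γ) ^ q ^ j * powDist q w u (j + 1) < ‖π‖ * powDist q w u j := by
  have hγ₀ : 0 ≤ γ * γ := (mul_pos h.pos h.pos).le
  have hγ₁ : (γ * γ) ^ q ^ j < 1 := pow_lt_one₀ hγ₀
    (mul_lt_one_of_nonneg_of_lt_one_left h.pos.le h.lt_one h.lt_one.le)
    (pow_ne_zero j (by have := h.two_le; omega))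
  refine (mul_le_mul_of_nonneg_left (h.powDist_succ_le_max hu hw j)
    (pow_nonneg hγ₀ _)).trans_lt ?_
  rw [mul_max_of_nonneg _ _ (pow_nonneg hγ₀ _), hj, ← pow_mul, ← pow_succ]
  exact max_lt ((mul_pow_lt_iff_lt_fiberRadius h.norm_pos.le h.pos h.two_le hd j).2 hlt)
    (mul_lt_of_lt_one_left (mul_pos h.norm_pos (pow_pos hd _)) hγ₁)

theorem norm_eq_of_norm_sub_lt_fiberRadius (h : IsGHCritical π q s γ) (hw : ‖w‖ = γ) {j : ℕ}
    (hj : j ≤ s + 1) (huw : ‖u - w‖ < fiberRadius ‖π‖ q γ j) : ‖u‖ = γ :=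
  (norm_eq_of_norm_sub_lt (huw.trans_le ((h.fiberRadius_le hj).trans_eq hw.symm))).trans hw

theorem norm_eval_ghWronskian_of_near (h : IsGHCritical π q s γ) (hw : ‖w‖ = γ) {j n : ℕ}
    (hj : j ≤ s) (hn : j ≤ n) (h₁ : fiberRadius ‖π‖ q γ j < ‖u - w‖)
    (h₂ : ‖u - w‖ < fiberRadius ‖π‖ q γ (j + 1)) :
    ‖(ghWronskian π q n w).eval u‖ = (γ * γ) ^ ghExp q j / ‖π‖ ^ j * ‖u - w‖ ^ q ^ j := by
  have hd : 0 < ‖u - w‖ := (fiberRadius_nonneg h.norm_pos.le h.pos.le j).trans_lt h₁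
  have hu : ‖u‖ = γ := h.norm_eq_of_norm_sub_lt_fiberRadius hw (Nat.succ_le_succ hj) h₂
  have hu₁ : ‖u‖ ≤ 1 := hu.trans_le h.lt_one.le
  have hw₁ : ‖w‖ ≤ 1 := hw.trans_le h.lt_one.le
  have hinc : ∀ i < j, ‖π‖ * ‖u - w‖ ^ q ^ i < (γ * γ) ^ q ^ i * ‖u - w‖ ^ q ^ (i + 1) :=
    fun i hi => (lt_mul_pow_iff_fiberRadius_lt h.norm_pos.le h.pos h.two_le hd i).2
      ((h.strictMono_fiberRadius.monotone hi).trans_lt h₁)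
  have hdist : ∀ i ≤ j, powDist q w u i = ‖u - w‖ ^ q ^ i := fun i hi =>
    h.powDist_eq_pow hu₁ hw₁ fun k hk => (hinc k (hk.trans_le hi)).trans_le
      (mul_le_of_le_one_left (by positivity) (pow_le_one₀ (mul_pos h.pos h.pos).le
        (mul_le_one₀ h.lt_one.le h.pos.le h.lt_one.le)))
  have hlevel : IsGHLevel ‖π‖ q s γ := h.isGHLevel h.pow_le_self le_rfl
  rw [(hu ▸ hlevel : IsGHLevel ‖π‖ q s ‖u‖).norm_eval_ghWronskian (hw ▸ hlevel) hj hn,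
    ghTermBound, hdist j le_rfl, hu, hw]
  · ring
  · intro i hi
    rw [hu, hw, hdist i hi.le, hdist (i + 1) hi]
    exact hinc i hi
  · rw [hu, hw]
    exact h.mul_powDist_succ_lt_of_lt_fiberRadius hu₁ hw₁ (hdist j le_rfl) hd h₂
  · intro i hi
    rw [hu, hw]
    exact h.mul_powDist_succ_le_of_le_fiberRadius hu₁ hw₁ hi (hdist j le_rfl) hd h₂.le

end IsGHCritical

end NearGrowth

section Zeros

open Polynomial

theorem card_filter_roots_eq_ncard {R : Type*} [CommRing R] [IsDomain R] {P : R[X]} (hP : P ≠ 0)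
    {p : R → Prop} [DecidablePred p] (h : ∀ a, p a → P.rootMultiplicity a ≤ 1) :
    (P.roots.filter p).card = {a | P.eval a = 0 ∧ p a}.ncard := by
  classical
  have hnodup : (P.roots.filter p).Nodup := Multiset.nodup_iff_count_le_one.2 fun a => by
    by_cases ha : p a
    · rw [Multiset.count_filter_of_pos ha, count_roots]
      exact h a ha
    · rw [Multiset.count_filter_of_neg ha]
      exact zero_le_one
  rw [← Finset.card_mk (nodup := hnodup), ← Set.ncard_coe_finset]
  congr 1
  ext a
  simp [hP]

theorem card_filter_le_eq_add_of_gap {α β : Type*} [LinearOrder β] {m : Multiset α} {d : α → β}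
    {x y : β} (hxy : x < y) (h : ∀ a ∈ m, x < d a → y ≤ d a) :
    (m.filter fun a => d a ≤ y).card =
      (m.filter fun a => d a ≤ x).card + (m.filter fun a => d a = y).card := by
  rw [← Multiset.card_add]
  congr 1
  have hdisj : (m.filter fun a => d a ≤ x ∧ d a = y) = 0 :=
    Multiset.filter_eq_nil.2 fun a _ ha => hxy.not_ge (ha.2 ▸ ha.1)
  rw [Multiset.filter_add_filter, hdisj, add_zero]
  refine Multiset.filter_congr fun a ha => ⟨fun hay => ?_, fun hay => ?_⟩
  · exact (le_or_gt (d a) x).imp_right fun hxa => hay.antisymm (h a ha hxa)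
  · exact hay.elim (fun hax => hax.trans hxy.le) fun hay => hay.le

variable {𝕜 : Type*} [NormedField 𝕜] [IsUltrametricDist 𝕜]
  {π w u a b : 𝕜} {q s j n : ℕ} {γ : ℝ}

namespace IsGHCritical

theorem fiberRadius_le_norm_sub (h : IsGHCritical π q s γ) (hw : ‖w‖ = γ) (hj : j ≤ s)
    (hn : j ≤ n) (ha : (ghWronskian π q n w).eval a = 0) (haw : fiberRadius ‖π‖ q γ j < ‖a - w‖) :
    fiberRadius ‖π‖ q γ (j + 1) ≤ ‖a - w‖ :=
  le_norm_sub_of_growth (fiberRadius_nonneg h.norm_pos.le h.pos.le j)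
    (div_pos (pow_pos (mul_pos h.pos h.pos) _) (pow_pos h.norm_pos j))
    (fun _ => h.norm_eval_ghWronskian_of_near hw hj hn) ha haw

theorem norm_eval_ghWronskian_of_lt (h : IsGHCritical π q s γ) (hw : ‖w‖ = γ) (hn : s ≤ n)
    (h₁ : γ ^ q < ‖u‖) (h₂ : ‖u‖ < γ) : ‖(ghWronskian π q n w).eval u‖ =
      γ ^ ghExp q (s + 1) / ‖π‖ ^ s * ‖u‖ ^ ghExp q s := by
  rw [(h.isGHLevel h₁.le h₂.le).norm_eval_ghWronskian_of_norm_ne_norm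
    (h.isGHLevel (hw ▸ h.pow_le_self) hw.le) (hw ▸ h₂.ne) hn, hw, max_eq_right h₂.le, ghExp_succ,
    pow_add γ (ghExp q s)]
  ring

theorem norm_eval_ghWronskian_of_gt (h : IsGHCritical π q s γ) (hw : ‖w‖ = γ) (hn : s + 1 ≤ n)
    (h₁ : γ < ‖u‖) (h₂ : ‖u‖ < √γ) : ‖(ghWronskian π q n w).eval u‖ =
      γ ^ ghExp q (s + 1) / ‖π‖ ^ (s + 1) * ‖u‖ ^ ghExp q (s + 2) := by
  have hsq : ‖u‖ ^ 2 < γ := (Real.lt_sqrt (norm_nonneg u)).1 h₂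
  have hu₁ : ‖u‖ ≤ 1 := h₂.le.trans (Real.sqrt_le_one.2 h.lt_one.le)
  have hpow : ‖u‖ ^ q ≤ γ := (pow_le_pow_of_le_one (norm_nonneg u) hu₁ h.two_le).trans hsq.le
  rw [(h.isGHLevel_succ h₁.le hpow).norm_eval_ghWronskian_of_norm_ne_norm
    (h.isGHLevel_succ hw.ge (hw ▸ h.pow_le_self)) (hw ▸ h₁.ne') hn, hw, max_eq_left h₁.le,
    ghExp_succ q (s + 1), pow_add ‖u‖ (ghExp q (s + 1))]
  ring

variable [IsAlgClosed 𝕜]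

theorem card_roots_filter_norm_sub_le (h : IsGHCritical π q s γ) (hw : ‖w‖ = γ) (hj : j ≤ s)
    (hn : j ≤ n) : ((ghWronskian π q n w).roots.filter fun a =>
      ‖a - w‖ ≤ fiberRadius ‖π‖ q γ j).card = q ^ j :=
  card_roots_filter_of_growth h.norm_pos h.norm_lt_one
    (fiberRadius_nonneg h.norm_pos.le h.pos.le j) (h.strictMono_fiberRadius j.lt_succ_self)
    (div_pos (pow_pos (mul_pos h.pos h.pos) _) (pow_pos h.norm_pos j))
    fun _ => h.norm_eval_ghWronskian_of_near hw hj hn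

theorem ghWronskian_ne_zero (h : IsGHCritical π q s γ) (hw : ‖w‖ = γ) (n : ℕ) :
    ghWronskian π q n w ≠ 0 := fun hzero => by
  have hcard := h.card_roots_filter_norm_sub_le hw s.zero_le n.zero_le
  simp [hzero] at hcard

theorem card_roots_filter_norm_eq (h : IsGHCritical π q s γ) (hw : ‖w‖ = γ) (hn : s + 1 ≤ n) :
    ((ghWronskian π q n w).roots.filter fun a => ‖a‖ = γ).card = q ^ s + q ^ (s + 1) := by
  have hpow : γ ^ q < γ := pow_lt_self_of_lt_one₀ h.pos h.lt_one h.two_le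
  have hsqrt : γ < √γ := Real.lt_sqrt_of_sq_lt (pow_lt_self_of_lt_one₀ h.pos h.lt_one one_lt_two)
  have hB : ∀ i k, 0 < γ ^ i / ‖π‖ ^ k := fun i k =>
    div_pos (pow_pos h.pos i) (pow_pos h.norm_pos k)
  have hinner : ∀ x : 𝕜, γ ^ q < ‖x - 0‖ → ‖x - 0‖ < γ → ‖(ghWronskian π q n w).eval x‖ =
      γ ^ ghExp q (s + 1) / ‖π‖ ^ s * ‖x - 0‖ ^ ghExp q s := fun x => by
    rw [sub_zero]
    exact h.norm_eval_ghWronskian_of_lt hw (by omega)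
  have houter : ∀ x : 𝕜, γ < ‖x - 0‖ → ‖x - 0‖ < √γ → ‖(ghWronskian π q n w).eval x‖ =
      γ ^ ghExp q (s + 1) / ‖π‖ ^ (s + 1) * ‖x - 0‖ ^ ghExp q (s + 2) := fun x => by
    rw [sub_zero]
    exact h.norm_eval_ghWronskian_of_gt hw hn
  have hcard := card_filter_le_eq_add_of_gap hpow fun a ha =>
    le_norm_sub_of_growth (pow_pos h.pos q).le (hB _ _) hinner (isRoot_of_mem_roots ha)
  rw [card_roots_filter_of_growth h.norm_pos h.norm_lt_one h.pos.le hsqrt (hB _ _) houter,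
    card_roots_filter_of_growth h.norm_pos h.norm_lt_one (pow_pos h.pos q).le hpow (hB _ _) hinner,
    ghExp_succ, ghExp_succ] at hcard
  simp only [sub_zero] at hcard
  omega

theorem roots_ghWronskian_eq (h : IsGHCritical π q s γ) (hw : ‖w‖ = γ) (ha : ‖a‖ = γ)
    (hroot : (ghWronskian π q n w).eval a = 0) :
    (ghWronskian π q n w).roots = (ghWronskian π q n a).roots := by
  obtain ⟨c, hc⟩ := exists_ghWronskian_eq_C_mul (norm_pos_iff.1 h.norm_pos)
    (h.ghWronskian_ne_zero ha n) hroot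
  have hc₀ : c ≠ 0 := by
    rintro rfl
    exact h.ghWronskian_ne_zero hw n (by rw [hc, C_0, zero_mul])
  rw [hc, roots_C_mul _ hc₀]

theorem rootMultiplicity_ghWronskian_le_one (h : IsGHCritical π q s γ) (hw : ‖w‖ = γ)
    (ha : ‖a‖ = γ) : (ghWronskian π q n w).rootMultiplicity a ≤ 1 := by
  classical
  by_cases hroot : (ghWronskian π q n w).eval a = 0
  · rw [← count_roots, h.roots_ghWronskian_eq hw ha hroot, Multiset.count_eq_card_filter_eq,
      ← pow_zero q, ← h.card_roots_filter_norm_sub_le ha s.zero_le n.zero_le]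
    refine Multiset.card_le_card (Multiset.monotone_filter_right _ fun b hb => ?_)
    rw [← hb, sub_self, norm_zero, fiberRadius]
  · exact (rootMultiplicity_eq_zero hroot).trans_le zero_le_one

theorem fiberRadius_one_le_norm_sub (h : IsGHCritical π q s γ) (hw : ‖w‖ = γ) (ha : ‖a‖ = γ)
    (hroot : (ghWronskian π q n w).eval a = 0) (hroot' : (ghWronskian π q n w).eval b = 0)
    (hba : b ≠ a) : fiberRadius ‖π‖ q γ 1 ≤ ‖b - a‖ := by
  refine h.fiberRadius_le_norm_sub ha s.zero_le n.zero_le ?_ (norm_pos_iff.2 (sub_ne_zero.2 hba))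
  have hmem := (mem_roots (h.ghWronskian_ne_zero hw n)).2 hroot'
  exact isRoot_of_mem_roots (h.roots_ghWronskian_eq hw ha hroot ▸ hmem)

theorem ncard_zeros_ghWronskian (h : IsGHCritical π q s γ) (hw : ‖w‖ = γ) (hn : s + 1 ≤ n) :
    {a | ‖a‖ = γ ∧ (ghWronskian π q n w).eval a = 0}.ncard = q ^ s + q ^ (s + 1) := by
  rw [← h.card_roots_filter_norm_eq hw hn, card_filter_roots_eq_ncard (h.ghWronskian_ne_zero hw n)
    fun a => h.rootMultiplicity_ghWronskian_le_one hw]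
  simp only [and_comm]

theorem ncard_zeros_ghWronskian_near (h : IsGHCritical π q s γ) (hw : ‖w‖ = γ) (hj : j ≤ s)
    (hn : j ≤ n) : {a ∈ {a | ‖a‖ = γ ∧ (ghWronskian π q n w).eval a = 0} |
      ‖a - w‖ ≤ fiberRadius ‖π‖ q γ j}.ncard = q ^ j := by
  have hnorm : ∀ a, ‖a - w‖ ≤ fiberRadius ‖π‖ q γ j → ‖a‖ = γ := fun a ha =>
    h.norm_eq_of_norm_sub_lt_fiberRadius hw (Nat.succ_le_succ hj)
      (ha.trans_lt (h.strictMono_fiberRadius j.lt_succ_self))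
  rw [← h.card_roots_filter_norm_sub_le hw hj hn,
    card_filter_roots_eq_ncard (h.ghWronskian_ne_zero hw n)
      fun a ha => h.rootMultiplicity_ghWronskian_le_one hw (hnorm a ha)]
  congr 1
  ext a
  exact ⟨fun ha => ⟨ha.1.2, ha.2⟩, fun ha => ⟨⟨hnorm a ha.2, ha.1⟩, ha.2⟩⟩

theorem exists_enumeration_zeros_ghWronskian (h : IsGHCritical π q s γ) (hw : ‖w‖ = γ)
    (hn : s + 1 ≤ n) : ∃ v : ℕ → 𝕜, v 1 = w ∧
      Set.BijOn v (Set.Icc 1 (q ^ s + q ^ (s + 1)))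
        {a | ‖a‖ = γ ∧ (ghWronskian π q n w).eval a = 0} ∧
      (∀ j < s, ∀ i, q ^ j < i → i ≤ q ^ (j + 1) → ‖v i - w‖ = fiberRadius ‖π‖ q γ (j + 1)) ∧
      ∀ i, q ^ s < i → i ≤ q ^ s + q ^ (s + 1) → ‖v i - w‖ = γ := by
  set S := {a | ‖a‖ = γ ∧ (ghWronskian π q n w).eval a = 0}
  have hcard : S.ncard = q ^ s + q ^ (s + 1) := h.ncard_zeros_ghWronskian hw hn
  have hnear : ∀ j ≤ s, {a ∈ S | ‖a - w‖ ≤ fiberRadius ‖π‖ q γ j}.ncard = q ^ j := fun j hj =>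
    h.ncard_zeros_ghWronskian_near hw hj (by omega)
  have hfin : S.Finite := Set.finite_of_ncard_pos (by
    rw [hcard]
    have := h.two_le
    positivity)
  have hall : {a ∈ S | ‖a - w‖ ≤ γ} = S := Set.sep_eq_self_iff_mem_true.2 fun a ha =>
    (norm_sub_le_max_norm a w).trans (max_le ha.1.le hw.le)
  obtain ⟨v, hv, hdist⟩ := exists_enumeration_of_gaps hfin fun a => ‖a - w‖
  have hgap : ∀ j ≤ s, ∀ a ∈ S, fiberRadius ‖π‖ q γ j < ‖a - w‖ →
      fiberRadius ‖π‖ q γ (j + 1) ≤ ‖a - w‖ := fun j hj a ha =>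
    h.fiberRadius_le_norm_sub hw hj (by omega) ha.2
  refine ⟨v, ?_, hcard ▸ hv, fun j hj i h₁ h₂ => ?_, fun i h₁ h₂ => ?_⟩
  · have hempty : {a ∈ S | ‖a - w‖ ≤ -1} = ∅ := Set.sep_eq_empty_iff_mem_false.2 fun a _ =>
      not_le.2 (neg_one_lt_zero.trans_le (norm_nonneg _))
    refine sub_eq_zero.1 (norm_eq_zero.1 (hdist (-1) 0 (fun a _ _ => norm_nonneg _) 1 ?_ ?_))
    · rw [hempty, Set.ncard_empty]
      exact one_pos
    · exact (hnear 0 s.zero_le).ge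
  · exact hdist _ _ (hgap j hj.le) i ((hnear j hj.le).trans_lt h₁) (h₂.trans_eq (hnear _ hj).symm)
  · refine hdist _ _ (fun a ha hlt => h.fiberRadius_succ_eq.ge.trans (hgap s le_rfl a ha hlt)) i
      ((hnear s le_rfl).trans_lt h₁) ?_
    rwa [hall, hcard]

end IsGHCritical

end Zeros

section Limit

open Polynomial

variable {𝕜 : Type*} [NormedField 𝕜] [IsUltrametricDist 𝕜] {π w u : 𝕜} {q s : ℕ} {γ : ℝ}

namespace IsGHLevel

theorem cauchySeq_pow_mul_ghm (h : IsGHLevel ‖π‖ q s ‖u‖) (hπ : ‖π‖ ≤ 1) (e : ℕ) :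
    CauchySeq fun k => π ^ (k + e) * ghm π q (2 * k + e) u := by
  have hpos := h.pos_left
  refine cauchySeq_of_le_geometric ‖u‖ (‖π‖ ^ (s + 1))⁻¹ h.lt_one fun k => ?_
  have hdiff : π ^ (k + e) * ghm π q (2 * k + e) u - π ^ (k + 1 + e) * ghm π q (2 * (k + 1) + e) u =
      -(u ^ q ^ (2 * k + e + 1) * (π ^ (k + e) * ghm π q (2 * k + e + 1) u)) := by
    have := norm_pos_iff.1 hpos
    rw [show 2 * (k + 1) + e = 2 * k + e + 2 by ring, ghm_add_two]
    field_simp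
    ring
  have hbound : ‖π ^ (k + e) * ghm π q (2 * k + e + 1) u‖ ≤ (‖π‖ ^ (s + 1))⁻¹ := by
    rw [← one_div, le_div_iff₀ (pow_pos hpos _), ← norm_pow, ← norm_mul, mul_right_comm, ← pow_add,
      mul_comm]
    exact h.norm_ghm_mul_pow_le_one hπ (by omega)
  have hpow : ‖u ^ q ^ (2 * k + e + 1)‖ ≤ ‖u‖ ^ k := by
    have hlt : 2 * k + e + 1 < q ^ (2 * k + e + 1) := Nat.lt_pow_self h.two_le
    rw [norm_pow]
    exact pow_le_pow_of_le_one h.pos.le h.lt_one.le (by omega)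
  rw [dist_eq_norm, hdiff, norm_neg, norm_mul, mul_comm]
  gcongr

theorem tendsto_ghphi0 [CompleteSpace 𝕜] (h : IsGHLevel ‖π‖ q s ‖u‖) (hπ : ‖π‖ ≤ 1) :
    Tendsto (fun k => π ^ k * ghm π q (2 * k) u) atTop (nhds (ghphi0 π q u)) :=
  (h.cauchySeq_pow_mul_ghm hπ 0).tendsto_limUnder

theorem tendsto_ghphi1 [CompleteSpace 𝕜] (h : IsGHLevel ‖π‖ q s ‖u‖) (hπ : ‖π‖ ≤ 1) :
    Tendsto (fun k => π ^ (k + 1) * ghm π q (2 * k + 1) u) atTop (nhds (ghphi1 π q u)) :=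
  (h.cauchySeq_pow_mul_ghm hπ 1).tendsto_limUnder

theorem tendsto_eval_ghWronskian [CompleteSpace 𝕜] (hu : IsGHLevel ‖π‖ q s ‖u‖)
    (hw : IsGHLevel ‖π‖ q s ‖w‖) (hπ : ‖π‖ ≤ 1) :
    Tendsto (fun k => (ghWronskian π q (2 * k) w).eval u) atTop
      (nhds (ghphi0 π q w * ghphi1 π q u - ghphi1 π q w * ghphi0 π q u)) := by
  refine (((hw.tendsto_ghphi0 hπ).mul (hu.tendsto_ghphi1 hπ)).sub
    ((hw.tendsto_ghphi1 hπ).mul (hu.tendsto_ghphi0 hπ))).congr fun k => ?_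
  rw [eval_ghWronskian, (even_two_mul k).neg_pow]
  ring

end IsGHLevel

namespace IsGHCritical

theorem norm_ghTerm_le (h : IsGHCritical π q s γ) (hu : ‖u‖ = γ) (hw : ‖w‖ = γ) (i : ℕ) :
    ‖ghTerm π q w u i‖ ≤ (‖π‖ ^ (s + 1))⁻¹ * γ ^ i := by
  have hlevel : IsGHLevel ‖π‖ q s γ := h.isGHLevel h.pow_le_self le_rfl
  have hdist : ‖u - w‖ ≤ 1 :=
    (norm_sub_le_max_norm u w).trans (max_le (hu.trans_le h.lt_one.le) (hw.trans_le h.lt_one.le))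
  rw [mul_comm, ← div_eq_mul_inv, le_div_iff₀ (pow_pos h.norm_pos _)]
  calc ‖ghTerm π q w u i‖ * ‖π‖ ^ (s + 1) ≤ powDist q w u (0 + i) := by
        rw [zero_add]
        exact (hu ▸ hlevel).norm_ghTerm_mul_pow_le (hw ▸ hlevel) h.norm_lt_one.le i
    _ ≤ γ ^ i * powDist q w u 0 := powDist_add_le h.two_le hu.le hw.le h.lt_one.le 0 i
    _ ≤ γ ^ i := by
        rw [powDist_zero]
        exact mul_le_of_le_one_right (pow_pos h.pos i).le hdist

theorem tendstoUniformly_eval_ghWronskian [CompleteSpace 𝕜] (h : IsGHCritical π q s γ)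
    (hw : ‖w‖ = γ) : TendstoUniformly
      (fun k (x : Metric.sphere (0 : 𝕜) γ) => (ghWronskian π q (2 * k) w).eval (x : 𝕜))
      (fun x => ghphi0 π q w * ghphi1 π q x - ghphi1 π q w * ghphi0 π q x) atTop := by
  have hlevel : IsGHLevel ‖π‖ q s γ := h.isGHLevel h.pow_le_self le_rfl
  have hstep : ∀ (x : Metric.sphere (0 : 𝕜) γ) k, dist ((ghWronskian π q (2 * k) w).eval (x : 𝕜))
      ((ghWronskian π q (2 * (k + 1)) w).eval (x : 𝕜)) ≤ (‖π‖ ^ (s + 1))⁻¹ * γ ^ k := fun x k => by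
    have hπ := h.norm_pos
    have hterm : ∀ i ≥ k, ‖ghTerm π q w (x : 𝕜) i‖ ≤ (‖π‖ ^ (s + 1))⁻¹ * γ ^ k := fun i hi =>
      (h.norm_ghTerm_le (mem_sphere_zero_iff_norm.1 x.2) hw i).trans
        (by gcongr ?_ * ?_; exact pow_le_pow_of_le_one h.pos.le h.lt_one.le hi)
    rw [dist_comm, dist_eq_norm, eval_ghWronskian_eq_sum (norm_pos_iff.1 hπ),
      eval_ghWronskian_eq_sum (norm_pos_iff.1 hπ), mul_add, mul_one, Finset.sum_range_succ,
      Finset.sum_range_succ, add_assoc, add_sub_cancel_left]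
    exact (IsUltrametricDist.norm_add_le_max _ _).trans
      (max_le (hterm _ (by omega)) (hterm _ (by omega)))
  have hdist := fun x : Metric.sphere (0 : 𝕜) γ => dist_le_of_le_geometric_of_tendsto γ _ h.lt_one
    (hstep x) (IsGHLevel.tendsto_eval_ghWronskian
      ((mem_sphere_zero_iff_norm.1 x.2).symm ▸ hlevel) (hw ▸ hlevel) h.norm_lt_one.le)
  refine Metric.tendstoUniformly_iff.2 fun ε hε => ?_
  have hlim : Tendsto (fun k => (‖π‖ ^ (s + 1))⁻¹ * γ ^ k / (1 - γ)) atTop (nhds 0) := by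
    simpa using ((tendsto_pow_atTop_nhds_zero_of_lt_one h.pos.le h.lt_one).const_mul
      (‖π‖ ^ (s + 1))⁻¹).div_const (1 - γ)
  filter_upwards [hlim.eventually_lt_const hε] with k hk x
  rw [dist_comm]
  exact (hdist x k).trans_lt hk

variable [IsAlgClosed 𝕜]

theorem smallOnlyNearZeros_eval_ghWronskian (h : IsGHCritical π q s γ) (hw : ‖w‖ = γ) {n : ℕ → ℕ}
    (hn : ∀ k, s + 1 ≤ n k) : SmallOnlyNearZeros fun k (x : Metric.sphere (0 : 𝕜) γ) =>
      (ghWronskian π q (n k) w).eval (x : 𝕜) := by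
  intro η hη
  obtain ⟨z, hz₀, hz₁⟩ := exists_norm_mem_Ioo h.norm_pos h.norm_lt_one le_rfl
    (fiberRadius_succ_pos h.norm_pos h.pos q 0)
  rw [← add_sub_cancel_right z w] at hz₀ hz₁
  have hy : ‖z + w‖ = γ := h.norm_eq_of_norm_sub_lt_fiberRadius hw (by omega) hz₁
  have hval : ∀ k, ‖(ghWronskian π q (n k) w).eval (z + w)‖ = ‖z + w - w‖ := fun k => by
    rw [h.norm_eval_ghWronskian_of_near hw s.zero_le (Nat.zero_le _) hz₀ hz₁, ghExp_zero]
    simp only [pow_zero, pow_one, div_one, one_mul]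
  have hN := pow_pos h.pos (q ^ s + q ^ (s + 1))
  refine ⟨‖z + w - w‖ * η ^ (q ^ s + q ^ (s + 1)) / γ ^ (q ^ s + q ^ (s + 1)),
    by positivity, fun k x hx => ?_⟩
  by_contra! hfar
  have hle := norm_eval_mul_pow_le (ghWronskian π q (n k) w) hη.le
    (mem_sphere_zero_iff_norm.1 x.2) hy fun a ha hnorm => by
      rw [← dist_eq_norm]
      exact hfar ⟨a, mem_sphere_zero_iff_norm.2 hnorm⟩ (isRoot_of_mem_roots ha)
  rw [h.card_roots_filter_norm_eq hw (hn k), hval] at hle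
  exact hle.not_gt ((lt_div_iff₀ hN).1 hx)

theorem exists_bijOn_fiber [CompleteSpace 𝕜] (h : IsGHCritical π q s γ) (hw : ‖w‖ = γ) :
    ∃ n ≥ s + 1, ∃ g : 𝕜 → 𝕜, g w = w ∧
      Set.BijOn g {u | ‖u‖ = γ ∧ (ghWronskian π q n w).eval u = 0}
        {u | ‖u‖ = γ ∧ ghphi0 π q w * ghphi1 π q u = ghphi1 π q w * ghphi0 π q u} ∧
      ∀ u, ‖u‖ = γ → (ghWronskian π q n w).eval u = 0 → ‖g u - w‖ = ‖u - w‖ := by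
  have : CompleteSpace (Metric.sphere (0 : 𝕜) γ) := Metric.isClosed_sphere.completeSpace_coe
  obtain ⟨k, g, hg, hdist, hfix⟩ := (h.smallOnlyNearZeros_eval_ghWronskian hw
    (n := fun k => 2 * (k + (s + 1))) (fun k => by omega)).exists_bijOn_zeros
    (fun v hv => (tendsto_add_atTop_nat (s + 1)).eventually
      (h.tendstoUniformly_eval_ghWronskian hw v hv))
    (fun k => (Polynomial.continuous _).comp continuous_subtype_val)
    (fun k a ha b hb hab => (h.fiberRadius_one_le_norm_sub hw (mem_sphere_zero_iff_norm.1 b.2) hb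
      ha (Subtype.coe_injective.ne hab)).trans_eq (dist_eq_norm _ _).symm)
    (fiberRadius_succ_pos h.norm_pos h.pos q 0)
  have hgw : g ⟨w, mem_sphere_zero_iff_norm.2 hw⟩ = ⟨w, mem_sphere_zero_iff_norm.2 hw⟩ :=
    hfix _ (eval_ghWronskian_self π q _ w) (by rw [mul_comm, sub_self])
  have himage : ∀ P : 𝕜 → Prop,
      Subtype.val '' {x : Metric.sphere (0 : 𝕜) γ | P x} = {u | ‖u‖ = γ ∧ P u} := fun P => by
    ext u
    simp [and_comm]
  obtain ⟨G, hGg, hG⟩ := exists_bijOn_image_val hg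
  refine ⟨2 * (k + (s + 1)), by omega, G, ?_, ?_, fun u hu hzero => ?_⟩
  · exact (hGg ⟨w, _⟩).trans (congrArg Subtype.val hgw)
  · rw [himage fun u => (ghWronskian π q (2 * (k + (s + 1))) w).eval u = 0,
      himage fun u => ghphi0 π q w * ghphi1 π q u - ghphi1 π q w * ghphi0 π q u = 0] at hG
    simpa only [sub_eq_zero] using hG
  · have hdistw := hdist ⟨u, mem_sphere_zero_iff_norm.2 hu⟩ hzero
      ⟨w, mem_sphere_zero_iff_norm.2 hw⟩ (eval_ghWronskian_self π q _ w)
    rw [hgw, Subtype.dist_eq, Subtype.dist_eq, ← hGg] at hdistw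
    simpa only [dist_eq_norm] using hdistw

end IsGHCritical

end Limit

theorem isGHCritical_of_eq_rpow {p : ℕ} [Fact p.Prime] {𝕜 : Type*} [NormedField 𝕜]
    [IsUltrametricDist 𝕜] {r : ℕ} (hr : 0 < r) {π : 𝕜} (hπ₀ : 0 < ‖π‖) (hπ₁ : ‖π‖ < 1)
    (hpπ : ‖(p : 𝕜)‖ ≤ ‖π‖) {s : ℕ} {γ : ℝ}
    (hγ : γ = ‖π‖ ^ ((1 : ℝ) / (((p ^ r : ℕ) : ℝ) ^ s + ((p ^ r : ℕ) : ℝ) ^ (s + 1)))) :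
    IsGHCritical π (p ^ r) s γ where
  two_le := (Fact.out : p.Prime).two_le.trans (Nat.le_self_pow hr.ne' p)
  pos := hγ ▸ Real.rpow_pos_of_pos hπ₀ _
  lt_one := by
    have := (Fact.out : p.Prime).pos
    rw [hγ]
    exact Real.rpow_lt_one hπ₀.le hπ₁ (by positivity)
  norm_eq := by
    have := (Fact.out : p.Prime).pos
    rw [hγ, ← Real.rpow_mul_natCast hπ₀.le]
    push_cast
    rw [one_div, inv_mul_cancel₀ (by positivity), Real.rpow_one]
  norm_add_pow_sub_le x y hx hy := by
    refine (norm_add_pow_prime_pow_sub_le r hx hy).trans ?_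
    rw [one_pow, mul_one]
    gcongr

theorem gross_hopkins_fiber_critical_general {p : ℕ} [Fact p.Prime] {C : Type*} [NormedField C]
    [IsUltrametricDist C] [CompleteSpace C] [IsAlgClosed C]
    (q : ℕ) (hq : ∃ r : ℕ, 0 < r ∧ q = p ^ r)
    (π : C) (hπ₀ : 0 < ‖π‖) (hπ₁ : ‖π‖ < 1) (hpπ : ‖(p : C)‖ ≤ ‖π‖)
    (s : ℕ) (γ : ℝ) (hγ : γ = ‖π‖ ^ ((1 : ℝ) / ((q : ℝ) ^ s + (q : ℝ) ^ (s + 1))))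
    (u1 : C) (hu1 : ‖u1‖ = γ) :
    ∃ v : ℕ → C, v 1 = u1 ∧ Set.InjOn v (Set.Icc 1 (q ^ s + q ^ (s + 1))) ∧
      {u : C | ‖u‖ = γ ∧ ghphi0 π q u1 * ghphi1 π q u = ghphi1 π q u1 * ghphi0 π q u}
        = v '' (Set.Icc 1 (q ^ s + q ^ (s + 1))) ∧
      (∀ i j : ℕ, 1 ≤ j → j ≤ s → q ^ (j - 1) < i → i ≤ q ^ j →
        ‖v i - u1‖ = (‖π‖ * γ ^ (-(2 : ℝ) * (q : ℝ) ^ (j - 1))) ^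
          ((1 : ℝ) / ((q : ℝ) ^ j - (q : ℝ) ^ (j - 1)))) ∧
      (∀ i : ℕ, q ^ s < i → i ≤ q ^ s + q ^ (s + 1) → ‖v i - u1‖ = γ) := by
  obtain ⟨r, hr, rfl⟩ := hq
  have h : IsGHCritical π (p ^ r) s γ := isGHCritical_of_eq_rpow hr hπ₀ hπ₁ hpπ hγ
  obtain ⟨n, hn, g, hgu1, hg, hgdist⟩ := h.exists_bijOn_fiber hu1
  obtain ⟨v, hv1, hv, hnear, hfar⟩ := h.exists_enumeration_zeros_ghWronskian hu1 hn
  have hdist : ∀ i, 1 ≤ i → i ≤ (p ^ r) ^ s + (p ^ r) ^ (s + 1) →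
      ‖g (v i) - u1‖ = ‖v i - u1‖ := fun i hi₁ hi₂ =>
    hgdist (v i) (hv.mapsTo ⟨hi₁, hi₂⟩).1 (hv.mapsTo ⟨hi₁, hi₂⟩).2
  have hbij := hg.comp hv
  refine ⟨g ∘ v, (congrArg g hv1).trans hgu1, hbij.injOn, hbij.image_eq.symm,
    fun i j hj₁ hjs hi₁ hi₂ => ?_,
    fun i hi₁ hi₂ => (hdist i (by omega) hi₂).trans (hfar i hi₁ hi₂)⟩
  obtain ⟨j, rfl⟩ := Nat.exists_eq_add_of_le' hj₁
  have hjs' : (p ^ r) ^ (j + 1) ≤ (p ^ r) ^ s := Nat.pow_le_pow_right (by linarith [h.two_le]) hjs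
  exact (hdist i (by omega) (by omega)).trans (hnear j hjs i hi₁ hi₂)

theorem gross_hopkins_fiber_critical {p : ℕ} [Fact p.Prime] {C : Type*} [NormedField C] [IsUltrametricDist C]
    [CompleteSpace C] [IsAlgClosed C] [Algebra ℚ_[p] C]
    (hiso : ∀ x : ℚ_[p], ‖algebraMap ℚ_[p] C x‖ = ‖x‖)
    (K : IntermediateField ℚ_[p] C) (hKfin : FiniteDimensional ℚ_[p] K)
    (q : ℕ) (hq : ∃ r : ℕ, 0 < r ∧ q = p ^ r)
    (π : C) (hπK : π ∈ K) (hπ0 : 0 < ‖π‖) (hπ1 : ‖π‖ < 1)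
    (hπunif : ∀ x ∈ K, ‖x‖ < 1 → ‖x‖ ≤ ‖π‖)
    (hres : ∃ S : Finset C, S.card = q ∧ (∀ s ∈ S, s ∈ K ∧ ‖s‖ ≤ 1) ∧
      (∀ x ∈ K, ‖x‖ ≤ 1 → ∃ s ∈ S, ‖x - s‖ < 1) ∧
      (∀ s ∈ S, ∀ t ∈ S, s ≠ t → ‖s - t‖ = 1))
    (s : ℕ) (γ : ℝ) (hγ : γ = ‖π‖ ^ ((1:ℝ)/((q:ℝ)^s + (q:ℝ)^(s+1))))
    (u1 : C) (hu1 : ‖u1‖ = γ) :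
    ∃ v : ℕ → C, v 1 = u1 ∧ Set.InjOn v (Set.Icc 1 (q^s + q^(s+1))) ∧
      {u : C | ‖u‖ = γ ∧ ghphi0 π q u1 * ghphi1 π q u = ghphi1 π q u1 * ghphi0 π q u}
        = v '' (Set.Icc 1 (q^s + q^(s+1))) ∧
      (∀ i j : ℕ, 1 ≤ j → j ≤ s → q^(j-1) < i → i ≤ q^j →
        ‖v i - u1‖ = (‖π‖ * γ ^ (-(2:ℝ) * (q:ℝ)^(j-1))) ^
          ((1:ℝ)/((q:ℝ)^j - (q:ℝ)^(j-1)))) ∧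
      (∀ i : ℕ, q^s < i → i ≤ q^s + q^(s+1) → ‖v i - u1‖ = γ) := by
  exact gross_hopkins_fiber_critical_general q hq π hπ0 hπ1 (hπunif _ (natCast_mem K p) <| by
    simpa only [map_natCast] using (hiso p).trans_lt Padic.norm_p_lt_one) s γ hγ u1 hu1
end
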